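/- Let K ⊂ U be a full compact set which is completely invariant (g⁻¹(K) = K) and satisfies P_g ⊂ K. Then there exist topological disks V', V ⊂ U with V' = g⁻¹(V) and closure(V') ⊂ V such that g : V' → V is a proper holomorphic map of degree d, and K = {z : gⁿ(z) ∈ V' for all n = 0, 1, 2, ...}. In other words, g : U' → U admits a polynomial-like restriction g : V' → V of degree d, and K is its filled Julia set. -/

import Mathlib

open Set Function Metric Topology Filter

noncomputable section

/-- A topological disk: a (nonempty, connected) simply connected planar domain. -/
def IsTopDisk (V : Set ℂ) : Prop :=
  IsOpen V ∧ IsConnected V ∧ SimplyConnectedSpace V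

/-- Critical points of `g` lying in `U'`. -/
def critPts (g : ℂ → ℂ) (U' : Set ℂ) : Set ℂ := {z | z ∈ U' ∧ deriv g z = 0}

/-- The postcritical set of `g : U' → U`. -/
def postCrit (g : ℂ → ℂ) (U' : Set ℂ) : Set ℂ :=
  closure (⋃ n : ℕ, g^[n] '' critPts g U')

/-- `g : U' → U` is a proper map: preimages of compact subsets of `U` are compact. -/
def ProperOn (g : ℂ → ℂ) (U' U : Set ℂ) : Prop :=
  ∀ K : Set ℂ, K ⊆ U → IsCompact K → IsCompact (U' ∩ g ⁻¹' K)

/-- `g : U' → U` has degree `d`: every point of `U` has a preimage, and every point of `U`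
which is not a critical value has exactly `d` preimages in `U'`. -/
def HasDeg (g : ℂ → ℂ) (U' U : Set ℂ) (d : ℕ) : Prop :=
  (∀ w ∈ U, (U' ∩ g ⁻¹' {w}).Nonempty) ∧
  ∀ w ∈ U, w ∉ g '' critPts g U' → (U' ∩ g ⁻¹' {w}).ncard = d

/-- Standing assumptions: `U' ⊆ U` are simply connected domains in `ℂ` with `U' ≠ U`,
`g : U' → U` is a proper holomorphic map of degree `d ≥ 2`, all forward iterates of the
critical points are defined, the postcritical set is a compact subset of `U'`, and if the
postcritical set is a singleton `{c}` then `g⁻¹(c) ≠ {c}`. -/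
structure PLSetting (g : ℂ → ℂ) (U' U : Set ℂ) (d : ℕ) : Prop where
  disk' : IsTopDisk U'
  disk : IsTopDisk U
  subset : U' ⊆ U
  ne : U' ≠ U
  two_le_d : 2 ≤ d
  holo : DifferentiableOn ℂ g U'
  mapsTo : MapsTo g U' U
  proper : ProperOn g U' U
  deg : HasDeg g U' U d
  crit_orbit : ∀ c ∈ critPts g U', ∀ n : ℕ, g^[n] c ∈ U'
  postCrit_compact : IsCompact (postCrit g U')
  postCrit_subset : postCrit g U' ⊆ U'
  postCrit_singleton : ∀ c : ℂ, postCrit g U' = {c} → U' ∩ g ⁻¹' {c} ≠ {c}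

/-- `g : V' → V` is a polynomial-like map of degree `d`. -/
def IsPolyLike (g : ℂ → ℂ) (V' V : Set ℂ) (d : ℕ) : Prop :=
  IsTopDisk V' ∧ IsTopDisk V ∧ closure V' ⊆ V ∧ DifferentiableOn ℂ g V' ∧
    MapsTo g V' V ∧ ProperOn g V' V ∧ HasDeg g V' V d

/-- The filled Julia set: points whose entire forward orbit stays in `V'`. -/
def filledJulia (g : ℂ → ℂ) (V' : Set ℂ) : Set ℂ := {z | ∀ n : ℕ, g^[n] z ∈ V'}


section PAsec

def LocRe (f : ℂ → ℝ) (c : ℂ) : Prop :=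
  ∃ Q : ℂ → ℂ, AnalyticAt ℂ Q c ∧ ∀ᶠ z in 𝓝 c, f z = (Q z).re

def SMax (f : ℂ → ℝ) (c : ℂ) : Prop :=
  ∀ P : ℂ → ℂ, AnalyticAt ℂ P c → IsLocalMax (fun z => f z - (P z).re) c →
    ∀ᶠ z in 𝓝 c, f z - (P z).re = f c - (P c).re

namespace LocRe

theorem congr {f f' : ℂ → ℝ} {c : ℂ} (h : LocRe f c) (he : ∀ᶠ z in 𝓝 c, f' z = f z) :
    LocRe f' c := by
  obtain ⟨Q, hQ, hf⟩ := h
  exact ⟨Q, hQ, by filter_upwards [hf, he] with z h1 h2; rw [h2, h1]⟩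

theorem const (a : ℝ) (c : ℂ) : LocRe (fun _ => a) c :=
  ⟨fun _ => (a : ℂ), analyticAt_const, by simp⟩

theorem re {Q : ℂ → ℂ} {c : ℂ} (hQ : AnalyticAt ℂ Q c) : LocRe (fun z => (Q z).re) c :=
  ⟨Q, hQ, by simp⟩

theorem add {f g : ℂ → ℝ} {c : ℂ} (hf : LocRe f c) (hg : LocRe g c) :
    LocRe (fun z => f z + g z) c := by
  obtain ⟨Q, hQ, h1⟩ := hf
  obtain ⟨R, hR, h2⟩ := hg
  exact ⟨fun z => Q z + R z, hQ.add hR, by filter_upwards [h1, h2] with z h1 h2; simp [h1, h2]⟩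

theorem const_mul {f : ℂ → ℝ} {c : ℂ} (a : ℝ) (hf : LocRe f c) :
    LocRe (fun z => a * f z) c := by
  obtain ⟨Q, hQ, h1⟩ := hf
  exact ⟨fun z => (a : ℂ) * Q z, analyticAt_const.mul hQ, by
    filter_upwards [h1] with z h1; simp [h1]⟩

theorem neg {f : ℂ → ℝ} {c : ℂ} (hf : LocRe f c) : LocRe (fun z => - f z) c := by
  simpa using hf.const_mul (-1)

theorem sub {f g : ℂ → ℝ} {c : ℂ} (hf : LocRe f c) (hg : LocRe g c) :
    LocRe (fun z => f z - g z) c := by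
  simpa [sub_eq_add_neg] using hf.add hg.neg

theorem comp {f : ℂ → ℝ} {g : ℂ → ℂ} {c : ℂ} (hf : LocRe f (g c)) (hg : AnalyticAt ℂ g c) :
    LocRe (fun z => f (g z)) c := by
  obtain ⟨Q, hQ, h1⟩ := hf
  exact ⟨fun z => Q (g z), hQ.comp hg, hg.continuousAt.eventually h1⟩

theorem continuousAt {f : ℂ → ℝ} {c : ℂ} (hf : LocRe f c) : ContinuousAt f c := by
  obtain ⟨Q, hQ, h1⟩ := hf
  exact (Complex.continuous_re.continuousAt.comp hQ.continuousAt).congr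
    (by filter_upwards [h1] with z h; simp [h])

theorem log_norm_id {c : ℂ} (hc : c ≠ 0) : LocRe (fun z => Real.log ‖z‖) c := by
  refine ⟨fun z => Complex.log (z / c) + (Real.log ‖c‖ : ℂ), ?_, ?_⟩
  · refine AnalyticAt.add (AnalyticAt.clog (analyticAt_id.div analyticAt_const hc) ?_)
      analyticAt_const
    simp [hc]
  · filter_upwards [isOpen_ne.mem_nhds hc] with z hz
    simp only [Complex.add_re, Complex.log_re, norm_div, Complex.ofReal_re]
    rw [Real.log_div (by simpa using hz) (by simpa using hc)]
    ring

theorem log_norm {g : ℂ → ℂ} {c : ℂ} (hg : AnalyticAt ℂ g c) (h0 : g c ≠ 0) :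
    LocRe (fun z => Real.log ‖g z‖) c :=
  (log_norm_id h0).comp hg

theorem sMax {f : ℂ → ℝ} {c : ℂ} (hf : LocRe f c) : SMax f c := by
  obtain ⟨Q, hQ, h1⟩ := hf
  intro P hP hmax
  have hfc := h1.self_of_nhds
  rcases (hQ.sub hP).eventually_constant_or_nhds_le_map_nhds with h | h
  · filter_upwards [h, h1] with z h2 h3
    have := congrArg Complex.re h2
    simp only [Pi.sub_apply, Complex.sub_re] at this
    rw [h3, hfc]; exact this
  · exfalso
    have hev : ∀ᶠ z in 𝓝 c, (Q z - P z).re ≤ (Q c - P c).re := by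
      filter_upwards [hmax, h1] with z h2 h3
      simp only [Complex.sub_re]; rw [← h3, ← hfc]; exact h2
    have h2 : ∀ᶠ w in 𝓝 ((Q - P) c), w.re ≤ (Q c - P c).re := h hev
    obtain ⟨ε, hε, hb⟩ := Metric.eventually_nhds_iff.1 h2
    have := @hb ((Q - P) c + (ε / 2 : ℝ)) (by
      simp [dist_eq_norm, abs_of_pos hε, hε])
    simp at this
    linarith

end LocRe

namespace SMax

theorem of_le {f h : ℂ → ℝ} {c : ℂ} (hh : SMax h c) (hle : ∀ᶠ z in 𝓝 c, h z ≤ f z)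
    (heq : h c = f c) : SMax f c := by
  intro P hP hmax
  have h1 := hh P hP (by
    filter_upwards [hle, hmax] with z h1 h2
    rw [heq]; linarith)
  filter_upwards [hle, hmax, h1] with z h1 h2 h3
  rw [heq] at h3
  exact le_antisymm h2 (by linarith)

theorem congr {f h : ℂ → ℝ} {c : ℂ} (hh : SMax h c) (he : ∀ᶠ z in 𝓝 c, f z = h z) :
    SMax f c :=
  hh.of_le (he.mono fun _ h => h.ge) he.self_of_nhds.symm

theorem max {f h : ℂ → ℝ} {c : ℂ} (hf : SMax f c) (hh : SMax h c) :
    SMax (fun z => max (f z) (h z)) c := by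
  rcases le_total (f c) (h c) with h1 | h1
  · exact hh.of_le (.of_forall fun z => le_max_right _ _) (by simp [h1])
  · exact hf.of_le (.of_forall fun z => le_max_left _ _) (by simp [h1])

theorem sub {f h : ℂ → ℝ} {c : ℂ} (hf : SMax f c) (hh : LocRe h c) :
    SMax (fun z => f z - h z) c := by
  obtain ⟨Q, hQ, h1⟩ := hh
  have h1c := h1.self_of_nhds
  intro P hP hmax
  have := hf (fun z => Q z + P z) (hQ.add hP) (by
    filter_upwards [hmax, h1] with z h2 h3
    simp only [Complex.add_re]; linarith)
  filter_upwards [this, h1] with z h2 h3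
  simp only [Complex.add_re] at h2
  linarith

theorem add {f h : ℂ → ℝ} {c : ℂ} (hf : SMax f c) (hh : LocRe h c) :
    SMax (fun z => f z + h z) c := by
  simpa using hf.sub hh.neg

theorem const_mul {f : ℂ → ℝ} {c : ℂ} {a : ℝ} (ha : 0 < a) (hf : SMax f c) :
    SMax (fun z => a * f z) c := by
  intro P hP hmax
  have key : ∀ z, f z - (((a⁻¹ : ℝ) : ℂ) * P z).re = a⁻¹ * (a * f z - (P z).re) := by
    intro z
    rw [Complex.re_ofReal_mul]
    field_simp
  have := hf (fun z => ((a⁻¹ : ℝ) : ℂ) * P z) (analyticAt_const.mul hP) (by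
    filter_upwards [hmax] with z h2
    rw [key, key]
    exact mul_le_mul_of_nonneg_left h2 (by positivity))
  filter_upwards [this] with z h2
  rw [key, key] at h2
  exact mul_left_cancel₀ (by positivity) h2

theorem comp {f : ℂ → ℝ} {g : ℂ → ℂ} {c : ℂ} (hf : SMax f (g c)) (hg : AnalyticAt ℂ g c)
    (hd : deriv g c ≠ 0) : SMax (fun z => f (g z)) c := by
  intro P hP hmax
  have hs : HasStrictDerivAt g (deriv g c) c := hg.hasStrictDerivAt
  set k := hs.localInverse g _ c hd with hk
  have hkc : k (g c) = c := HasStrictFDerivAt.localInverse_apply_image _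
  have hka : AnalyticAt ℂ k (g c) := hg.analyticAt_localInverse hd
  have hr : ∀ᶠ w in 𝓝 (g c), g (k w) = w := HasStrictFDerivAt.eventually_right_inverse _
  have hl : ∀ᶠ z in 𝓝 c, k (g z) = z := HasStrictFDerivAt.eventually_left_inverse _
  have hPk : AnalyticAt ℂ (fun w => P (k w)) (g c) := by
    apply AnalyticAt.comp (g := P) _ hka
    rw [hkc]; exact hP
  have hkt : Tendsto k (𝓝 (g c)) (𝓝 c) := by
    have := hka.continuousAt.tendsto
    rwa [hkc] at this
  have := hf _ hPk (by
    filter_upwards [hkt.eventually hmax, hr] with w h1 h2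
    rw [h2] at h1
    simpa [hkc] using h1)
  filter_upwards [hg.continuousAt.eventually this, hl] with z h1 h2
  simpa [h2, hkc] using h1

end SMax

end PAsec

section PA2sec

theorem maxPrinciple {O : Set ℂ} (hO : IsOpen O) (hb : Bornology.IsBounded O) {f : ℂ → ℝ} {M : ℝ}
    (hf : ContinuousOn f O) (hs : ∀ z ∈ O, SMax f z)
    (hbd : ∀ b ∈ frontier O, ∀ ε > 0, ∀ᶠ z in 𝓝[O] b, f z ≤ M + ε) :
    ∀ z ∈ O, f z ≤ M := by
  intro z0 hz0
  by_contra! hlt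
  set ε := (f z0 - M) / 2 with hε
  have hεpos : 0 < ε := by rw [hε]; linarith
  set C : Set ℂ := {z | z ∈ O ∧ f z0 ≤ f z} with hC
  have hCcl : IsClosed C := by
    rw [← isSeqClosed_iff_isClosed]
    intro u x hu hx
    have hxc : x ∈ closure O := mem_closure_of_tendsto hx (.of_forall fun n => (hu n).1)
    by_cases hxO : x ∈ O
    · refine ⟨hxO, ?_⟩
      have := ((hf x hxO).tendsto.comp (tendsto_nhdsWithin_iff.2 ⟨hx, .of_forall fun n => (hu n).1⟩))
      exact ge_of_tendsto this (.of_forall fun n => (hu n).2)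
    · exfalso
      have hfr : x ∈ frontier O := ⟨hxc, by rwa [hO.interior_eq]⟩
      have h1 := hbd x hfr ε hεpos
      have h2 := (tendsto_nhdsWithin_iff.2 ⟨hx, Eventually.of_forall fun n => (hu n).1⟩).eventually h1
      obtain ⟨n, hn⟩ := h2.exists
      have := (hu n).2
      rw [hε] at hn
      linarith
  have hCcomp : IsCompact C := Metric.isCompact_of_isClosed_isBounded hCcl (hb.subset fun z hz => hz.1)
  obtain ⟨z1, hz1, hmax⟩ := hCcomp.exists_isMaxOn ⟨z0, hz0, le_rfl⟩ (hf.mono fun z hz => hz.1)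
  have hall : ∀ z ∈ O, f z ≤ f z1 := by
    intro z hz
    by_cases h : f z0 ≤ f z
    · exact hmax ⟨hz, h⟩
    · exact (not_le.1 h).le.trans (hmax (show z0 ∈ C from ⟨hz0, le_rfl⟩))
  set A : Set ℂ := {z | z ∈ O ∧ f z = f z1} with hA
  have hAC : A = C ∩ {z | z ∈ O ∧ f z1 ≤ f z} := by
    ext z
    simp only [hA, hC, mem_inter_iff, mem_ofPred_eq]
    constructor
    · rintro ⟨h1, h2⟩
      exact ⟨⟨h1, by rw [h2]; exact hz1.2⟩, h1, h2.ge⟩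
    · rintro ⟨_, h1, h2⟩
      exact ⟨h1, le_antisymm (hall z h1) h2⟩
  have hAop : IsOpen A := by
    rw [isOpen_iff_mem_nhds]
    rintro z ⟨hz, hzm⟩
    have := hs z hz (fun _ => 0) analyticAt_const (by
      filter_upwards [hO.mem_nhds hz] with w hw
      simpa [hzm] using hall w hw)
    filter_upwards [this, hO.mem_nhds hz] with w h1 h2
    exact ⟨h2, by simpa [hzm] using h1⟩
  have hAcl : IsClosed A := by
    rw [← isSeqClosed_iff_isClosed]
    intro u x hu hx
    have hxC : x ∈ C := hCcl.isSeqClosed (fun n => by rw [hAC] at hu; exact (hu n).1) hx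
    refine ⟨hxC.1, ?_⟩
    have := ((hf x hxC.1).tendsto.comp
      (tendsto_nhdsWithin_iff.2 ⟨hx, .of_forall fun n => (hu n).1⟩))
    refine tendsto_nhds_unique this ?_
    refine tendsto_const_nhds.congr fun n => ?_
    exact (hu n).2.symm
  have hAu : A = univ := (IsClopen.eq_univ ⟨hAcl, hAop⟩ ⟨z1, hz1.1, rfl⟩)
  have hbdA : Bornology.IsBounded (univ : Set ℂ) := by
    rw [← hAu]; exact hb.subset fun z hz => hz.1
  exact NormedSpace.unbounded_univ ℂ ℂ hbdA

/-- closed-ball version -/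
theorem maxPrinciple_ball {c : ℂ} {R M : ℝ} {f : ℂ → ℝ}
    (hf : ContinuousOn f (closedBall c R)) (hs : ∀ z ∈ ball c R, SMax f z)
    (hbd : ∀ z ∈ sphere c R, f z ≤ M) : ∀ z ∈ ball c R, f z ≤ M := by
  refine maxPrinciple isOpen_ball isBounded_ball (hf.mono ball_subset_closedBall) hs ?_
  intro b hb ε hε
  have hbs : b ∈ sphere c R := frontier_ball_subset_sphere hb
  have h1 : Tendsto f (𝓝[ball c R] b) (𝓝 (f b)) :=
    (hf b (sphere_subset_closedBall hbs)).mono_left (nhdsWithin_mono _ ball_subset_closedBall)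
  filter_upwards [h1.eventually_lt_const (show f b < M + ε by linarith [hbd b hbs])] with z hz
  exact hz.le

theorem borelCar_center {c : ℂ} {R M : ℝ} {f : ℂ → ℂ} (hM : 0 < M) (hR : 0 < R)
    (hf : DifferentiableOn ℂ f (ball c R)) (h1 : ∀ z ∈ ball c R, (f z).re ≤ M) (h0 : f c = 0)
    {z : ℂ} (hz : z ∈ ball c (R / 2)) : ‖f z‖ ≤ 2 * M := by
  have hz' : ‖z - c‖ < R / 2 := by simpa [dist_eq_norm] using hz
  have := Complex.borelCaratheodory_zero (f := fun w => f (w + c)) (R := R) (z := z - c) hM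
    (hf.comp (by fun_prop) (fun w hw => by simpa using hw))
    (fun w hw => h1 _ (by simpa using hw)) hR (by simp; linarith) (by simpa using h0)
  simp only [sub_add_cancel] at this
  refine this.trans ?_
  rw [div_le_iff₀ (by linarith)]
  nlinarith

theorem ultra_montel {ι : Type*} (l : Ultrafilter ι) {O : Set ℂ} (hO : IsOpen O)
    {F : ι → ℂ → ℂ} (hF : ∀ i, DifferentiableOn ℂ (F i) O)
    (hb : ∀ z ∈ O, ∃ r > 0, ∃ M : ℝ, ∀ i, ∀ w ∈ ball z r, w ∈ O → ‖F i w‖ ≤ M) :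
    ∃ G : ℂ → ℂ, DifferentiableOn ℂ G O ∧ TendstoLocallyUniformlyOn F G l O := by
  have hpt : ∀ z : ℂ, ∃ w : ℂ, z ∈ O → Tendsto (fun i => F i z) l (𝓝 w) := by
    intro z
    by_cases hz : z ∈ O
    · obtain ⟨r, hr, M, hM⟩ := hb z hz
      have hc : IsCompact (closedBall (0 : ℂ) M) := isCompact_closedBall _ _
      have hle : ((l.map fun i => F i z : Ultrafilter ℂ) : Filter ℂ) ≤ 𝓟 (closedBall 0 M) := by
        rw [le_principal_iff]
        rw [Ultrafilter.coe_map, mem_map]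
        exact Filter.univ_mem' fun i => by simpa using hM i z (mem_ball_self hr) hz
      obtain ⟨w, _, hw⟩ := hc.ultrafilter_le_nhds _ hle
      exact ⟨w, fun _ => hw⟩
    · exact ⟨0, fun h => absurd h hz⟩
  choose G hG using hpt
  have key : TendstoLocallyUniformlyOn F G l O := by
    rw [tendstoLocallyUniformlyOn_iff_forall_isCompact hO]
    intro C hCO hC
    have heq : ∀ K ∈ ({C} : Set (Set ℂ)), EquicontinuousOn F K := by
      rintro K rfl z hz
      have hzO := hCO hz
      obtain ⟨r, hr, M, hM⟩ := hb z hzO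
      obtain ⟨r', hr', hsub⟩ := Metric.isOpen_iff.1 hO z hzO
      set ρ := min r r' with hρ
      have hρ0 : 0 < ρ := lt_min hr hr'
      have hM0 : 0 ≤ |M| := abs_nonneg M
      have hlip : ∀ i, ∀ w ∈ ball z ρ, dist (F i z) (F i w) ≤ (2 * |M| + 1) / ρ * dist w z := by
        intro i w hw
        have hd : DifferentiableOn ℂ (F i) (ball z ρ) :=
          (hF i).mono ((ball_subset_ball (min_le_right _ _)).trans hsub)
        have hmap : MapsTo (F i) (ball z ρ) (ball (F i z) (2 * |M| + 1)) := by
          intro u hu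
          have h1 := hM i u (ball_subset_ball (min_le_left _ _) hu)
            (hsub (ball_subset_ball (min_le_right _ _) hu))
          have h2 := hM i z (mem_ball_self hr) hzO
          rw [mem_ball, dist_eq_norm]
          have := norm_sub_le (F i u) (F i z)
          have := le_abs_self M
          linarith
        rw [dist_comm]
        exact Complex.dist_le_div_mul_dist_of_mapsTo_ball hd (hmap.mono_right ball_subset_closedBall) hw
      refine EquicontinuousAt.equicontinuousWithinAt ?_ _
      rw [Metric.equicontinuousAt_iff]
      intro ε hε
      have hL : 0 < (2 * |M| + 1) / ρ := by positivity
      refine ⟨min ρ (ε / ((2 * |M| + 1) / ρ)), lt_min hρ0 (by positivity), fun w hw i => ?_⟩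
      have h1 : dist w z < ρ := lt_of_lt_of_le hw (min_le_left _ _)
      have h2 : dist w z < ε / ((2 * |M| + 1) / ρ) := lt_of_lt_of_le hw (min_le_right _ _)
      refine (hlip i w h1).trans_lt ?_
      rw [lt_div_iff₀ hL] at h2
      linarith
    have := (EquicontinuousOn.tendsto_uniformOnFun_iff_pi' (F := F) (𝔖 := {C})
      (by rintro K rfl; exact hC) heq (l : Filter ι) G).2 (by
        rw [tendsto_pi_nhds]
        rintro ⟨x, hx⟩
        exact hG x (hCO (by simpa using hx)))
    rw [UniformOnFun.tendsto_iff_tendstoUniformlyOn] at this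
    exact this C rfl
  exact ⟨G, key.differentiableOn (.of_forall hF) hO, key⟩

theorem trig_approx {c : ℂ} {r : ℝ} (hr : 0 < r) {h : ℂ → ℝ} (hh : ContinuousOn h (sphere c r))
    {δ : ℝ} (hδ : 0 < δ) :
    ∃ P : ℂ → ℂ, Differentiable ℂ P ∧ ∀ z ∈ sphere c r, |h z - (P z).re| ≤ δ := by
  have : Fact (0 < (1 : ℝ)) := ⟨one_pos⟩
  have hmem : ∀ t : AddCircle (1 : ℝ), c + r * (AddCircle.toCircle t : ℂ) ∈ sphere c r := by
    intro t
    have := Circle.norm_coe (AddCircle.toCircle t)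
    simp only [mem_sphere, dist_eq_norm, add_sub_cancel_left, norm_mul, this]
    simp [abs_of_pos hr]
  let H : C(AddCircle (1 : ℝ), ℂ) :=
    ⟨fun t => (h (c + r * (AddCircle.toCircle t : ℂ)) : ℂ), by
      refine Complex.continuous_ofReal.comp ?_
      refine hh.comp_continuous ?_ hmem
      have := AddCircle.continuous_toCircle (T := (1 : ℝ))
      fun_prop⟩
  have hH : H ∈ (Submodule.span ℂ (range <| @fourier 1)).topologicalClosure := by
    rw [span_fourier_closure_eq_top]; trivial
  have hH2 : H ∈ closure ((Submodule.span ℂ (range <| @fourier 1) : Submodule ℂ _) : Set C(AddCircle (1 : ℝ), ℂ)) := hH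
  obtain ⟨ϕ, hϕ, hd⟩ := Metric.mem_closure_iff.1 hH2 δ hδ
  have key : ∀ ϕ ∈ (Submodule.span ℂ (range <| @fourier 1)), ∀ a : ℂ, ∃ P : ℂ → ℂ, Differentiable ℂ P ∧
      ∀ t : AddCircle (1 : ℝ), (P (c + r * (AddCircle.toCircle t : ℂ))).re = (a * ϕ t).re := by
    intro ϕ hϕ
    induction hϕ using Submodule.span_induction with
    | mem x hx =>
      obtain ⟨n, rfl⟩ := hx
      intro a
      obtain ⟨m, rfl | rfl⟩ := n.eq_nat_or_neg
      · refine ⟨fun z => a * ((z - c) / r) ^ m, by fun_prop, fun t => ?_⟩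
        congr 1
        have hr' : (r : ℂ) ≠ 0 := by exact_mod_cast hr.ne'
        have h5 : (AddCircle.toCircle (m • t) : ℂ) = (AddCircle.toCircle t : ℂ) ^ m := by
          rw [AddCircle.toCircle_nsmul]; simp
        simp [hr', h5]
      · refine ⟨fun z => (starRingEnd ℂ a) * ((z - c) / r) ^ m, by fun_prop, fun t => ?_⟩
        have hr' : (r : ℂ) ≠ 0 := by exact_mod_cast hr.ne'
        rw [← Complex.conj_re]
        congr 1
        have h5 : (AddCircle.toCircle (m • t) : ℂ) = (AddCircle.toCircle t : ℂ) ^ m := by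
          rw [AddCircle.toCircle_nsmul]; simp
        have h6 : (AddCircle.toCircle (-(m • t)) : ℂ)
            = (starRingEnd ℂ) (AddCircle.toCircle t : ℂ) ^ m := by
          rw [AddCircle.toCircle_neg, Circle.coe_inv_eq_conj, h5, map_pow]
        simp [hr', h6]
    | zero => exact fun a => ⟨0, by simp, by simp⟩
    | add x y hx hy ihx ihy =>
      intro a
      obtain ⟨P, hP, h1⟩ := ihx a
      obtain ⟨Q, hQ, h2⟩ := ihy a
      exact ⟨fun z => P z + Q z, hP.add hQ, fun t => by simp [h1, h2, mul_add]⟩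
    | smul b x hx ih =>
      intro a
      obtain ⟨P, hP, h1⟩ := ih (a * b)
      exact ⟨P, hP, fun t => by rw [h1]; simp [mul_assoc]⟩
  obtain ⟨P, hP, h1⟩ := key ϕ hϕ 1
  refine ⟨P, hP, fun z hz => ?_⟩
  have hu : ‖(z - c) / r‖ = 1 := by
    rw [norm_div, ← dist_eq_norm, mem_sphere.1 hz]; simp [abs_of_pos hr, hr.ne']
  obtain ⟨t, ht⟩ := (AddCircle.homeomorphCircle one_ne_zero : AddCircle (1 : ℝ) ≃ₜ Circle).surjective
    ⟨(z - c) / r, by simpa [Submonoid.unitSphere] using hu⟩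
  have ht' : (AddCircle.toCircle t : ℂ) = (z - c) / r := by
    rw [AddCircle.homeomorphCircle_apply] at ht
    rw [ht]
  have hz' : c + r * (AddCircle.toCircle t : ℂ) = z := by
    have hr' : (r : ℂ) ≠ 0 := by exact_mod_cast hr.ne'
    rw [ht']; field_simp; ring
  have h2 := h1 t
  rw [hz', one_mul] at h2
  rw [h2]
  have h3 : ‖H t - ϕ t‖ ≤ δ := by
    rw [← dist_eq_norm]
    exact (ContinuousMap.dist_apply_le_dist t).trans hd.le
  have h4 : (H t - ϕ t).re = h z - (ϕ t).re := by
    simp [H, hz']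
  rw [← h4]
  exact (Complex.abs_re_le_norm _).trans h3

end PA2sec

section PCsec

structure SClass (K : Set ℂ) (h : ℂ → ℝ) : Prop where
  cont : ContinuousOn h (ball 0 1 \ K)
  smax : ∀ z ∈ ball (0 : ℂ) 1 \ K, SMax h z
  nonneg : ∀ z ∈ ball (0 : ℂ) 1 \ K, 0 ≤ h z
  le_one : ∀ z ∈ ball (0 : ℂ) 1 \ K, h z ≤ 1
  bdry : ∀ δ > 0, ∃ r < (1 : ℝ), ∀ z ∈ ball (0 : ℂ) 1 \ K, r < ‖z‖ → h z ≤ δ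

def perron (K : Set ℂ) (z : ℂ) : ℝ := sSup {x | ∃ h, SClass K h ∧ x = h z}

theorem SClass.zero (K : Set ℂ) : SClass K (fun _ => 0) where
  cont := continuousOn_const
  smax := fun z _ => (LocRe.const 0 z).sMax
  nonneg := by simp
  le_one := by simp
  bdry := fun δ hδ => ⟨0, by norm_num, fun _ _ _ => hδ.le⟩

theorem SClass.max {K : Set ℂ} {h1 h2 : ℂ → ℝ} (H1 : SClass K h1) (H2 : SClass K h2) :
    SClass K (fun z => max (h1 z) (h2 z)) where
  cont := H1.cont.sup H2.cont
  smax := fun z hz => (H1.smax z hz).max (H2.smax z hz)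
  nonneg := fun z hz => (H1.nonneg z hz).trans (le_max_left _ _)
  le_one := fun z hz => max_le (H1.le_one z hz) (H2.le_one z hz)
  bdry := by
    intro δ hδ
    obtain ⟨r1, hr1, h1⟩ := H1.bdry δ hδ
    obtain ⟨r2, hr2, h2⟩ := H2.bdry δ hδ
    refine ⟨Max.max r1 r2, max_lt hr1 hr2, fun z hz hlt => max_le ?_ ?_⟩
    · exact h1 z hz (lt_of_le_of_lt (le_max_left _ _) hlt)
    · exact h2 z hz (lt_of_le_of_lt (le_max_right _ _) hlt)

open Classical in
theorem SClass.glue {K : Set ℂ} {h : ℂ → ℝ} (H : SClass K h) {O : Set ℂ}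
    (hO : IsOpen O) {r0 : ℝ} (hr0 : r0 < 1) (hOr : ∀ z ∈ O, ‖z‖ ≤ r0) {q : ℂ → ℝ}
    (hqc : ContinuousOn q (closure O \ K))
    (hqs : ∀ z ∈ O \ K, SMax q z) (hq1 : ∀ z ∈ O \ K, q z ≤ 1)
    (hqh : ∀ z ∈ frontier O \ K, q z ≤ h z) :
    SClass K (fun z => if z ∈ O then Max.max (h z) (q z) else h z) := by
  have hOb : ∀ z ∈ O, z ∈ ball (0 : ℂ) 1 := fun z hz => by
    simpa using (hOr z hz).trans_lt hr0
  refine ⟨?_, ?_, ?_, ?_, ?_⟩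
  · refine ContinuousOn.if ?_ ?_ ?_
    · rintro a ⟨ha, haf⟩
      exact max_eq_left (hqh a ⟨haf, ha.2⟩)
    · refine ContinuousOn.sup (H.cont.mono inter_subset_left) (hqc.mono ?_)
      rintro z ⟨h1, h2⟩
      exact ⟨h2, h1.2⟩
    · exact H.cont.mono inter_subset_left
  · intro z hz
    by_cases hzO : z ∈ O
    · refine ((H.smax z hz).max (hqs z ⟨hzO, hz.2⟩)).congr ?_
      filter_upwards [hO.mem_nhds hzO] with w hw
      simp [hw]
    · refine (H.smax z hz).of_le (.of_forall fun w => ?_) (by simp [hzO])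
      by_cases hw : w ∈ O <;> simp [hw]
  · intro z hz
    by_cases hw : z ∈ O
    · simp only [hw, if_true]; exact (H.nonneg z hz).trans (le_max_left _ _)
    · simp only [hw, if_false]; exact H.nonneg z hz
  · intro z hz
    by_cases hw : z ∈ O
    · simp only [hw, if_true]; exact max_le (H.le_one z hz) (hq1 z ⟨hw, hz.2⟩)
    · simp only [hw, if_false]; exact H.le_one z hz
  · intro δ hδ
    obtain ⟨r1, hr1, h1⟩ := H.bdry δ hδ
    refine ⟨Max.max r1 r0, max_lt hr1 hr0, fun z hz hlt => ?_⟩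
    have hw : z ∉ O := fun hw => absurd ((le_max_right r1 r0).trans_lt hlt) (not_lt.2 (hOr z hw))
    simp only [hw, if_false]
    exact h1 z hz ((le_max_left _ _).trans_lt hlt)

section
variable {K : Set ℂ}

theorem perron_bddAbove {z : ℂ} (hz : z ∈ ball (0 : ℂ) 1 \ K) :
    BddAbove {x | ∃ h, SClass K h ∧ x = h z} :=
  ⟨1, by rintro x ⟨h, H, rfl⟩; exact H.le_one z hz⟩

theorem SClass.le_perron {h : ℂ → ℝ} (H : SClass K h) {z : ℂ} (hz : z ∈ ball (0 : ℂ) 1 \ K) :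
    h z ≤ perron K z := le_csSup (perron_bddAbove hz) ⟨h, H, rfl⟩

theorem perron_le {z : ℂ} {b : ℝ} (hb : ∀ h, SClass K h → h z ≤ b) : perron K z ≤ b :=
  csSup_le ⟨_, _, SClass.zero K, rfl⟩ (by rintro x ⟨h, H, rfl⟩; exact hb h H)

theorem perron_nonneg {z : ℂ} (hz : z ∈ ball (0 : ℂ) 1 \ K) : 0 ≤ perron K z :=
  (SClass.zero K).le_perron hz

theorem perron_le_one {z : ℂ} (hz : z ∈ ball (0 : ℂ) 1 \ K) : perron K z ≤ 1 :=
  perron_le fun _ H => H.le_one z hz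

theorem exists_near_perron (z : ℂ) {δ : ℝ} (hδ : 0 < δ) :
    ∃ h, SClass K h ∧ perron K z - δ ≤ h z := by
  obtain ⟨x, ⟨h, H, rfl⟩, hx⟩ := exists_lt_of_lt_csSup (b := perron K z - δ)
    (s := {x | ∃ h, SClass K h ∧ x = h z}) ⟨_, _, SClass.zero K, rfl⟩ (show perron K z - δ < perron K z by linarith)
  exact ⟨h, H, hx.le⟩

def annulus (ρ : ℝ) : Set ℂ := {z | ρ < ‖z‖ ∧ ‖z‖ < 1}

theorem isOpen_annulus (ρ : ℝ) : IsOpen (annulus ρ) :=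
  (isOpen_lt continuous_const continuous_norm).inter (isOpen_lt continuous_norm continuous_const)

theorem isBounded_annulus (ρ : ℝ) : Bornology.IsBounded (annulus ρ) :=
  (isBounded_ball (x := (0 : ℂ)) (r := 1)).subset fun z hz => by simpa using hz.2

theorem frontier_annulus {ρ : ℝ} {b : ℂ} (hb : b ∈ frontier (annulus ρ)) :
    ‖b‖ = ρ ∨ ‖b‖ = 1 := by
  have h1 : b ∈ {z : ℂ | ρ ≤ ‖z‖ ∧ ‖z‖ ≤ 1} := by
    have hcl : IsClosed {z : ℂ | ρ ≤ ‖z‖ ∧ ‖z‖ ≤ 1} :=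
      (isClosed_le continuous_const continuous_norm).inter
        (isClosed_le continuous_norm continuous_const)
    have hsub : annulus ρ ⊆ {z : ℂ | ρ ≤ ‖z‖ ∧ ‖z‖ ≤ 1} := fun z hz => ⟨hz.1.le, hz.2.le⟩
    exact closure_minimal hsub hcl hb.1
  have h2 : b ∉ annulus ρ := by
    have := hb.2
    rwa [(isOpen_annulus ρ).interior_eq] at this
  by_contra! h
  exact h2 ⟨lt_of_le_of_ne h1.1 (Ne.symm h.1), lt_of_le_of_ne h1.2 h.2⟩

theorem perron_le_log {ρ : ℝ} (hρ0 : 0 < ρ) (hρ1 : ρ < 1) (hKρ : K ⊆ ball 0 ρ) {z : ℂ}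
    (hz : z ∈ annulus ρ) : perron K z ≤ Real.log ‖z‖ / Real.log ρ := by
  have hΩ : ∀ z : ℂ, ρ ≤ ‖z‖ → ‖z‖ < 1 → z ∈ ball (0 : ℂ) 1 \ K := by
    intro z h1 h2
    exact ⟨by simpa using h2, fun h => by have := hKρ h; simp at this; linarith⟩
  have hlρ : Real.log ρ < 0 := Real.log_neg hρ0 hρ1
  refine perron_le fun h H => ?_
  have hre : ∀ z : ℂ, z ≠ 0 → LocRe (fun z => Real.log ‖z‖ / Real.log ρ) z := by
    intro z hz
    refine ((LocRe.log_norm_id hz).const_mul (Real.log ρ)⁻¹).congr (.of_forall fun w => ?_)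
    rw [div_eq_inv_mul]
  have hne : ∀ z ∈ annulus ρ, z ≠ 0 := by
    rintro z hz rfl
    have := hz.1; simp at this; linarith
  have := maxPrinciple (M := 0) (f := fun z => h z - Real.log ‖z‖ / Real.log ρ) (isOpen_annulus ρ)
    (isBounded_annulus ρ) ?_ ?_ ?_ z hz
  · simpa using this
  · refine ContinuousOn.sub (H.cont.mono fun z hz => hΩ z hz.1.le hz.2) ?_
    exact fun z hz => (hre z (hne z hz)).continuousAt.continuousWithinAt
  · exact fun z hz => (H.smax z (hΩ z hz.1.le hz.2)).sub (hre z (hne z hz))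
  · intro b hb ε hε
    rcases frontier_annulus hb with h1 | h1
    · have hb0 : b ≠ 0 := by rintro rfl; simp at h1; linarith
      have h2 := (hre b hb0).continuousAt.tendsto
      simp only [h1, div_self hlρ.ne] at h2
      have h3 := h2.eventually_const_lt (show 1 - ε < 1 by linarith)
      filter_upwards [mem_nhdsWithin_of_mem_nhds h3, self_mem_nhdsWithin] with w hw hw2
      have := H.le_one w (hΩ w hw2.1.le hw2.2)
      linarith
    · obtain ⟨r, hr, h2⟩ := H.bdry ε hε
      have h3 : ∀ᶠ w in 𝓝 b, r < ‖w‖ :=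
        continuous_norm.continuousAt.eventually_const_lt (by simpa [h1] using hr)
      filter_upwards [mem_nhdsWithin_of_mem_nhds h3, self_mem_nhdsWithin] with w hw hw2
      have h4 := h2 w (hΩ w hw2.1.le hw2.2) hw
      have h5 : 0 ≤ Real.log ‖w‖ / Real.log ρ :=
        div_nonneg_of_nonpos (Real.log_nonpos (norm_nonneg _) hw2.2.le) hlρ.le
      linarith

theorem exists_radius (hK : IsCompact K) (hK1 : K ⊆ ball 0 1) :
    ∃ ρ : ℝ, 0 < ρ ∧ ρ < 1 ∧ K ⊆ ball 0 ρ := by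
  rcases K.eq_empty_or_nonempty with rfl | hne
  · exact ⟨1 / 2, by norm_num, by norm_num, by simp⟩
  obtain ⟨x, hx, hmax⟩ := hK.exists_isMaxOn hne continuous_norm.continuousOn
  have hx1 : ‖x‖ < 1 := by simpa using hK1 hx
  refine ⟨(‖x‖ + 1) / 2, by positivity, by linarith, fun y hy => ?_⟩
  have : ‖y‖ ≤ ‖x‖ := hmax hy
  simp; linarith

theorem perron_bdry (hK : IsCompact K) (hK1 : K ⊆ ball 0 1) :
    ∀ δ > 0, ∃ r < (1 : ℝ), ∀ z ∈ ball (0 : ℂ) 1 \ K, r < ‖z‖ → perron K z ≤ δ := by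
  intro δ hδ
  obtain ⟨ρ, h0, h1, h2⟩ := exists_radius hK hK1
  have hlρ : Real.log ρ < 0 := Real.log_neg h0 h1
  refine ⟨Max.max ρ (Real.exp (δ * Real.log ρ)), max_lt h1 ?_, fun z hz hlt => ?_⟩
  · rw [Real.exp_lt_one_iff]; nlinarith
  · have h3 : ρ < ‖z‖ := (le_max_left _ _).trans_lt hlt
    have h4 : Real.exp (δ * Real.log ρ) < ‖z‖ := (le_max_right _ _).trans_lt hlt
    refine (perron_le_log h0 h1 h2 ⟨h3, by simpa using hz.1⟩).trans ?_
    rw [div_le_iff_of_neg hlρ]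
    exact ((Real.lt_log_iff_exp_lt (h0.trans h3)).2 h4).le

end

end PCsec

section PC2sec

variable {K : Set ℂ}

theorem SMax_sub_re {f : ℂ → ℝ} {P : ℂ → ℂ} (hP : Differentiable ℂ P) {z : ℂ} (hf : SMax f z) :
    SMax (fun z => f z - (P z).re) z := hf.sub (LocRe.re (hP.analyticAt z))

theorem re_nonneg_ball {P : ℂ → ℂ} (hP : Differentiable ℂ P) {c : ℂ} {R M : ℝ}
    (h : ∀ z ∈ sphere c R, M ≤ (P z).re) : ∀ z ∈ ball c R, M ≤ (P z).re := by
  intro z hz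
  have := maxPrinciple_ball (f := fun z => -(P z).re) (M := -M) (c := c) (R := R)
    (by have := hP.continuous; fun_prop)
    (fun w _ => (LocRe.re (hP.analyticAt w)).neg.sMax) (fun z hz => by simpa using h z hz) z hz
  linarith

/-- the harmonic approximants on a ball. -/
theorem perron_ball_step {c : ℂ} {R r0 : ℝ} (hR : 0 < R) (hr0 : r0 < 1)
    (hB0 : ∀ z ∈ closedBall c R, ‖z‖ ≤ r0)
    (hB : closedBall c R ⊆ ball (0 : ℂ) 1 \ K) {h : ℂ → ℝ} (H : SClass K h) {δ : ℝ} (hδ : 0 < δ) :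
    ∃ P : ℂ → ℂ, Differentiable ℂ P ∧ (∀ z ∈ sphere c R, |h z - (P z).re| ≤ δ) ∧
      (∀ z ∈ ball c R, h z ≤ (P z).re + δ) ∧ (∀ z ∈ ball c R, (P z).re - δ ≤ perron K z) := by
  obtain ⟨P, hP, hPh⟩ := trig_approx hR (H.cont.mono (sphere_subset_closedBall.trans hB)) hδ
  have hPc := hP.continuous
  refine ⟨P, hP, hPh, ?_, ?_⟩
  · intro z hz
    have := maxPrinciple_ball (f := fun z => h z - (P z).re) (M := δ) (c := c) (R := R)
      ((H.cont.mono hB).sub (by fun_prop))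
      (fun w hw => SMax_sub_re hP (H.smax w (hB (ball_subset_closedBall hw))))
      (fun z hz => (le_abs_self _).trans (hPh z hz)) z hz
    linarith
  · intro z hz
    have hq1 : ∀ z ∈ ball c R, (P z).re - δ ≤ 1 := by
      refine maxPrinciple_ball (by fun_prop)
        (fun w _ => ((LocRe.re (hP.analyticAt w)).sub (LocRe.const δ w)).sMax) ?_
      intro z hz
      have h1 := hPh z hz
      have h2 := H.le_one z (hB (sphere_subset_closedBall hz))
      rw [abs_le] at h1
      linarith
    have G := H.glue (O := ball c R) isOpen_ball hr0
      (fun z hz => hB0 z (ball_subset_closedBall hz)) (q := fun z => (P z).re - δ)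
      (by fun_prop) (fun w _ => ((LocRe.re (hP.analyticAt w)).sub (LocRe.const δ w)).sMax)
      (fun z hz => hq1 z hz.1) (by
        rintro z ⟨hz, _⟩
        have h1 := hPh z (frontier_ball_subset_sphere hz)
        rw [abs_le] at h1
        linarith)
    have := G.le_perron (hB (ball_subset_closedBall hz))
    simp only [hz, if_true] at this
    exact (le_max_right _ _).trans this

theorem perron_approx {c : ℂ} {R r0 : ℝ} (hR : 0 < R) (hr0 : r0 < 1)
    (hB0 : ∀ z ∈ closedBall c R, ‖z‖ ≤ r0)
    (hB : closedBall c R ⊆ ball (0 : ℂ) 1 \ K) {δ : ℝ} (hδ : 0 < δ) :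
    ∃ P : ℂ → ℂ, Differentiable ℂ P ∧ ∀ z ∈ ball c (R / 2), |perron K z - (P z).re| ≤ 14 * δ := by
  have hcB : c ∈ ball c R := mem_ball_self hR
  obtain ⟨h, H, hc⟩ := exists_near_perron (K := K) c hδ
  obtain ⟨P, hP, hPs, hP1, hP2⟩ := perron_ball_step hR hr0 hB0 hB H hδ
  refine ⟨P, hP, fun z hz => ?_⟩
  have hzR : z ∈ ball c R := ball_subset_ball (by linarith) hz
  rw [abs_le]
  constructor
  · have := hP2 z hzR
    linarith
  suffices perron K z ≤ (P z).re + 14 * δ by linarith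
  refine perron_le fun h2 H2 => ?_
  obtain ⟨P3, hP3, hPs3, hP31, hP32⟩ := perron_ball_step hR hr0 hB0 hB (H.max H2) hδ
  have hdiff : Differentiable ℂ (fun z => P3 z - P z) := hP3.sub hP
  have hpos : ∀ z ∈ ball c R, -(2 * δ) ≤ (P3 z - P z).re := by
    refine re_nonneg_ball hdiff fun z hz => ?_
    have h1 := hPs z hz
    have h3 := hPs3 z hz
    rw [abs_le] at h1 h3
    have := le_max_left (h z) (h2 z)
    simp only [Complex.sub_re]
    linarith
  have hcc : (P3 c - P c).re ≤ 3 * δ := by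
    have h1 := hP32 c hcB
    have h2 := hP1 c hcB
    simp only [Complex.sub_re]
    linarith
  have hBC := borelCar_center (c := c) (R := R) (M := 5 * δ)
    (f := fun z => (P3 c - P c) - (P3 z - P z)) (by positivity) hR
    ((hdiff.const_sub _).differentiableOn) (fun z hz => by
      have := hpos z hz
      rw [Complex.sub_re]; linarith) (by simp) hz
  have h5 := (neg_le_abs _).trans ((Complex.abs_re_le_norm _).trans hBC)
  rw [Complex.sub_re] at h5
  have h6 := hP31 z hzR
  have h7 := le_max_right (h z) (h2 z)
  have h8 : (P3 z - P z).re = (P3 z).re - (P z).re := Complex.sub_re _ _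
  linarith

theorem perron_locRe (hK : IsClosed K) {c : ℂ} (hc : c ∈ ball (0 : ℂ) 1 \ K) :
    LocRe (perron K) c := by
  have hop : IsOpen (ball (0 : ℂ) 1 \ K) := isOpen_ball.sdiff hK
  obtain ⟨R0, hR0, hsub⟩ := Metric.isOpen_iff.1 hop c hc
  set R := R0 / 2 with hRd
  have hR : 0 < R := by positivity
  have hB : closedBall c R ⊆ ball (0 : ℂ) 1 \ K :=
    (closedBall_subset_ball (by rw [hRd]; linarith)).trans hsub
  obtain ⟨x, hx, hmax⟩ := (isCompact_closedBall c R).exists_isMaxOn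
    (nonempty_closedBall.2 hR.le) continuous_norm.continuousOn
  have hx1 : ‖x‖ < 1 := by simpa using (hB hx).1
  have happ := fun n : ℕ => perron_approx hR hx1 hmax hB (δ := 1 / ((n : ℝ) + 1)) (by positivity)
  choose P hP hPa using happ
  have hcB2 : c ∈ ball c (R / 2) := mem_ball_self (by positivity)
  have hle1 : ∀ n : ℕ, 1 / ((n : ℝ) + 1) ≤ 1 := fun n => by
    rw [div_le_one (by positivity)]; linarith [(Nat.cast_nonneg n : (0 : ℝ) ≤ n)]
  -- normalised functions
  let F : ℕ → ℂ → ℂ := fun n z => P n z - ((P n c).im : ℂ) * Complex.I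
  have hFre : ∀ n z, (F n z).re = (P n z).re := by intro n z; simp [F]
  have hFd : ∀ n, Differentiable ℂ (F n) := fun n => (hP n).sub_const _
  have hreb : ∀ n, ∀ z ∈ ball c (R / 2), |(F n z).re| ≤ 15 := by
    intro n z hz
    have hzΩ := hB (ball_subset_closedBall (ball_subset_ball (by linarith) hz))
    have h1 := hPa n z hz
    have h2 := perron_nonneg hzΩ
    have h3 := perron_le_one hzΩ
    have h4 := hle1 n
    rw [hFre]
    rw [abs_le] at h1 ⊢
    constructor <;> linarith
  have hFc : ∀ n, ‖F n c‖ ≤ 15 := by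
    intro n
    have : F n c = ((F n c).re : ℂ) := by
      apply Complex.ext <;> simp [F]
    rw [this, Complex.norm_real]
    exact hreb n c hcB2
  have hFb : ∀ n, ∀ z ∈ ball c (R / 4), ‖F n z‖ ≤ 75 := by
    intro n z hz
    have := borelCar_center (c := c) (R := R / 2) (M := 30) (f := fun z => F n z - F n c)
      (by norm_num) (by positivity) ((hFd n).sub_const _).differentiableOn (fun w hw => by
        have h1 := (le_abs_self _).trans (hreb n w hw)
        have h2 := (neg_le_abs _).trans (hreb n c hcB2)
        simp only [Complex.sub_re]; linarith) (by simp) (z := z) (by convert hz using 2; ring)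
    have h2 := hFc n
    have h3 := norm_add_le (F n z - F n c) (F n c)
    simp only [sub_add_cancel] at h3
    linarith
  obtain ⟨Q, hQ, hlim⟩ := ultra_montel (hyperfilter ℕ) (isOpen_ball (x := c) (ε := R / 4))
    (F := F) (fun n => (hFd n).differentiableOn)
    (fun z hz => ⟨1, one_pos, 75, fun n w _ hw => hFb n w hw⟩)
  have hcR4 : ball c (R / 4) ∈ 𝓝 c := ball_mem_nhds _ (by positivity)
  refine ⟨Q, hQ.analyticAt hcR4, ?_⟩
  filter_upwards [hcR4] with z hz
  have h1 : Tendsto (fun n => (F n z).re) (hyperfilter ℕ) (𝓝 (Q z).re) :=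
    (Complex.continuous_re.tendsto _).comp (hlim.tendsto_at hz)
  have h2 : Tendsto (fun n => (F n z).re) atTop (𝓝 (perron K z)) := by
    rw [tendsto_iff_dist_tendsto_zero]
    refine squeeze_zero (fun _ => dist_nonneg) (g := fun n : ℕ => 14 * (1 / ((n : ℝ) + 1))) ?_ ?_
    · intro n
      rw [dist_comm, Real.dist_eq, hFre]
      exact hPa n z (ball_subset_ball (by linarith) hz)
    · simpa using (tendsto_one_div_add_atTop_nhds_zero_nat (𝕜 := ℝ)).const_mul 14
  exact tendsto_nhds_unique (h2.mono_left Nat.hyperfilter_le_atTop) h1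

theorem perron_sClass (hK : IsCompact K) (hK1 : K ⊆ ball 0 1) : SClass K (perron K) where
  cont := fun z hz => (perron_locRe hK.isClosed hz).continuousAt.continuousWithinAt
  smax := fun z hz => (perron_locRe hK.isClosed hz).sMax
  nonneg := fun z hz => perron_nonneg hz
  le_one := fun z hz => perron_le_one hz
  bdry := perron_bdry hK hK1

end PC2sec

section PEsec

theorem LocRe.locLip {E : ℂ → ℝ} {b : ℂ} (h : LocRe E b) :
    ∃ L : ℝ, 0 ≤ L ∧ ∃ s > 0, ∀ z ∈ ball b s, ∀ w ∈ ball b s, |E z - E w| ≤ L * ‖z - w‖ := by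
  obtain ⟨Q, hQ, h1⟩ := h
  obtain ⟨L, S, hS, hL⟩ := hQ.hasStrictDerivAt.hasStrictFDerivAt.exists_lipschitzOnWith
  obtain ⟨s, hs, hsub⟩ := Metric.mem_nhds_iff.1 (inter_mem hS h1)
  refine ⟨L, L.2, s, hs, fun z hz w hw => ?_⟩
  have h2 := hsub hz
  have h3 := hsub hw
  have h4 : E z = (Q z).re := h2.2
  have h5 : E w = (Q w).re := h3.2
  rw [h4, h5, ← Complex.sub_re]
  refine (Complex.abs_re_le_norm _).trans ?_
  have := hL.dist_le_mul z h2.1 w h3.1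
  rwa [dist_eq_norm, dist_eq_norm] at this

theorem radial_lip {E : ℂ → ℝ} {C : Set ℂ} (hC : IsCompact C) (hC1 : ∀ z ∈ C, ‖z‖ ≤ 1)
    (hE : ∀ z ∈ C, LocRe E z) :
    ∃ L : ℝ, 0 ≤ L ∧ ∃ s > 0, ∀ z ∈ C, ∀ t : ℝ, 1 - s < t → t < 1 →
      |E (t * z) - E z| ≤ L * (1 - t) := by
  refine hC.induction_on (p := fun C' => ∃ L : ℝ, 0 ≤ L ∧ ∃ s > 0, ∀ z ∈ C', ∀ t : ℝ,
    1 - s < t → t < 1 → |E (t * z) - E z| ≤ L * (1 - t)) ?_ ?_ ?_ ?_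
  · exact ⟨0, le_rfl, 1, one_pos, by simp⟩
  · rintro S T hST ⟨L, hL, s, hs, h⟩
    exact ⟨L, hL, s, hs, fun z hz => h z (hST hz)⟩
  · rintro S T ⟨L, hL, s, hs, h⟩ ⟨L', hL', s', hs', h'⟩
    refine ⟨L + L', by positivity, min s s', lt_min hs hs', ?_⟩
    rintro z (hz | hz) t ht ht1
    · have := h z hz t (by linarith [min_le_left s s']) ht1
      nlinarith
    · have := h' z hz t (by linarith [min_le_right s s']) ht1
      nlinarith
  · intro b hb
    obtain ⟨L, hL, s, hs, h⟩ := (hE b hb).locLip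
    refine ⟨ball b (s / 2) ∩ C, ?_, L, hL, s / 2, by positivity, ?_⟩
    · exact inter_mem (mem_nhdsWithin_of_mem_nhds (ball_mem_nhds _ (by positivity)))
        self_mem_nhdsWithin
    · rintro z ⟨hz, hzC⟩ t ht ht1
      have h1 : ‖(t : ℂ) * z - z‖ ≤ 1 - t := by
        have : (t : ℂ) * z - z = ((t - 1 : ℝ) : ℂ) * z := by push_cast; ring
        rw [this, norm_mul, Complex.norm_real, Real.norm_eq_abs, abs_of_neg (by linarith)]
        nlinarith [hC1 z hzC]
      have h2 := h (t * z) (by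
        rw [mem_ball, dist_eq_norm] at hz ⊢
        have := norm_add_le ((t : ℂ) * z - z) (z - b)
        rw [sub_add_sub_cancel] at this
        linarith) z (ball_subset_ball (by linarith) hz)
      exact h2.trans (mul_le_mul_of_nonneg_left h1 hL)

theorem log_ratio_locRe (a : ℝ) {z : ℂ} (hz : z ≠ 0) : LocRe (fun z => a * Real.log ‖z‖) z :=
  (LocRe.log_norm_id hz).const_mul a

theorem hopf_bound {E : ℂ → ℝ} {ρ ρ1 : ℝ} (hρ0 : 0 < ρ) (hρρ : ρ < ρ1) (hρ1 : ρ1 < 1)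
    (hpos : ∀ z ∈ annulus ρ, 0 < E z) (hre : ∀ z ∈ annulus ρ, LocRe E z) :
    ∃ c0 > 0, ∀ z ∈ annulus ρ1, c0 * (-Real.log ‖z‖) ≤ E z := by
  have hlog : Real.log ρ1 < 0 := Real.log_neg (by linarith) hρ1
  have hsph : ∀ z ∈ sphere (0 : ℂ) ρ1, z ∈ annulus ρ := fun z hz => by
    have : ‖z‖ = ρ1 := by simpa using hz
    exact ⟨by linarith, by linarith⟩
  obtain ⟨x, hx, hmin⟩ := (isCompact_sphere (0 : ℂ) ρ1).exists_isMinOn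
    (NormedSpace.sphere_nonempty.2 (by linarith))
    (fun z hz => (hre z (hsph z hz)).continuousAt.continuousWithinAt)
  have hEx := hpos x (hsph x hx)
  have hsub : annulus ρ1 ⊆ annulus ρ := fun z hz => ⟨hρρ.trans hz.1, hz.2⟩
  have hne : ∀ z : ℂ, 0 < ‖z‖ → z ≠ 0 := fun z hz => norm_pos_iff.1 hz
  set c0 := E x / (-Real.log ρ1) with hc0
  have hc0p : 0 < c0 := div_pos hEx (by linarith)
  refine ⟨c0, hc0p, fun z hz => ?_⟩
  have hL : ∀ z ∈ annulus ρ1 ∪ sphere (0 : ℂ) ρ1,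
      LocRe (fun z => (-c0) * Real.log ‖z‖ - E z) z := by
    intro z hz
    have hzn : 0 < ‖z‖ := by
      rcases hz with hz | hz
      · have := hz.1; linarith
      · have : ‖z‖ = ρ1 := by simpa using hz
        linarith
    refine (log_ratio_locRe _ (hne z hzn)).sub (hre z ?_)
    rcases hz with hz | hz
    · exact hsub hz
    · exact hsph z hz
  have := maxPrinciple (M := 0) (f := fun z => (-c0) * Real.log ‖z‖ - E z) (isOpen_annulus ρ1)
    (isBounded_annulus ρ1) (fun z hz => (hL z (.inl hz)).continuousAt.continuousWithinAt)
    (fun z hz => (hL z (.inl hz)).sMax) ?_ z hz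
  · linarith
  · intro b hb ε hε
    rcases frontier_annulus hb with h1 | h1
    · have hbs : b ∈ sphere (0 : ℂ) ρ1 := by simpa using h1
      have h2 := (hL b (.inr hbs)).continuousAt.tendsto
      have h3 : (-c0) * Real.log ‖b‖ - E b ≤ 0 := by
        have h4 : E x ≤ E b := hmin hbs
        have h5 : (-c0) * Real.log ‖b‖ = E x := by
          rw [h1, hc0]; have := hlog.ne; field_simp
        linarith
      filter_upwards [mem_nhdsWithin_of_mem_nhds
        (h2.eventually_lt_const (show _ < 0 + ε by linarith))] with w hw
      exact hw.le
    · have hb0 : b ≠ 0 := hne b (by linarith)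
      have h2 := (log_ratio_locRe (-c0) hb0).continuousAt.tendsto
      simp only [h1, Real.log_one, mul_zero] at h2
      filter_upwards [mem_nhdsWithin_of_mem_nhds (h2.eventually_lt_const hε),
        self_mem_nhdsWithin] with w hw hw2
      have := hpos w (hsub hw2)
      linarith

theorem star_lemma {E : ℂ → ℝ} {ρ : ℝ} (hρ0 : 0 < ρ) (hρ1 : ρ < 1)
    (hpos : ∀ z ∈ annulus ρ, 0 < E z) (hre : ∀ z ∈ annulus ρ, LocRe E z)
    (hbd : ∀ δ > 0, ∃ r < (1 : ℝ), ∀ z ∈ annulus ρ, r < ‖z‖ → E z ≤ δ) :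
    ∃ r1, ρ < r1 ∧ r1 < 1 ∧ ∀ (z : ℂ) (t : ℝ), 0 < t → t < 1 → r1 ≤ t * ‖z‖ → ‖z‖ < 1 →
      E z < E (t * z) := by
  obtain ⟨ρ1, h01, h11⟩ := exists_between hρ1
  obtain ⟨ρ2, h12, h21⟩ := exists_between h11
  obtain ⟨c0, hc0, hopf⟩ := hopf_bound hρ0 h01 h11 hpos hre
  have hsph : ∀ z ∈ sphere (0 : ℂ) ρ2, z ∈ annulus ρ := fun z hz => by
    have : ‖z‖ = ρ2 := by simpa using hz
    exact ⟨by linarith, by linarith⟩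
  obtain ⟨L, hL, s, hs, hlip⟩ := radial_lip (E := E) (isCompact_sphere (0 : ℂ) ρ2)
    (fun z hz => (hsph z hz).2.le) (fun z hz => hre z (hsph z hz))
  have hlog2 : Real.log ρ2 < 0 := Real.log_neg (by linarith) h21
  set r := Real.exp (Real.log ρ2 * (c0 / (c0 + L))) with hr
  have hr1 : r < 1 := by
    rw [hr, Real.exp_lt_one_iff]
    have : 0 < c0 / (c0 + L) := by positivity
    nlinarith
  have hρ12 : ρ1 / ρ2 < 1 := by rw [div_lt_one (by linarith)]; exact h12
  refine ⟨max (max ρ2 r) (max (ρ1 / ρ2) (1 - s)), ?_, ?_, ?_⟩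
  · exact lt_of_lt_of_le (h01.trans h12) ((le_max_left _ _).trans (le_max_left _ _))
  · exact max_lt (max_lt h21 hr1) (max_lt hρ12 (by linarith))
  intro z t ht0 ht1 hle hz1
  obtain ⟨hle1, hle2⟩ := max_le_iff.1 hle
  obtain ⟨hA, hB⟩ := max_le_iff.1 hle1
  obtain ⟨hC, hD⟩ := max_le_iff.1 hle2
  have hz0 : 0 < ‖z‖ := by
    by_contra h
    have : ‖z‖ = 0 := le_antisymm (not_lt.1 h) (norm_nonneg _)
    rw [this] at hA; linarith
  have htz : t * ‖z‖ < ‖z‖ := by nlinarith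
  have htz' : t * ‖z‖ < t := by nlinarith
  set τ := -Real.log t with hτ
  have hτ0 : 0 < τ := by rw [hτ]; linarith [Real.log_neg ht0 ht1]
  have hτt : 1 - t ≤ τ := by rw [hτ]; linarith [Real.log_le_sub_one_of_pos ht0]
  have hne : ∀ z : ℂ, 0 < ‖z‖ → z ≠ 0 := fun z hz => norm_pos_iff.1 hz
  have htn : ∀ w : ℂ, ‖(t : ℂ) * w‖ = t * ‖w‖ := fun w => by
    rw [norm_mul, Complex.norm_real, Real.norm_eq_abs, abs_of_pos ht0]
  have htρ : ρ1 < t * ρ2 := by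
    have : ρ1 / ρ2 < t := by linarith
    rwa [div_lt_iff₀ (by linarith)] at this
  have htin : ∀ w : ℂ, ρ2 ≤ ‖w‖ → ‖w‖ ≤ 1 → (t : ℂ) * w ∈ annulus ρ1 := by
    intro w h1 h2
    refine ⟨?_, ?_⟩ <;> rw [htn]
    · nlinarith
    · nlinarith
  have hsub1 : annulus ρ1 ⊆ annulus ρ := fun z hz => ⟨h01.trans hz.1, hz.2⟩
  have hLR : ∀ w : ℂ, ρ2 ≤ ‖w‖ → ‖w‖ < 1 → LocRe (fun z => (τ * c0 -
      τ * (c0 + L) / Real.log ρ2 * Real.log ‖z‖) - (E (t * z) - E z)) w := by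
    intro w h1 h2
    have hw0 : w ≠ 0 := hne w (by linarith)
    refine ((LocRe.const _ w).sub (log_ratio_locRe _ hw0)).sub (LocRe.sub ?_ (hre w ⟨by linarith, h2⟩))
    exact LocRe.comp (g := fun z => (t : ℂ) * z) (hre _ (hsub1 (htin w h1 h2.le)))
      (analyticAt_const.mul analyticAt_id)
  have := maxPrinciple (M := 0) (f := fun z => (τ * c0 -
      τ * (c0 + L) / Real.log ρ2 * Real.log ‖z‖) - (E (t * z) - E z)) (isOpen_annulus ρ2)
    (isBounded_annulus ρ2) (fun z hz => (hLR z hz.1.le hz.2).continuousAt.continuousWithinAt)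
    (fun z hz => (hLR z hz.1.le hz.2).sMax) ?_ z ⟨by linarith, hz1⟩
  · have h1 : Real.log ρ2 * (c0 / (c0 + L)) < Real.log ‖z‖ := by
      rw [Real.lt_log_iff_exp_lt hz0]; linarith
    have h2 : τ * (c0 + L) / Real.log ρ2 * Real.log ‖z‖ < τ * c0 := by
      have h3 : τ * (c0 + L) / Real.log ρ2 < 0 := div_neg_of_pos_of_neg (by positivity) hlog2
      have h4 := mul_lt_mul_of_neg_left h1 h3
      have h5 : τ * (c0 + L) / Real.log ρ2 * (Real.log ρ2 * (c0 / (c0 + L))) = τ * c0 := by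
        have : c0 + L ≠ 0 := by positivity
        have := hlog2.ne
        field_simp
      linarith
    linarith
  · intro b hb ε hε
    rcases frontier_annulus hb with h1 | h1
    · have h2 := (hLR b h1.ge (by linarith)).continuousAt.tendsto
      have h3 : (τ * c0 - τ * (c0 + L) / Real.log ρ2 * Real.log ‖b‖) - (E (t * b) - E b) ≤ 0 := by
        have h4 := (neg_le_abs _).trans (hlip b (by simpa using h1) t (by linarith) ht1)
        have h5 : τ * (c0 + L) / Real.log ρ2 * Real.log ‖b‖ = τ * (c0 + L) := by
          rw [h1]; have := hlog2.ne; field_simp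
        have h6 : L * (1 - t) ≤ L * τ := mul_le_mul_of_nonneg_left hτt hL
        rw [h5]; nlinarith
      filter_upwards [mem_nhdsWithin_of_mem_nhds
        (h2.eventually_lt_const (show _ < 0 + ε by linarith))] with w hw
      exact hw.le
    · have hb0 : b ≠ 0 := hne b (by linarith)
      have h2 := (log_ratio_locRe (-(τ * (c0 + L) / Real.log ρ2)) hb0).continuousAt.tendsto
      simp only [h1, Real.log_one, mul_zero] at h2
      obtain ⟨r', hr', hE'⟩ := hbd (ε / 2) (by positivity)
      have h3 : ∀ᶠ w in 𝓝 b, r' < ‖w‖ :=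
        continuous_norm.continuousAt.eventually_const_lt (by simpa [h1] using hr')
      filter_upwards [mem_nhdsWithin_of_mem_nhds (h2.eventually_lt_const (half_pos hε)),
        mem_nhdsWithin_of_mem_nhds h3, self_mem_nhdsWithin] with w hw hw3 hw2
      have h4 := hE' w ⟨by linarith [hw2.1], hw2.2⟩ hw3
      have hw0 : 0 < ‖w‖ := by linarith [hw2.1]
      have h5 := hopf (t * w) (htin w hw2.1.le hw2.2.le)
      rw [htn, Real.log_mul ht0.ne' hw0.ne'] at h5
      have h6 : Real.log ‖w‖ ≤ 0 := Real.log_nonpos hw0.le hw2.2.le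
      have h7 : c0 * τ ≤ E (t * w) := by
        rw [hτ]; nlinarith
      linarith

end PEsec

section PDsec

def avg (y0 y1 : ℂ → ℂ) {E : Type*} [AddCommGroup E] [Module ℝ E] : ℕ → (ℂ → E) → ℂ → E
  | 0, h, a => h a
  | n + 1, h, a => (1 / 2 : ℝ) • avg y0 y1 n h (y0 a) + (1 / 2 : ℝ) • avg y0 y1 n h (y1 a)

section
variable {y0 y1 : ℂ → ℂ} {K : Set ℂ} (h0 : ∀ x ∈ K, y0 x ∈ K) (h1 : ∀ x ∈ K, y1 x ∈ K)
include h0 h1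

theorem avg_mem {E : Type*} [AddCommGroup E] [Module ℝ E] {S : Set E} (hS : Convex ℝ S)
    {h : ℂ → E} (hh : ∀ y ∈ K, h y ∈ S) (n : ℕ) : ∀ a ∈ K, avg y0 y1 n h a ∈ S := by
  induction n with
  | zero => exact hh
  | succ n ih =>
    intro a ha
    exact hS (ih _ (h0 a ha)) (ih _ (h1 a ha)) (by norm_num) (by norm_num) (by norm_num)

theorem avg_mono {h h' : ℂ → ℝ} (hh : ∀ y ∈ K, h y ≤ h' y) (n : ℕ) :
    ∀ a ∈ K, avg y0 y1 n h a ≤ avg y0 y1 n h' a := by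
  induction n with
  | zero => exact hh
  | succ n ih =>
    intro a ha
    have := ih _ (h0 a ha)
    have := ih _ (h1 a ha)
    simp only [avg, smul_eq_mul]
    linarith

theorem avg_affine {h : ℂ → ℝ} (s c : ℝ) (n : ℕ) :
    ∀ a ∈ K, avg y0 y1 n (fun y => s * h y + c) a = s * avg y0 y1 n h a + c := by
  induction n with
  | zero => intro a _; rfl
  | succ n ih =>
    intro a ha
    simp only [avg, smul_eq_mul, ih _ (h0 a ha), ih _ (h1 a ha)]
    ring

theorem avg_re {h : ℂ → ℂ} {h' : ℂ → ℝ} (hh : ∀ y ∈ K, (h y).re = h' y) (n : ℕ) :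
    ∀ a ∈ K, (avg y0 y1 n h a).re = avg y0 y1 n h' a := by
  induction n with
  | zero => exact hh
  | succ n ih =>
    intro a ha
    simp only [avg, smul_eq_mul, Complex.add_re, Complex.real_smul, Complex.re_ofReal_mul,
      ih _ (h0 a ha), ih _ (h1 a ha)]

theorem avg_diff {F : ℂ → ℂ → ℂ} {O : Set ℂ} (hF : ∀ y ∈ K, DifferentiableOn ℂ (F y) O) (n : ℕ) :
    ∀ a ∈ K, DifferentiableOn ℂ (fun z => avg y0 y1 n (fun y => F y z) a) O := by
  induction n with
  | zero => exact hF
  | succ n ih =>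
    intro a ha
    exact ((ih _ (h0 a ha)).const_smul (1 / 2 : ℝ)).add ((ih _ (h1 a ha)).const_smul (1 / 2 : ℝ))

omit h0 h1 in
theorem avg_succ' {h : ℂ → ℝ} (n : ℕ) :
    ∀ a, avg y0 y1 (n + 1) h a
      = avg y0 y1 n (fun w => (1 / 2 : ℝ) * h (y0 w) + (1 / 2 : ℝ) * h (y1 w)) a := by
  induction n with
  | zero => intro a; simp [avg]
  | succ n ih =>
    intro a
    rw [avg, ih, ih, avg]

/-- truncated logarithmic kernel -/
def lam (r0 A : ℝ) (n : ℕ) (x w : ℂ) : ℝ := max 0 (Real.log (r0 / max ‖x - w‖ (r0 / A ^ n)))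

theorem avg_lam {f : ℂ → ℂ} {r0 A : ℝ} (hr0 : 0 < r0) (hA : 1 < A) (hfK : ∀ x ∈ K, f x ∈ K)
    (hf : ∀ x ∈ K, ∀ y ∈ K, ‖f x - f y‖ ≤ A * ‖x - y‖)
    (hy0 : ∀ x ∈ K, f (y0 x) = x) (hy1 : ∀ x ∈ K, f (y1 x) = x)
    (hsep : ∀ x ∈ K, 2 * r0 < ‖y0 x - y1 x‖) (n : ℕ) :
    ∀ x ∈ K, ∀ a ∈ K, avg y0 y1 n (lam r0 A n x) a ≤ Real.log A := by
  have hlA : 0 < Real.log A := Real.log_pos hA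
  induction n with
  | zero =>
    intro x _ a _
    have : lam r0 A 0 x a = 0 := by
      rw [lam, max_eq_left]
      apply Real.log_nonpos (by positivity)
      rw [div_le_one (lt_max_of_lt_right (by positivity))]
      exact le_max_of_le_right (by simp)
    change lam r0 A 0 x a ≤ _
    rw [this]; exact hlA.le
  | succ n ih =>
    intro x hx a ha
    rw [avg_succ']
    have hzero : ∀ y, r0 ≤ ‖x - y‖ → lam r0 A (n + 1) x y = 0 := by
      intro y hy
      rw [lam, max_eq_left]
      apply Real.log_nonpos (by positivity)
      rw [div_le_one (lt_max_of_lt_right (by positivity))]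
      exact le_max_of_le_left hy
    have hstep : ∀ y ∈ K, lam r0 A (n + 1) x y ≤ lam r0 A n (f x) (f y) + Real.log A := by
      intro y hy
      have hnn : 0 ≤ lam r0 A n (f x) (f y) := le_max_left _ _
      refine max_le (by linarith) ?_
      refine le_trans ?_ (add_le_add_left (le_max_right _ _) _)
      have hs : 0 < max ‖x - y‖ (r0 / A ^ (n + 1)) := lt_max_of_lt_right (by positivity)
      have hs' : 0 < max ‖f x - f y‖ (r0 / A ^ n) := lt_max_of_lt_right (by positivity)
      rw [← Real.log_mul (by positivity) (by positivity)]
      apply Real.log_le_log (by positivity)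
      rw [div_mul_eq_mul_div, div_le_div_iff₀ hs hs']
      have : max ‖f x - f y‖ (r0 / A ^ n) ≤ A * max ‖x - y‖ (r0 / A ^ (n + 1)) := by
        refine max_le ((hf x hx y hy).trans ?_) ?_
        · gcongr; exact le_max_left _ _
        · calc r0 / A ^ n = A * (r0 / A ^ (n + 1)) := by rw [pow_succ]; field_simp
            _ ≤ _ := by gcongr; exact le_max_right _ _
      nlinarith
    have key : ∀ w ∈ K, (1 / 2 : ℝ) * lam r0 A (n + 1) x (y0 w)
        + (1 / 2 : ℝ) * lam r0 A (n + 1) x (y1 w)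
        ≤ (1 / 2 : ℝ) * lam r0 A n (f x) w + (1 / 2) * Real.log A := by
      intro w hw
      have hnn : 0 ≤ lam r0 A n (f x) w := le_max_left _ _
      have e0 := hstep _ (h0 w hw)
      have e1 := hstep _ (h1 w hw)
      rw [hy0 w hw] at e0
      rw [hy1 w hw] at e1
      by_cases hc : r0 ≤ ‖x - y0 w‖
      · rw [hzero _ hc]; linarith
      · have : r0 ≤ ‖x - y1 w‖ := by
          by_contra hc'
          have h3 := hsep w hw
          have h4 := norm_sub_le (x - y1 w) (x - y0 w)
          rw [sub_sub_sub_cancel_left] at h4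
          linarith
        rw [hzero _ this]; linarith
    refine (avg_mono h0 h1 key n a ha).trans ?_
    rw [avg_affine h0 h1 _ _ n a ha]
    have := ih (f x) (hfK x hx) a ha
    linarith

end

/-- Green function of the unit disk -/
def grn (z y : ℂ) : ℝ := Real.log ‖(1 - (starRingEnd ℂ) y * z) / (z - y)‖

theorem norm_identity (z y : ℂ) :
    ‖1 - (starRingEnd ℂ) y * z‖ ^ 2 - ‖z - y‖ ^ 2 = (1 - ‖z‖ ^ 2) * (1 - ‖y‖ ^ 2) := by
  simp only [← Complex.normSq_eq_norm_sq, Complex.normSq_apply]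
  simp
  ring

section
variable {z y : ℂ} {ρ : ℝ} (hz : ‖z‖ < 1) (hy : ‖y‖ < ρ) (hρ : ρ < 1) (hzy : z ≠ y)
include hz hy hρ hzy

omit hzy in
theorem one_sub_ne : 0 < ‖1 - (starRingEnd ℂ) y * z‖ := by
  rw [norm_pos_iff]
  intro h
  have h1 : (starRingEnd ℂ) y * z = 1 := (sub_eq_zero.1 h).symm
  have h2 := congrArg norm h1
  rw [norm_mul, RCLike.norm_conj, norm_one] at h2
  nlinarith [norm_nonneg z, norm_nonneg y]

theorem grn_eq : grn z y = (1 / 2) * Real.log (‖1 - (starRingEnd ℂ) y * z‖ ^ 2 / ‖z - y‖ ^ 2) := by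
  rw [← div_pow, Real.log_pow, grn, norm_div]
  push_cast; ring

theorem grn_le_two : grn z y ≤ Real.log (2 / ‖z - y‖) := by
  have h1 := one_sub_ne hz hy hρ
  have h2 : 0 < ‖z - y‖ := norm_pos_iff.2 (sub_ne_zero.2 hzy)
  rw [grn, norm_div]
  apply Real.log_le_log (by positivity)
  gcongr
  refine (norm_sub_le _ _).trans ?_
  rw [norm_mul, RCLike.norm_conj, norm_one]
  nlinarith [norm_nonneg z, norm_nonneg y]

theorem grn_le_bdry (hρz : ρ < ‖z‖) : grn z y ≤ (1 - ‖z‖ ^ 2) / (‖z‖ - ρ) ^ 2 := by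
  have h1 := one_sub_ne hz hy hρ
  have h2 : 0 < ‖z - y‖ := norm_pos_iff.2 (sub_ne_zero.2 hzy)
  have h3 : ‖z‖ - ρ ≤ ‖z - y‖ := by linarith [norm_sub_norm_le z y]
  have h4 : 0 < 1 - ‖z‖ ^ 2 := by nlinarith [norm_nonneg z]
  rw [grn_eq hz hy hρ hzy]
  have h5 := Real.log_le_sub_one_of_pos
    (show 0 < ‖1 - (starRingEnd ℂ) y * z‖ ^ 2 / ‖z - y‖ ^ 2 by positivity)
  have h6 : ‖1 - (starRingEnd ℂ) y * z‖ ^ 2 / ‖z - y‖ ^ 2 - 1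
      = (1 - ‖z‖ ^ 2) * (1 - ‖y‖ ^ 2) / ‖z - y‖ ^ 2 := by
    rw [← norm_identity]; field_simp
  have h7 : (1 - ‖z‖ ^ 2) * (1 - ‖y‖ ^ 2) / ‖z - y‖ ^ 2 ≤ (1 - ‖z‖ ^ 2) / (‖z‖ - ρ) ^ 2 := by
    have : 0 < ‖z‖ - ρ := by linarith
    gcongr
    nlinarith [norm_nonneg y, sq_nonneg ‖y‖]
  have h8 : 0 < (1 - ‖z‖ ^ 2) / (‖z‖ - ρ) ^ 2 := by
    have : 0 < ‖z‖ - ρ := by linarith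
    positivity
  linarith

theorem grn_ge : (1 - ‖z‖ ^ 2) * (1 - ρ ^ 2) / 8 ≤ grn z y := by
  have h1 := one_sub_ne hz hy hρ
  have h2 : 0 < ‖z - y‖ := norm_pos_iff.2 (sub_ne_zero.2 hzy)
  have h4 : 0 < 1 - ‖z‖ ^ 2 := by nlinarith [norm_nonneg z]
  rw [grn_eq hz hy hρ hzy]
  have h5 := Real.one_sub_inv_le_log_of_pos
    (show 0 < ‖1 - (starRingEnd ℂ) y * z‖ ^ 2 / ‖z - y‖ ^ 2 by positivity)
  have h6 : 1 - (‖1 - (starRingEnd ℂ) y * z‖ ^ 2 / ‖z - y‖ ^ 2)⁻¹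
      = (1 - ‖z‖ ^ 2) * (1 - ‖y‖ ^ 2) / ‖1 - (starRingEnd ℂ) y * z‖ ^ 2 := by
    rw [← norm_identity]; field_simp
  have h9 : ‖1 - (starRingEnd ℂ) y * z‖ ≤ 2 := by
    refine (norm_sub_le _ _).trans ?_
    rw [norm_mul, RCLike.norm_conj, norm_one]
    nlinarith [norm_nonneg z, norm_nonneg y]
  have h7 : (1 - ‖z‖ ^ 2) * (1 - ρ ^ 2) / 2 ^ 2
      ≤ (1 - ‖z‖ ^ 2) * (1 - ‖y‖ ^ 2) / ‖1 - (starRingEnd ℂ) y * z‖ ^ 2 := by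
    have : 0 < ρ := (norm_nonneg y).trans_lt hy
    have : 0 ≤ 1 - ‖y‖ ^ 2 := by nlinarith [norm_nonneg y]
    gcongr
  linarith

end

end PDsec

section PD2sec

section
variable {y0 y1 : ℂ → ℂ} {K : Set ℂ} (h0 : ∀ x ∈ K, y0 x ∈ K) (h1 : ∀ x ∈ K, y1 x ∈ K)
include h0 h1

theorem avg_grn_le {f : ℂ → ℂ} {r0 A ρ : ℝ} (hK : IsCompact K) (hρ : ρ < 1) (hKρ : ∀ y ∈ K, ‖y‖ < ρ)
    (hr0 : 0 < r0) (hA : 1 < A) (hfK : ∀ x ∈ K, f x ∈ K)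
    (hf : ∀ x ∈ K, ∀ y ∈ K, ‖f x - f y‖ ≤ A * ‖x - y‖)
    (hy0 : ∀ x ∈ K, f (y0 x) = x) (hy1 : ∀ x ∈ K, f (y1 x) = x)
    (hsep : ∀ x ∈ K, 2 * r0 < ‖y0 x - y1 x‖) {a z : ℂ} (ha : a ∈ K) (hz : ‖z‖ < 1) (hzK : z ∉ K) :
    ∀ᶠ n in atTop, avg y0 y1 n (grn z) a ≤ Real.log (4 / r0) + Real.log A := by
  obtain ⟨x, hx, hxz⟩ := hK.exists_infDist_eq_dist ⟨a, ha⟩ z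
  have hd : ∀ w ∈ K, ‖z - x‖ ≤ ‖z - w‖ := by
    intro w hw
    rw [← dist_eq_norm, ← dist_eq_norm, ← hxz]
    exact infDist_le_dist_of_mem hw
  have hpos : 0 < ‖z - x‖ := norm_pos_iff.2 (sub_ne_zero.2 (fun h => hzK (h ▸ hx)))
  have hlim : Tendsto (fun n : ℕ => r0 / A ^ n) atTop (𝓝 0) := 
    (tendsto_pow_atTop_atTop_of_one_lt hA).const_div_atTop r0
  filter_upwards [hlim.eventually (gt_mem_nhds (show 0 < 2 * ‖z - x‖ by positivity))] with n hn
  have key : ∀ w ∈ K, grn z w ≤ 1 * lam r0 A n x w + Real.log (4 / r0) := by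
    intro w hw
    have hzw : z ≠ w := fun h => hzK (h ▸ hw)
    have h3 := hd w hw
    have h2 : 0 < ‖z - w‖ := hpos.trans_le h3
    refine (grn_le_two hz (hKρ w hw) hρ hzw).trans ?_
    have hs : 0 < max ‖x - w‖ (r0 / A ^ n) := lt_max_of_lt_right (by positivity)
    have hle : max ‖x - w‖ (r0 / A ^ n) ≤ 2 * ‖z - w‖ := by
      refine max_le ?_ (by linarith)
      have := norm_sub_le (z - w) (z - x)
      rw [sub_sub_sub_cancel_left] at this
      linarith
    have : Real.log (2 / ‖z - w‖) ≤ Real.log (r0 / max ‖x - w‖ (r0 / A ^ n)) + Real.log (4 / r0) := by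
      rw [← Real.log_mul (by positivity) (by positivity)]
      apply Real.log_le_log (by positivity)
      have e : r0 / max ‖x - w‖ (r0 / A ^ n) * (4 / r0) = 4 / max ‖x - w‖ (r0 / A ^ n) := by
        field_simp
      rw [e, div_le_div_iff₀ h2 hs]
      linarith
    have h5 : Real.log (r0 / max ‖x - w‖ (r0 / A ^ n)) ≤ lam r0 A n x w := le_max_right _ _
    linarith
  have := avg_mono h0 h1 key n a ha
  rw [avg_affine h0 h1 _ _ n a ha] at this
  have := avg_lam h0 h1 hr0 hA hfK hf hy0 hy1 hsep n x hx a ha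
  linarith

theorem avg_grn_bounds {ρ : ℝ} (hρ : ρ < 1) (hKρ : ∀ y ∈ K, ‖y‖ < ρ) {a z : ℂ} (ha : a ∈ K)
    (hz : ‖z‖ < 1) (hzK : z ∉ K) (n : ℕ) : (1 - ‖z‖ ^ 2) * (1 - ρ ^ 2) / 8 ≤ avg y0 y1 n (grn z) a :=
  mem_Ici.1 (avg_mem h0 h1 (convex_Ici _) (h := grn z)
    (fun y hy => mem_Ici.2 (grn_ge hz (hKρ y hy) hρ (fun h => hzK (h ▸ hy)))) n a ha)

theorem avg_grn_locRe {ρ : ℝ} (hK : IsCompact K) (hρ : ρ < 1) (hKρ : ∀ y ∈ K, ‖y‖ < ρ) {a c : ℂ}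
    (ha : a ∈ K) (l : Ultrafilter ℕ) {p : ℂ → ℝ}
    (hp : ∀ z, ‖z‖ < 1 → z ∉ K → Tendsto (fun n => avg y0 y1 n (grn z) a) l (𝓝 (p z)))
    (hc : ‖c‖ < 1) (hcK : c ∉ K) : LocRe p c := by
  have hKc := hK.isClosed
  obtain ⟨R1, hR1, hb1⟩ := Metric.isOpen_iff.1 hKc.isOpen_compl c hcK
  obtain ⟨R, hR, hRR1, hR2, hR3⟩ : ∃ R > 0, 2 * R ≤ R1 ∧ 2 * R ≤ 1 - ρ ∧ R ≤ 1 - ‖c‖ := by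
    refine ⟨min (R1 / 2) (min ((1 - ρ) / 2) (1 - ‖c‖)), ?_, ?_, ?_, ?_⟩
    · refine lt_min (by positivity) (lt_min (by linarith) (by linarith))
    · linarith [min_le_left (R1 / 2) (min ((1 - ρ) / 2) (1 - ‖c‖))]
    · linarith [min_le_right (R1 / 2) (min ((1 - ρ) / 2) (1 - ‖c‖)), min_le_left ((1 - ρ) / 2) (1 - ‖c‖)]
    · linarith [min_le_right (R1 / 2) (min ((1 - ρ) / 2) (1 - ‖c‖)), min_le_right ((1 - ρ) / 2) (1 - ‖c‖)]
  have hcy : ∀ y ∈ K, 2 * R ≤ ‖c - y‖ := by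
    intro y hy
    by_contra h
    push Not at h
    refine hb1 (a := y) ?_ hy
    rw [mem_ball, dist_comm, dist_eq_norm]; linarith
  have hcy' : ∀ y ∈ K, 2 * R ≤ ‖1 - (starRingEnd ℂ) y * c‖ := by
    intro y hy
    have h2 := norm_sub_norm_le 1 ((starRingEnd ℂ) y * c)
    rw [norm_mul, RCLike.norm_conj, norm_one] at h2
    nlinarith [hKρ y hy, norm_nonneg c, norm_nonneg y]
  have hu : ∀ y ∈ K, ∀ z ∈ ball c R, ‖(z - c) / (c - y)‖ ≤ 1 / 2 := by
    intro y hy z hz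
    rw [mem_ball, dist_eq_norm] at hz
    have := hcy y hy
    rw [norm_div, div_le_div_iff₀ (by linarith) (by norm_num)]; linarith
  have hv : ∀ y ∈ K, ∀ z ∈ ball c R,
      ‖-((starRingEnd ℂ) y * (z - c)) / (1 - (starRingEnd ℂ) y * c)‖ ≤ 1 / 2 := by
    intro y hy z hz
    rw [mem_ball, dist_eq_norm] at hz
    have := hcy' y hy
    rw [norm_div, norm_neg, norm_mul, RCLike.norm_conj, div_le_div_iff₀ (by linarith) (by norm_num)]
    nlinarith [hKρ y hy, norm_nonneg (z - c), norm_nonneg y]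
  let F : ℂ → ℂ → ℂ := fun y z =>
    Complex.log (1 + -((starRingEnd ℂ) y * (z - c)) / (1 - (starRingEnd ℂ) y * c))
      - Complex.log (1 + (z - c) / (c - y)) + ((grn c y : ℝ) : ℂ)
  have hslit : ∀ u : ℂ, ‖u‖ ≤ 1 / 2 → 1 + u ∈ Complex.slitPlane := by
    intro u hu
    left
    have := (abs_le.1 ((Complex.abs_re_le_norm u).trans hu)).1
    simp only [Complex.add_re, Complex.one_re]; linarith
  have hFd : ∀ y ∈ K, DifferentiableOn ℂ (F y) (ball c R) := by
    intro y hy z hz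
    apply DifferentiableAt.differentiableWithinAt
    refine DifferentiableAt.add (DifferentiableAt.sub ?_ ?_) (differentiableAt_const _)
    · exact DifferentiableAt.clog (by fun_prop) (hslit _ (hv y hy z hz))
    · exact DifferentiableAt.clog (by fun_prop) (hslit _ (hu y hy z hz))
  have hFre : ∀ y ∈ K, ∀ z ∈ ball c R, (F y z).re = grn z y := by
    intro y hy z hz
    have hzc := hz
    rw [mem_ball, dist_eq_norm] at hzc
    have hz1 : ‖z‖ < 1 := by
      have := norm_sub_norm_le z c; linarith
    have h1 : 0 < ‖1 - (starRingEnd ℂ) y * c‖ := one_sub_ne hc (hKρ y hy) hρ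
    have h2 : 0 < ‖1 - (starRingEnd ℂ) y * z‖ := one_sub_ne hz1 (hKρ y hy) hρ
    have h3 : 0 < ‖c - y‖ := by linarith [hcy y hy]
    have h4 : 0 < ‖z - y‖ := by
      have := hcy y hy
      have h5 := norm_sub_norm_le (c - y) (c - z)
      rw [sub_sub_sub_cancel_left, norm_sub_rev c z] at h5
      linarith
    simp only [F, Complex.add_re, Complex.sub_re, Complex.log_re, Complex.ofReal_re, grn]
    have e1 : 1 + -((starRingEnd ℂ) y * (z - c)) / (1 - (starRingEnd ℂ) y * c)
        = (1 - (starRingEnd ℂ) y * z) / (1 - (starRingEnd ℂ) y * c) := by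
      have := norm_pos_iff.1 h1
      field_simp; ring
    have e2 : 1 + (z - c) / (c - y) = (z - y) / (c - y) := by
      have := norm_pos_iff.1 h3
      field_simp; ring
    rw [e1, e2]
    simp only [norm_div]
    rw [Real.log_div h2.ne' h1.ne', Real.log_div h4.ne' h3.ne', Real.log_div h1.ne' h3.ne',
      Real.log_div h2.ne' h4.ne']
    ring
  have hFb : ∀ y ∈ K, ∀ z ∈ ball c R, ‖F y z‖ ≤ 3 / 4 + 3 / 4 + Real.log (2 / (2 * R)) := by
    intro y hy z hz
    have hgc : ‖((grn c y : ℝ) : ℂ)‖ ≤ Real.log (2 / (2 * R)) := by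
      have hne : c ≠ y := fun h => hcK (h ▸ hy)
      have hr : 0 < ρ := (norm_nonneg y).trans_lt (hKρ y hy)
      rw [Complex.norm_real, Real.norm_of_nonneg]
      · refine (grn_le_two hc (hKρ y hy) hρ hne).trans ?_
        have := hcy y hy
        apply Real.log_le_log (div_pos (by norm_num) (by linarith))
        gcongr
      · refine le_trans ?_ (grn_ge hc (hKρ y hy) hρ hne)
        have : 0 < 1 - ‖c‖ ^ 2 := by nlinarith [norm_nonneg c]
        have : 0 < 1 - ρ ^ 2 := by nlinarith
        positivity
    have hl : ∀ u : ℂ, ‖u‖ ≤ 1 / 2 → ‖Complex.log (1 + u)‖ ≤ 3 / 4 := fun u hu =>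
      (Complex.norm_log_one_add_half_le_self hu).trans (by linarith)
    exact (norm_add_le _ _).trans (add_le_add ((norm_sub_le _ _).trans
      (add_le_add (hl _ (hv y hy z hz)) (hl _ (hu y hy z hz)))) hgc)
  obtain ⟨G, hG, hGt⟩ := ultra_montel l (isOpen_ball (x := c) (ε := R))
    (F := fun n z => avg y0 y1 n (fun y => F y z) a)
    (fun n => avg_diff h0 h1 hFd n a ha) (by
      intro z _
      refine ⟨1, one_pos, 3 / 4 + 3 / 4 + Real.log (2 / (2 * R)), fun n w _ hw => ?_⟩
      have := avg_mem h0 h1 (convex_closedBall (0 : ℂ) (3 / 4 + 3 / 4 + Real.log (2 / (2 * R))))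
        (h := fun y => F y w) (fun y hy => by simpa using hFb y hy w hw) n a ha
      simpa using this)
  refine ⟨G, hG.analyticAt (isOpen_ball.mem_nhds (mem_ball_self hR)), ?_⟩
  filter_upwards [isOpen_ball.mem_nhds (mem_ball_self (x := c) hR)] with z hz
  have hzc := hz
  rw [mem_ball, dist_eq_norm] at hzc
  have hz1 : ‖z‖ < 1 := by
    have := norm_sub_norm_le z c; linarith
  have hzK : z ∉ K := fun h => by
    have := hcy z h
    rw [norm_sub_rev] at this; linarith
  refine tendsto_nhds_unique (hp z hz1 hzK) ?_
  have := (Complex.continuous_re.tendsto _).comp (hGt.tendsto_at hz)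
  refine this.congr (fun n => ?_)
  exact avg_re h0 h1 (fun y hy => hFre y hy z hz) n a ha

theorem nonpolar {f : ℂ → ℂ} {r0 A : ℝ} (hK : IsCompact K) (hne : K.Nonempty) (hK1 : K ⊆ ball 0 1)
    (hr0 : 0 < r0) (hA : 1 < A) (hfK : ∀ x ∈ K, f x ∈ K)
    (hf : ∀ x ∈ K, ∀ y ∈ K, ‖f x - f y‖ ≤ A * ‖x - y‖)
    (hy0 : ∀ x ∈ K, f (y0 x) = x) (hy1 : ∀ x ∈ K, f (y1 x) = x)
    (hsep : ∀ x ∈ K, 2 * r0 < ‖y0 x - y1 x‖) :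
    ∀ z ∈ ball 0 1 \ K, 0 < perron K z := by
  obtain ⟨ρ, hρ0, hρ1, hKρ⟩ := exists_radius hK hK1
  obtain ⟨a, ha⟩ := hne
  replace hKρ : ∀ y ∈ K, ‖y‖ < ρ := fun y hy => by simpa using hKρ hy
  let l : Ultrafilter ℕ := hyperfilter ℕ
  have hl : (l : Filter ℕ) ≤ atTop := Nat.hyperfilter_le_atTop
  let C := Real.log (4 / r0) + Real.log A
  have hex : ∀ z, ∃ L, ‖z‖ < 1 → z ∉ K → Tendsto (fun n => avg y0 y1 n (grn z) a) l (𝓝 L) := by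
    intro z
    by_cases hz : ‖z‖ < 1 ∧ z ∉ K
    · have hev : ∀ᶠ n in (l : Filter ℕ), avg y0 y1 n (grn z) a ∈
          Icc ((1 - ‖z‖ ^ 2) * (1 - ρ ^ 2) / 8) C := by
        filter_upwards [hl (avg_grn_le h0 h1 hK hρ1 hKρ hr0 hA hfK hf hy0 hy1 hsep ha hz.1 hz.2)]
          with n hn
        exact ⟨avg_grn_bounds h0 h1 hρ1 hKρ ha hz.1 hz.2 n, hn⟩
      obtain ⟨L, _, hL⟩ := isCompact_Icc.ultrafilter_le_nhds
        (l.map (fun n => avg y0 y1 n (grn z) a)) (by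
          rw [le_principal_iff]; exact hev)
      exact ⟨L, fun _ _ => hL⟩
    · exact ⟨0, fun h h' => absurd ⟨h, h'⟩ hz⟩
  choose p hp using hex
  have hple : ∀ z, ‖z‖ < 1 → z ∉ K → p z ≤ C := fun z hz hzK =>
    le_of_tendsto (hp z hz hzK)
      (hl (avg_grn_le h0 h1 hK hρ1 hKρ hr0 hA hfK hf hy0 hy1 hsep ha hz hzK))
  have hpge : ∀ z, ‖z‖ < 1 → z ∉ K → 0 < p z := fun z hz hzK => by
    refine lt_of_lt_of_le ?_ (ge_of_tendsto' (hp z hz hzK) (avg_grn_bounds h0 h1 hρ1 hKρ ha hz hzK))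
    have : 0 < 1 - ‖z‖ ^ 2 := by nlinarith [norm_nonneg z]
    have : 0 < 1 - ρ ^ 2 := by nlinarith
    positivity
  have hpbd : ∀ z, ‖z‖ < 1 → z ∉ K → ρ < ‖z‖ → p z ≤ (1 - ‖z‖ ^ 2) / (‖z‖ - ρ) ^ 2 :=
    fun z hz hzK hzρ => le_of_tendsto' (hp z hz hzK) (fun n =>
      mem_Iic.1 (avg_mem h0 h1 (convex_Iic _) (h := grn z) (fun y hy => mem_Iic.2
        (grn_le_bdry hz (hKρ y hy) hρ1 (fun h => hzK (h ▸ hy)) hzρ)) n a ha))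
  have hre : ∀ z, ‖z‖ < 1 → z ∉ K → LocRe p z := fun z hz hzK =>
    avg_grn_locRe h0 h1 hK hρ1 hKρ ha l hp hz hzK
  have hC : 0 < |C| + 1 := by positivity
  have hC' : 0 < (|C| + 1)⁻¹ := by positivity
  have hS : SClass K (fun z => (|C| + 1)⁻¹ * p z) := by
    have hmem : ∀ z ∈ ball (0 : ℂ) 1 \ K, ‖z‖ < 1 ∧ z ∉ K := fun z hz => ⟨by simpa using hz.1, hz.2⟩
    refine ⟨?_, ?_, ?_, ?_, ?_⟩
    · intro z hz
      exact ((hre z (hmem z hz).1 hz.2).const_mul _).continuousAt.continuousWithinAt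
    · intro z hz
      exact ((hre z (hmem z hz).1 hz.2).const_mul _).sMax
    · intro z hz
      have := hpge z (hmem z hz).1 hz.2
      positivity
    · intro z hz
      have h1 := hple z (hmem z hz).1 hz.2
      rw [inv_mul_le_iff₀ hC]
      linarith [le_abs_self C]
    · intro δ hδ
      refine ⟨max ((1 + ρ) / 2) (1 - δ * (1 - ρ) ^ 2 / 8), ?_, ?_⟩
      · have : 0 < δ * (1 - ρ) ^ 2 / 8 := by
          have : 0 < 1 - ρ := by linarith
          positivity
        exact max_lt (by linarith) (by linarith)
      · intro z hz hzr
        have hz1 := (hmem z hz).1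
        have ha := (le_max_left _ _).trans_lt hzr
        have hb := (le_max_right _ _).trans_lt hzr
        have h5 := hpbd z hz1 hz.2 (by linarith)
        have h6 : (1 - ‖z‖ ^ 2) / (‖z‖ - ρ) ^ 2 ≤ δ := by
          have : 0 < ‖z‖ - ρ := by linarith
          rw [div_le_iff₀ (by positivity)]
          have : ((1 - ρ) / 2) ^ 2 ≤ (‖z‖ - ρ) ^ 2 := by
            have : 0 < 1 - ρ := by linarith
            gcongr; linarith
          nlinarith [norm_nonneg z]
        have h7 := hpge z hz1 hz.2
        have h8 : (|C| + 1)⁻¹ ≤ 1 := inv_le_one_of_one_le₀ (by linarith [abs_nonneg C])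
        nlinarith
  intro z hz
  refine lt_of_lt_of_le ?_ (hS.le_perron hz)
  have := hpge z (by simpa using hz.1) hz.2
  positivity

end

end PD2sec

section PD3sec

theorem nonpolar_dyn {f : ℂ → ℂ} {K : Set ℂ} (hK : IsCompact K) (hne : K.Nonempty)
    (hK1 : K ⊆ ball 0 1) (hfK : ∀ x ∈ K, f x ∈ K) (hfa : ∀ x ∈ K, AnalyticAt ℂ f x)
    (hfo : ∀ x ∈ K, 𝓝 (f x) ≤ map f (𝓝 x)) (hinv : ∀ x ∈ K, ∀ᶠ w in 𝓝 x, f w ∈ K → w ∈ K)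
    (h2 : ∀ x ∈ K, ∃ y ∈ K, ∃ y' ∈ K, y ≠ y' ∧ f y = x ∧ f y' = x) :
    ∀ z ∈ ball 0 1 \ K, 0 < perron K z := by
  obtain ⟨L, hL⟩ : ∃ L, LipschitzOnWith L f K := by
    apply LocallyLipschitzOn.exists_lipschitzOnWith_of_compact hK
    intro x hx
    have : ContDiffAt ℂ 1 f x := (hfa x hx).contDiffAt
    obtain ⟨C, t, ht, hC⟩ := this.exists_lipschitzOnWith
    exact ⟨C, t, mem_nhdsWithin_of_mem_nhds ht, hC⟩
  obtain ⟨r, hr, hsep⟩ : ∃ r > 0, ∀ x ∈ K, ∃ y ∈ K, ∃ y' ∈ K, f y = x ∧ f y' = x ∧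
      2 * r < ‖y - y'‖ := by
    refine hK.induction_on (p := fun S => ∃ r > 0, ∀ x ∈ S, ∃ y ∈ K, ∃ y' ∈ K, f y = x ∧ f y' = x ∧
      2 * r < ‖y - y'‖) ⟨1, one_pos, by simp⟩ ?_ ?_ ?_
    · rintro s t hst ⟨r, hr, h⟩
      exact ⟨r, hr, fun x hx => h x (hst hx)⟩
    · rintro s t ⟨r, hr, h⟩ ⟨r', hr', h'⟩
      refine ⟨min r r', lt_min hr hr', ?_⟩
      rintro x (hx | hx)
      · obtain ⟨y, hy, y', hy', e1, e2, e3⟩ := h x hx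
        exact ⟨y, hy, y', hy', e1, e2, lt_of_le_of_lt (by linarith [min_le_left r r']) e3⟩
      · obtain ⟨y, hy, y', hy', e1, e2, e3⟩ := h' x hx
        exact ⟨y, hy, y', hy', e1, e2, lt_of_le_of_lt (by linarith [min_le_right r r']) e3⟩
    · intro x hx
      obtain ⟨y, hy, y', hy', hyy, e1, e2⟩ := h2 x hx
      have hpos : 0 < ‖y - y'‖ := norm_pos_iff.2 (sub_ne_zero.2 hyy)
      set r := ‖y - y'‖ / 4 with hrdef
      have hr : 0 < r := by positivity
      have key : ∀ y ∈ K, f y = x → {x' | ∃ w, ‖w - y‖ < r ∧ f w = x' ∧ (x' ∈ K → w ∈ K)} ∈ 𝓝 x := by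
        intro y hy e
        rw [← e]
        refine hfo y hy ?_
        rw [mem_map]
        filter_upwards [hinv y hy, ball_mem_nhds y hr] with w hw hwr
        exact ⟨w, by rwa [mem_ball, dist_eq_norm] at hwr, rfl, hw⟩
      refine ⟨_, inter_mem (mem_nhdsWithin_of_mem_nhds (inter_mem (key y hy e1) (key y' hy' e2)))
        self_mem_nhdsWithin, r, hr, ?_⟩
      rintro x' ⟨⟨⟨w, hw, ew, hwK⟩, ⟨w', hw', ew', hwK'⟩⟩, hx'⟩
      refine ⟨w, hwK hx', w', hwK' hx', ew, ew', ?_⟩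
      have : ‖y - y'‖ ≤ ‖w - y‖ + ‖w - w'‖ + ‖w' - y'‖ := by
        have e : y - y' = -(w - y) + (w - w') + (w' - y') := by ring
        rw [e]
        refine (norm_add_le _ _).trans ?_
        gcongr
        refine (norm_add_le _ _).trans ?_
        rw [norm_neg]
      linarith
  have hsep' : ∀ x, ∃ y y', x ∈ K → y ∈ K ∧ y' ∈ K ∧ f y = x ∧ f y' = x ∧ 2 * r < ‖y - y'‖ := by
    intro x
    by_cases hx : x ∈ K
    · obtain ⟨y, hy, y', hy', h⟩ := hsep x hx
      exact ⟨y, y', fun _ => ⟨hy, hy', h⟩⟩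
    · exact ⟨0, 0, fun h => absurd h hx⟩
  choose y0 y1 hy using hsep'
  refine nonpolar (y0 := y0) (y1 := y1) (f := f) (A := L + 2) (fun x hx => (hy x hx).1)
    (fun x hx => (hy x hx).2.1) hK hne hK1 hr (by
      have : (0 : ℝ) ≤ L := L.2
      linarith) hfK ?_ (fun x hx => (hy x hx).2.2.1)
      (fun x hx => (hy x hx).2.2.2.1) (fun x hx => (hy x hx).2.2.2.2)
  intro x hx y hy
  have := hL.dist_le_mul x hx y hy
  rw [dist_eq_norm, dist_eq_norm] at this
  nlinarith [norm_nonneg (x - y)]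

end PD3sec

section PFsec

structure Core (g χ ψ : ℂ → ℂ) (U' K : Set ℂ) : Prop where
  op : IsOpen U'
  sub : U' ⊆ ball 0 1
  ne : U' ≠ ball 0 1
  holo : DifferentiableOn ℂ g U'
  maps : MapsTo g U' (ball 0 1)
  proper : ProperOn g U' (ball 0 1)
  Kc : IsCompact K
  KU : K ⊆ U'
  inv : U' ∩ g ⁻¹' K = K
  conn : IsPreconnected (ball (0 : ℂ) 1 \ K)
  pos : ∀ z ∈ ball (0 : ℂ) 1 \ K, 0 < perron K z
  chi_d : DifferentiableOn ℂ χ (ball 0 1)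
  chi_m : MapsTo χ (ball 0 1) U'
  psi_c : ContinuousOn ψ U'
  psi_m : MapsTo ψ U' (ball 0 1)
  chi_psi : ∀ z ∈ U', χ (ψ z) = z
  psi_chi : ∀ w ∈ ball (0 : ℂ) 1, ψ (χ w) = w

namespace Core
variable {g χ ψ : ℂ → ℂ} {U' K : Set ℂ} (H : Core g χ ψ U' K)
include H

theorem K1 : K ⊆ ball 0 1 := H.KU.trans H.sub

theorem gmem {z : ℂ} (hz : z ∈ U') (hzK : z ∉ K) : g z ∈ ball (0 : ℂ) 1 \ K :=
  ⟨H.maps hz, fun h => hzK (H.inv ▸ ⟨hz, h⟩)⟩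

theorem gK {z : ℂ} (hz : z ∈ K) : g z ∈ K := by
  rw [← H.inv] at hz; exact hz.2

theorem reE {z : ℂ} (hz : z ∈ ball (0 : ℂ) 1 \ K) : LocRe (perron K) z :=
  perron_locRe H.Kc.isClosed hz

theorem ga {z : ℂ} (hz : z ∈ U') : AnalyticAt ℂ g z := H.holo.analyticAt (H.op.mem_nhds hz)

theorem reEg {z : ℂ} (hz : z ∈ U') (hzK : z ∉ K) : LocRe (fun z => perron K (g z)) z :=
  (H.reE (H.gmem hz hzK)).comp (H.ga hz)

theorem UK_op : IsOpen (U' \ K) := H.op.sdiff H.Kc.isClosed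

open Classical in
theorem pull_contAt {z : ℂ} (hz : z ∈ ball (0 : ℂ) 1 \ K) :
    ContinuousAt (fun z => if z ∈ U' then perron K (g z) else 0) z := by
  by_cases hzU : z ∈ U'
  · refine (H.reEg hzU hz.2).continuousAt.congr ?_
    filter_upwards [H.op.mem_nhds hzU] with w hw
    simp [hw]
  · rw [Metric.continuousAt_iff']
    intro δ hδ
    obtain ⟨r, hr, hrr⟩ := perron_bdry H.Kc H.K1 (δ / 2) (half_pos hδ)
    have hcomp := H.proper (closedBall 0 r) (closedBall_subset_ball hr) (isCompact_closedBall _ _)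
    filter_upwards [hcomp.isClosed.isOpen_compl.mem_nhds (fun h => hzU h.1),
      H.Kc.isClosed.isOpen_compl.mem_nhds hz.2] with w hw hwK
    simp only [hzU, if_false]
    by_cases hwU : w ∈ U'
    · simp only [hwU, if_true, dist_zero_right]
      have hgw := H.gmem hwU hwK
      have : r < ‖g w‖ := by
        by_contra h
        exact hw ⟨hwU, by simpa using h⟩
      have h2 := hrr _ hgw this
      rw [Real.norm_of_nonneg (perron_nonneg hgw)]
      linarith
    · simpa [hwU] using hδ

open Classical in
theorem pull_sClass : SClass K (fun z => if z ∈ U' then perron K (g z) else 0) where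
  cont := fun z hz => (H.pull_contAt hz).continuousWithinAt
  smax := by
    intro z hz
    by_cases hzU : z ∈ U'
    · refine (H.reEg hzU hz.2).sMax.congr ?_
      filter_upwards [H.op.mem_nhds hzU] with w hw
      simp [hw]
    · refine ((LocRe.const 0 z).sMax).of_le ?_ (by simp [hzU])
      filter_upwards [H.Kc.isClosed.isOpen_compl.mem_nhds hz.2] with w hw
      by_cases hwU : w ∈ U'
      · simpa [hwU] using perron_nonneg (H.gmem hwU hw)
      · simp [hwU]
  nonneg := by
    intro z hz
    by_cases hwU : z ∈ U'
    · simpa [hwU] using perron_nonneg (H.gmem hwU hz.2)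
    · simp [hwU]
  le_one := by
    intro z hz
    by_cases hwU : z ∈ U'
    · simpa [hwU] using perron_le_one (H.gmem hwU hz.2)
    · simp [hwU]
  bdry := by
    intro δ hδ
    obtain ⟨r, hr, hrr⟩ := perron_bdry H.Kc H.K1 δ hδ
    have hcomp := H.proper (closedBall 0 r) (closedBall_subset_ball hr) (isCompact_closedBall _ _)
    obtain ⟨ρ, hρ0, hρ1, hρ⟩ := exists_radius hcomp (inter_subset_left.trans H.sub)
    refine ⟨ρ, hρ1, fun z hz hzρ => ?_⟩
    by_cases hwU : z ∈ U'
    · simp only [hwU, if_true]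
      refine hrr _ (H.gmem hwU hz.2) ?_
      by_contra h
      have := hρ ⟨hwU, by simpa using h⟩
      rw [mem_ball_zero_iff] at this
      linarith
    · simpa [hwU] using hδ.le

theorem clopen_dichotomy {Z : Set ℂ} (hZs : Z ⊆ ball 0 1 \ K) (hZo : IsOpen Z)
    (hZc : IsOpen ((ball 0 1 \ K) \ Z)) (hne : Z.Nonempty) : ball 0 1 \ K ⊆ Z := by
  have := H.conn.subset_left_of_subset_union hZo hZc disjoint_sdiff_right
    (by rw [union_sdiff_cancel hZs]) (by
      obtain ⟨z, hz⟩ := hne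
      exact ⟨z, hZs hz, hz⟩)
  exact this

theorem Om_op : IsOpen (ball (0 : ℂ) 1 \ K) := isOpen_ball.sdiff H.Kc.isClosed

theorem strict {z : ℂ} (hz : z ∈ U') (hzK : z ∉ K) : perron K (g z) < perron K z := by
  classical
  have hle : ∀ z ∈ ball (0 : ℂ) 1 \ K, (if z ∈ U' then perron K (g z) else 0) ≤ perron K z :=
    fun z hz => H.pull_sClass.le_perron hz
  have hzO : z ∈ ball (0 : ℂ) 1 \ K := ⟨H.sub hz, hzK⟩
  have h1 := hle z hzO
  simp only [hz, if_true] at h1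
  refine lt_of_le_of_ne h1 fun heq => ?_
  let D : ℂ → ℝ := fun z => (if z ∈ U' then perron K (g z) else 0) - perron K z
  let Z : Set ℂ := {z ∈ ball (0 : ℂ) 1 \ K | D z = 0}
  have hZU : ∀ w ∈ Z, w ∈ U' := by
    rintro w ⟨hw, hD⟩
    by_contra h
    have := H.pos w hw
    simp only [D, h, if_false] at hD
    linarith
  have hDc : ∀ w ∈ ball (0 : ℂ) 1 \ K, ContinuousAt D w := fun w hw =>
    (H.pull_contAt hw).sub (H.reE hw).continuousAt
  have hZo : IsOpen Z := by
    rw [isOpen_iff_mem_nhds]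
    intro w hw
    have hwU := hZU w hw
    have hL : LocRe D w := by
      refine ((H.reEg hwU hw.1.2).sub (H.reE hw.1)).congr ?_
      filter_upwards [H.op.mem_nhds hwU] with v hv
      simp [D, hv]
    have := hL.sMax (fun _ => 0) analyticAt_const (by
      filter_upwards [H.Om_op.mem_nhds hw.1] with v hv
      have e1 := hw.2
      have e2 := hle v hv
      simp only [Complex.zero_re, sub_zero]
      rw [e1]
      simp only [D]; linarith)
    filter_upwards [this, H.Om_op.mem_nhds hw.1] with v hv hvO
    refine ⟨hvO, ?_⟩
    simp only [Complex.zero_re, sub_zero] at hv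
    rw [hv]; exact hw.2
  have hZc : IsOpen ((ball 0 1 \ K) \ Z) := by
    rw [isOpen_iff_mem_nhds]
    rintro w ⟨hw, hwZ⟩
    have : D w ≠ 0 := fun h => hwZ ⟨hw, h⟩
    filter_upwards [(hDc w hw).eventually_ne this, H.Om_op.mem_nhds hw] with v hv hvO
    exact ⟨hvO, fun h => hv h.2⟩
  have hall := H.clopen_dichotomy (Z := Z) (fun w hw => hw.1) hZo hZc
    ⟨z, hzO, by simp [D, hz, heq]⟩
  apply H.ne
  refine H.sub.antisymm fun w hw => ?_
  by_cases hwK : w ∈ K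
  · exact H.KU hwK
  · exact hZU w (hall ⟨hw, hwK⟩)

theorem lt_one {z : ℂ} (hz : z ∈ ball (0 : ℂ) 1 \ K) : perron K z < 1 := by
  refine lt_of_le_of_ne (perron_le_one hz) fun heq => ?_
  let Z : Set ℂ := {z ∈ ball (0 : ℂ) 1 \ K | perron K z = 1}
  have hZo : IsOpen Z := by
    rw [isOpen_iff_mem_nhds]
    intro w hw
    have := (H.reE hw.1).sMax (fun _ => 0) analyticAt_const (by
      filter_upwards [H.Om_op.mem_nhds hw.1] with v hv
      have e1 := hw.2
      simp only [Complex.zero_re, sub_zero]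
      rw [e1]
      exact perron_le_one hv)
    filter_upwards [this, H.Om_op.mem_nhds hw.1] with v hv hvO
    refine ⟨hvO, ?_⟩
    simp only [Complex.zero_re, sub_zero] at hv
    rw [hv]; exact hw.2
  have hZc : IsOpen ((ball 0 1 \ K) \ Z) := by
    rw [isOpen_iff_mem_nhds]
    rintro w ⟨hw, hwZ⟩
    have : perron K w ≠ 1 := fun h => hwZ ⟨hw, h⟩
    filter_upwards [(H.reE hw).continuousAt.eventually_ne this, H.Om_op.mem_nhds hw] with v hv hvO
    exact ⟨hvO, fun h => hv h.2⟩
  have hall := H.clopen_dichotomy (Z := Z) (fun w hw => hw.1) hZo hZc ⟨z, hz, heq⟩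
  obtain ⟨r, hr, hrr⟩ := perron_bdry H.Kc H.K1 (1 / 2) (by norm_num)
  obtain ⟨ρ, hρ0, hρ1, hρ⟩ := exists_radius H.Kc H.K1
  obtain ⟨t, ht, ht1⟩ := exists_between (max_lt hr hρ1)
  have ht0 : 0 < t := hρ0.trans ((le_max_right _ _).trans_lt ht)
  have hn : ‖(t : ℂ)‖ = t := by simp [abs_of_pos ht0]
  have hm : (t : ℂ) ∈ ball (0 : ℂ) 1 \ K := by
    refine ⟨by rw [mem_ball_zero_iff, hn]; exact ht1, fun h => ?_⟩
    have := hρ h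
    rw [mem_ball_zero_iff, hn] at this
    linarith [le_max_right r ρ]
  have h1 := (hall hm).2
  have h2 := hrr _ hm (by rw [hn]; exact (le_max_left _ _).trans_lt ht)
  linarith

theorem lower {r : ℝ} (hr0 : 0 < r) (hr1 : r < 1) (hKr : K ⊆ ball 0 r) :
    ∃ c > 0, c ≤ 1 ∧ ∀ z ∈ ball 0 r \ K, c ≤ perron K z := by
  classical
  have hsph : ∀ z ∈ sphere (0 : ℂ) r, z ∈ ball (0 : ℂ) 1 \ K := by
    intro z hz
    rw [mem_sphere_zero_iff_norm] at hz
    refine ⟨by simp [hz, hr1], fun h => ?_⟩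
    have := hKr h
    simp [hz] at this
  have hc : ContinuousOn (perron K) (sphere (0 : ℂ) r) := fun z hz =>
    (H.reE (hsph z hz)).continuousAt.continuousWithinAt
  obtain ⟨x, hx, hmin⟩ := (isCompact_sphere (0 : ℂ) r).exists_isMinOn
    (NormedSpace.sphere_nonempty.2 hr0.le) hc
  refine ⟨perron K x, H.pos x (hsph x hx), perron_le_one (hsph x hx), fun z hz => ?_⟩
  have hg := (perron_sClass H.Kc H.K1).glue (O := ball 0 r) isOpen_ball hr1
    (fun z hz => (mem_ball_zero_iff.1 hz).le) (q := fun _ => perron K x) continuousOn_const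
    (fun z _ => (LocRe.const _ z).sMax) (fun z _ => perron_le_one (hsph x hx)) (by
      rintro z ⟨hz, _⟩
      exact hmin (frontier_ball_subset_sphere hz))
  have h1 := hg.le_perron (z := z) ⟨ball_subset_ball hr1.le hz.1, hz.2⟩
  simp only [hz.1, if_true] at h1
  exact (le_max_right _ _).trans h1

end Core

end PFsec

section PF2sec

namespace Core
variable {g χ ψ : ℂ → ℂ} {U' K : Set ℂ} (H : Core g χ ψ U' K)
include H

/-- the superlevel domain -/
def dom (K : Set ℂ) (s : ℝ) : Set ℂ := {z ∈ ball (0 : ℂ) 1 | z ∈ K ∨ s < perron K z}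

theorem proper_psi {r : ℝ} (hr : r < 1) :
    ∃ ρ : ℝ, 0 < ρ ∧ ρ < 1 ∧ ∀ w ∈ ball (0 : ℂ) 1, ‖g (χ w)‖ ≤ r → ‖w‖ < ρ := by
  have hcomp := H.proper (closedBall 0 r) (closedBall_subset_ball hr) (isCompact_closedBall _ _)
  have hc2 := hcomp.image_of_continuousOn (H.psi_c.mono inter_subset_left)
  obtain ⟨ρ, h0, h1, h2⟩ := exists_radius hc2 (by
    rintro _ ⟨z, hz, rfl⟩
    exact H.psi_m hz.1)
  refine ⟨ρ, h0, h1, fun w hw hgw => ?_⟩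
  have := h2 ⟨χ w, ⟨H.chi_m hw, by simpa using hgw⟩, H.psi_chi w hw⟩
  simpa using this

omit H in
theorem star_of {E : ℂ → ℝ} {W : Set ℂ} {r s : ℝ}
    (hW1 : ∀ w ∈ W, ‖w‖ < 1) (hb : ball 0 r ⊆ W)
    (hEs : ∀ w ∈ W, r ≤ ‖w‖ → s < E w) (hsE : ∀ w, ‖w‖ < 1 → s < E w → w ∈ W)
    (hst : ∀ (z : ℂ) (t : ℝ), 0 < t → t < 1 → r ≤ t * ‖z‖ → ‖z‖ < 1 → E z < E (t * z))
    (hr : 0 < r) : StarConvex ℝ 0 W := by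
  rw [starConvex_zero_iff]
  intro z hz t ht0 ht1
  have hn : ‖t • z‖ = t * ‖z‖ := by rw [norm_smul, Real.norm_of_nonneg ht0]
  by_cases htr : t * ‖z‖ < r
  · exact hb (by rw [mem_ball_zero_iff, hn]; exact htr)
  push Not at htr
  rcases ht1.eq_or_lt with rfl | ht1
  · simpa using hz
  have ht : 0 < t := by
    rcases ht0.eq_or_lt with rfl | h
    · simp at htr; linarith
    · exact h
  have h1 := hW1 z hz
  have h2 : r ≤ ‖z‖ := htr.trans (by nlinarith [norm_nonneg z])
  have h3 := hEs z hz h2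
  have h4 := hst z t ht ht1 htr h1
  apply hsE
  · rw [hn]; nlinarith [norm_nonneg z]
  · rw [Complex.real_smul]; linarith

theorem main : ∃ V : Set ℂ, IsOpen V ∧ K ⊆ V ∧ V ⊆ ball 0 1 ∧ StarConvex ℝ 0 V ∧ V.Nonempty ∧
    StarConvex ℝ 0 {w ∈ ball (0 : ℂ) 1 | g (χ w) ∈ V} ∧
    {w ∈ ball (0 : ℂ) 1 | g (χ w) ∈ V}.Nonempty ∧
    closure (U' ∩ g ⁻¹' V) ⊆ V ∧ IsCompact (closure (U' ∩ g ⁻¹' V)) ∧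
    closure (U' ∩ g ⁻¹' V) ⊆ U' ∧
    ∀ z, (∀ n : ℕ, g^[n] z ∈ U' ∩ g ⁻¹' V) → z ∈ K := by
  classical
  -- star radius for e
  obtain ⟨ρ, hρ0, hρ1, hρ⟩ := exists_radius H.Kc H.K1
  have hann : ∀ z ∈ annulus ρ, z ∈ ball (0 : ℂ) 1 \ K := by
    rintro z ⟨h1, h2⟩
    refine ⟨by simpa using h2, fun h => ?_⟩
    have := hρ h
    rw [mem_ball_zero_iff] at this; linarith
  obtain ⟨r1, hr1, hr11, hst1⟩ := star_lemma hρ0 hρ1 (fun z hz => H.pos z (hann z hz))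
    (fun z hz => H.reE (hann z hz)) (by
      intro δ hδ
      obtain ⟨r, hr, h⟩ := perron_bdry H.Kc H.K1 δ hδ
      exact ⟨r, hr, fun z hz => h z (hann z hz)⟩)
  -- star radius for e ∘ g ∘ χ
  obtain ⟨ρ', hρ0', hρ1', hρ'⟩ := H.proper_psi hρ1
  have hann' : ∀ z ∈ annulus ρ', z ∈ ball (0 : ℂ) 1 ∧ χ z ∈ U' ∧ χ z ∉ K := by
    rintro z ⟨h1, h2⟩
    have hz : z ∈ ball (0 : ℂ) 1 := by simpa using h2
    refine ⟨hz, H.chi_m hz, fun h => ?_⟩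
    have h3 := hρ (H.gK h)
    rw [mem_ball_zero_iff] at h3
    have := hρ' z hz h3.le
    linarith
  have chia : ∀ z ∈ ball (0 : ℂ) 1, AnalyticAt ℂ χ z := fun z hz =>
    H.chi_d.analyticAt (isOpen_ball.mem_nhds hz)
  obtain ⟨r2, hr2, hr21, hst2⟩ := star_lemma (E := fun z => perron K (g (χ z))) hρ0' hρ1'
    (fun z hz => H.pos _ (H.gmem (hann' z hz).2.1 (hann' z hz).2.2))
    (fun z hz => (H.reEg (hann' z hz).2.1 (hann' z hz).2.2).comp (chia z (hann' z hz).1)) (by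
      intro δ hδ
      obtain ⟨r, hr, h⟩ := perron_bdry H.Kc H.K1 δ hδ
      obtain ⟨r', _, hr', h'⟩ := H.proper_psi hr
      refine ⟨r', hr', fun z hz hzr => h _ (H.gmem (hann' z hz).2.1 (hann' z hz).2.2) ?_⟩
      by_contra hc
      have := h' z (hann' z hz).1 (not_lt.1 hc)
      linarith)
  have hr20 : 0 < r2 := by linarith
  -- compact image of the ball of radius r2
  obtain ⟨r3, hr30, hr31, hr3⟩ : ∃ r3 : ℝ, 0 < r3 ∧ r3 < 1 ∧
      (fun w => g (χ w)) '' closedBall 0 r2 ⊆ ball 0 r3 := by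
    apply exists_radius
    · refine (isCompact_closedBall _ _).image_of_continuousOn ?_
      have hs : closedBall (0 : ℂ) r2 ⊆ ball 0 1 := closedBall_subset_ball hr21
      exact (H.holo.continuousOn).comp (H.chi_d.continuousOn.mono hs)
        (fun w hw => H.chi_m (hs hw))
    · rintro _ ⟨w, hw, rfl⟩
      exact H.maps (H.chi_m (closedBall_subset_ball hr21 hw))
  obtain ⟨r, hrdef⟩ : ∃ r, r = max r1 r3 := ⟨_, rfl⟩
  have hr1r : r1 ≤ r := hrdef ▸ le_max_left _ _
  have hr3r : r3 ≤ r := hrdef ▸ le_max_right _ _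
  have hr0 : 0 < r := by linarith
  have hrlt : r < 1 := hrdef ▸ max_lt hr11 hr31
  have hKr : K ⊆ ball 0 r := hρ.trans (ball_subset_ball (by linarith))
  obtain ⟨c, hc0, hc1, hc⟩ := H.lower hr0 hrlt hKr
  obtain ⟨s, hs0, hsc⟩ : ∃ s, 0 < s ∧ s < c := exists_between hc0
  set V := dom K s with hV
  have hballV : ball 0 r ⊆ V := by
    intro z hz
    refine ⟨ball_subset_ball hrlt.le hz, ?_⟩
    by_cases hzK : z ∈ K
    · exact Or.inl hzK
    · exact Or.inr (hsc.trans_le (hc z ⟨hz, hzK⟩))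
  have hVo : IsOpen V := by
    rw [isOpen_iff_mem_nhds]
    rintro z ⟨hz1, hz⟩
    by_cases hzK : z ∈ K
    · exact mem_of_superset (isOpen_ball.mem_nhds (hKr hzK)) hballV
    · have hs : s < perron K z := hz.resolve_left hzK
      filter_upwards [(H.reE ⟨hz1, hzK⟩).continuousAt.eventually (lt_mem_nhds hs),
        isOpen_ball.mem_nhds hz1] with w hw hw1
      exact ⟨hw1, Or.inr hw⟩
  obtain ⟨rs, hrs, hrs'⟩ := perron_bdry H.Kc H.K1 s hs0
  have hVb : V ⊆ closedBall 0 (max rs ρ) := by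
    rintro z ⟨hz1, hz⟩
    by_cases hzK : z ∈ K
    · have := hρ hzK
      rw [mem_ball_zero_iff] at this
      rw [mem_closedBall_zero_iff]; exact this.le.trans (le_max_right _ _)
    · rw [mem_closedBall_zero_iff]
      by_contra h
      push Not at h
      have := hrs' z ⟨hz1, hzK⟩ ((le_max_left _ _).trans_lt h)
      linarith [hz.resolve_left hzK]
  set V' := U' ∩ g ⁻¹' V with hV'
  have hmax1 : max rs ρ < 1 := max_lt hrs hρ1
  have hcomp := H.proper (closedBall 0 (max rs ρ)) (closedBall_subset_ball hmax1)
    (isCompact_closedBall _ _)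
  have hclV' : closure V' ⊆ U' ∩ g ⁻¹' (closedBall 0 (max rs ρ)) :=
    closure_minimal (fun z hz => ⟨hz.1, hVb hz.2⟩) hcomp.isClosed
  have hV'o : IsOpen V' := by
    have := H.holo.continuousOn.isOpen_inter_preimage H.op hVo
    exact this
  have hKV : K ⊆ V := hKr.trans hballV
  have hKV' : K ⊆ V' := fun z hz => ⟨H.KU hz, hKV (H.gK hz)⟩
  have hV'e : ∀ z ∈ V', z ∉ K → s < perron K (g z) := fun z hz hzK =>
    hz.2.2.resolve_left (fun h => hzK (H.inv ▸ ⟨hz.1, h⟩))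
  have hcle : ∀ z ∈ closure V', z ∉ K → s ≤ perron K (g z) := by
    intro z hz hzK
    have hcont := (H.reEg (hclV' hz).1 hzK).continuousAt
    by_contra h
    push Not at h
    have hev := (hcont.eventually (gt_mem_nhds h)).and
      (H.Kc.isClosed.isOpen_compl.mem_nhds hzK)
    obtain ⟨w, hw, hwV⟩ := mem_closure_iff_nhds.1 hz _ hev
    have := hV'e w hwV hw.2
    linarith [hw.1]
  refine ⟨V, hVo, hKV, fun z hz => hz.1, ?_, ⟨0, hballV (mem_ball_self hr0)⟩, ?_, ⟨0, ?_, ?_⟩, ?_,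
    hcomp.of_isClosed_subset isClosed_closure hclV', fun z hz => (hclV' hz).1, ?_⟩
  · refine star_of (E := perron K) (r := r) (s := s) (fun w hw => by simpa using hw.1) hballV
      (fun w hw hwr => hw.2.resolve_left (fun h => ?_)) (fun w hw hs => ⟨by simpa using hw, Or.inr hs⟩)
      (fun z t h1 h2 h3 h4 => hst1 z t h1 h2 (hr1r.trans h3) h4) hr0
    have := hKr h
    rw [mem_ball_zero_iff] at this; linarith
  · refine star_of (E := fun z => perron K (g (χ z))) (r := r2) (s := s)
      (fun w hw => by simpa using hw.1) (fun w hw => ⟨ball_subset_ball hr21.le hw, ?_⟩)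
      (fun w hw hwr => hw.2.2.resolve_left (fun h => ?_))
      (fun w hw hs => ?_) hst2 hr20
    · exact hballV (ball_subset_ball hr3r (hr3 ⟨w, ball_subset_closedBall hw, rfl⟩))
    · have h3 := hρ h
      rw [mem_ball_zero_iff] at h3
      have := hρ' w hw.1 h3.le
      linarith
    · have hw1 : w ∈ ball (0 : ℂ) 1 := by simpa using hw
      exact ⟨hw1, H.maps (H.chi_m hw1), Or.inr hs⟩
  · exact mem_ball_self one_pos
  · exact hballV (ball_subset_ball hr3r (hr3 ⟨0, mem_closedBall_self hr20.le, rfl⟩))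
  · intro z hz
    have hzU := (hclV' hz).1
    by_cases hzK : z ∈ K
    · exact hKV hzK
    · exact ⟨H.sub hzU, Or.inr ((hcle z hz hzK).trans_lt (H.strict hzU hzK))⟩
  · -- escape
    have hF : ∀ z ∈ frontier V', z ∈ U' ∧ z ∉ K ∧ perron K (g z) = s := by
      intro z hz
      have hzcl := frontier_subset_closure hz
      have hzV : z ∉ V' := by
        rw [hV'o.frontier_eq] at hz; exact hz.2
      have hzU := (hclV' hzcl).1
      have hzK : z ∉ K := fun h => hzV (hKV' h)
      refine ⟨hzU, hzK, le_antisymm ?_ (hcle z hzcl hzK)⟩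
      by_contra h
      push Not at h
      exact hzV ⟨hzU, H.maps hzU, Or.inr h⟩
    have hs1 : s < 1 := by linarith
    obtain ⟨m, hsm, hm1, hm⟩ : ∃ m, s < m ∧ m < 1 ∧ ∀ z ∈ frontier V', m ≤ perron K z := by
      have hFc : IsCompact (frontier V') := hcomp.of_isClosed_subset isClosed_frontier
        (frontier_subset_closure.trans hclV')
      rcases (frontier V').eq_empty_or_nonempty with he | hne
      · obtain ⟨m, h1, h2⟩ := exists_between hs1
        exact ⟨m, h1, h2, by simp [he]⟩
      · have hFO : ∀ z ∈ frontier V', z ∈ ball (0 : ℂ) 1 \ K := fun z hz =>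
          ⟨H.sub (hF z hz).1, (hF z hz).2.1⟩
        obtain ⟨x, hx, hmin⟩ := hFc.exists_isMinOn hne (f := perron K)
          (fun z hz => (H.reE (hFO z hz)).continuousAt.continuousWithinAt)
        refine ⟨perron K x, ?_, H.lt_one (hFO x hx), fun z hz => hmin hz⟩
        rw [← (hF x hx).2.2]
        exact H.strict (hF x hx).1 (hF x hx).2.1
    obtain ⟨lam, hlam⟩ : ∃ l, l = (1 - s) / (1 - m) := ⟨_, rfl⟩
    have hlam1 : 1 < lam := by
      rw [hlam, one_lt_div (by linarith)]; linarith
    have hlm : lam * (1 - m) = 1 - s := by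
      rw [hlam]; field_simp [show 1 - m ≠ 0 by linarith]
    let q : ℂ → ℝ := fun z => lam⁻¹ * perron K (g z) + (1 - lam⁻¹)
    have hqre : ∀ z ∈ U', z ∉ K → LocRe q z := fun z hz hzK =>
      ((H.reEg hz hzK).const_mul _).add (LocRe.const _ _)
    have hli : lam⁻¹ * lam = 1 := by field_simp
    have hli0 : 0 < lam⁻¹ := by positivity
    obtain ⟨R, hR0, hR1, hR⟩ := exists_radius hcomp (inter_subset_left.trans H.sub)
    have hg := (perron_sClass H.Kc H.K1).glue (O := V') hV'o hR1
      (fun z hz => (mem_ball_zero_iff.1 (hR (hclV' (subset_closure hz)))).le) (q := q)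
      (fun z hz => (hqre z (hclV' hz.1).1 hz.2).continuousAt.continuousWithinAt)
      (fun z hz => (hqre z hz.1.1 hz.2).sMax) (by
        intro z hz
        have := perron_le_one (H.gmem hz.1.1 hz.2)
        simp only [q]
        nlinarith) (by
        rintro z ⟨hz, _⟩
        have h1 := hm z hz
        simp only [q]
        rw [(hF z hz).2.2]
        have : lam⁻¹ * (1 - s) = 1 - m := by rw [← hlm, ← mul_assoc, hli, one_mul]
        nlinarith)
    have hexp : ∀ z ∈ V', z ∉ K → lam * (1 - perron K z) ≤ 1 - perron K (g z) := by
      intro z hz hzK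
      have h1 := hg.le_perron (z := z) ⟨H.sub hz.1, hzK⟩
      simp only [hz, if_true] at h1
      have h2 := (le_max_right _ _).trans h1
      simp only [q] at h2
      have h3 := mul_le_mul_of_nonneg_left h2 (show 0 ≤ lam by linarith)
      have : lam * (lam⁻¹ * perron K (g z) + (1 - lam⁻¹)) = perron K (g z) + lam - 1 := by
        have : lam ≠ 0 := by linarith
        field_simp; ring
      rw [this] at h3
      linarith
    intro z hz
    by_contra hzK
    have hnK : ∀ n : ℕ, g^[n] z ∉ K := by
      intro n
      induction n with
      | zero => exact hzK
      | succ n ih =>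
        rw [iterate_succ_apply']
        exact (H.gmem (hz n).1 ih).2
    have hgrow : ∀ n : ℕ, lam ^ n * (1 - perron K z) ≤ 1 - perron K (g^[n] z) := by
      intro n
      induction n with
      | zero => simp
      | succ n ih =>
        rw [iterate_succ_apply', pow_succ]
        refine le_trans ?_ (hexp _ (hz n) (hnK n))
        nlinarith
    have h0 : 0 < 1 - perron K z := by
      have := H.lt_one (z := z) ⟨H.sub (hz 0).1, hzK⟩
      linarith
    obtain ⟨n, hn⟩ := pow_unbounded_of_one_lt ((1 - perron K z)⁻¹) hlam1
    have h1 := hgrow n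
    have h2 := perron_nonneg (K := K) (z := g^[n] z) ⟨H.sub (hz n).1, hnK n⟩
    have h3 : 1 < lam ^ n * (1 - perron K z) := by
      rw [inv_lt_iff_one_lt_mul₀ h0] at hn; linarith
    linarith

end Core

end PF2sec

section PBsec

open Complex Pointwise in
/-- Proof of the Riemann Mapping Theorem, step 1.

If `U` is an open simply connected subset of `ℂ` that is not the whole `ℂ`,
then there exists a function `f : ℂ → ℂ` such that

- `f` is injective;
- the image `f '' U` isn't dense in `ℂ`;
- `f` is complex differentiable on `U` with nonzero derivative.

E.g., one can choose `a ∉ U`, then take `f z` to be the square root of `z - a`.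
-/
theorem rmt_step_one {U : Set ℂ} (hUo : IsOpen U)
    (hUc : IsSimplyConnected U) (hU : U ≠ univ) :
    ∃ f : ℂ → ℂ, Injective f ∧ ¬Dense (f '' U) ∧ ∀ z ∈ U, deriv f z ≠ 0 := by
  -- WLOG, `0 ∉ U`, otherwise we choose `a ∉ U` and replace `U` with `-a +ᵥ U`
  wlog hU₀ : 0 ∉ U
  · rw [ne_univ_iff_exists_notMem] at hU
    rcases hU with ⟨a, ha⟩
    specialize this (hUo.vadd (-a)) (by simpa) (by simp [hU])
      (by simpa [mem_vadd_set_iff_neg_vadd_mem])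
    rcases this with ⟨f, hf_inj, hf_dense, hdf⟩
    refine ⟨f ∘ (-a + ·), hf_inj.comp (add_right_injective (-a)), ?_, fun z hz ↦ ?_⟩
    · simpa only [← image_vadd, Set.image_image] using! hf_dense
    · simpa [Function.comp_def, deriv_comp_const_add] using hdf (-a + z) (mapsTo_image _ _ hz)
  -- Choose a continuous branch of `√z` on `U`.
  -- This is the function we're looking for.
  rcases exists_continuousOn_pow_eq hUc hUo continuousOn_id (by rwa [image_id]) two_ne_zero
    with ⟨f, hfc, hf_inv⟩
  replace hf_inv : LeftInverse (· ^ 2) f := hf_inv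
  -- Then `0 ∉ f '' U`
  have hf₀ : ∀ z ∈ U, f z ≠ 0 := by
    intro z hz hfz
    simpa [hfz, (ne_of_mem_of_not_mem hz hU₀).symm] using hf_inv z
  -- Note that `f` is strictly differentiable at every point of `U`
  -- with derivative `1 / (2 * f z)`.
  have hdf : ∀ z ∈ U, HasStrictDerivAt f (2 * f z)⁻¹ z := by
    intro z hz
    apply HasStrictDerivAt.of_local_left_inverse
    · exact hfc.continuousAt <| hUo.mem_nhds hz
    · simpa using hasStrictDerivAt_pow 2 (f z)
    · simpa using hf₀ z hz
    · exact .of_forall hf_inv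
  refine ⟨f, hf_inv.injective, ?_, fun z hz ↦ ?_⟩
  · -- Take a point `x ∈ U`.
    simp only [Dense, not_forall, mem_closure_iff_frequently, not_frequently]
    rcases hUc.nonempty with ⟨x, hx⟩
    -- Show that `-f x` has a neighborhood disjoint with `f '' U`.
    use -f x
    -- Since `f` is strictly differentiable at `x` with nonzero derivative,
    -- `f '' U` is a neighborhood of `f x`.
    have : f '' U ∈ 𝓝 (f x) := by
      rw [← (hdf x hx).map_nhds_eq (by simpa using hf₀ x hx)]
      exact Filter.image_mem_map <| hUo.mem_nhds hx
    -- Then `-f '' U` is a neighborhood of `-f x`.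
    rw [nhds_neg, eventually_neg]
    -- This neighborhood has to be disjoint with `f '' U`,
    -- because `f a = - f b` implies `a = (f a) ^ 2 = (- f b) ^ 2 = b`, hence `f a = f b = 0`,
    -- which is impossible.
    filter_upwards [this]
    rintro _ ⟨a, ha, rfl⟩ ⟨b, hb, hab⟩
    obtain rfl : a = b := by
      rw [← hf_inv b, hab]
      simp [hf_inv a]
    refine hf₀ a ha ?_
    linear_combination hab / 2
  · simpa [(hdf z hz).hasDerivAt.deriv] using hf₀ z hz

open Complex in
/-- Proof of the Riemann Mapping Theorem, step 2.

If `U` is an open simply connected subset of `ℂ` which is not the whole field,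
then there exists a map `f : ℂ → ℂ` such that

- `f` maps `U` to the unit disk;
- `f` is injective on `U`;
- `f` is differentiable on `U` with nonzero derivative.

Once the proof of the Riemann Mapping Theorem gets merged into Mathlib,
this lemma will be made private.
-/
theorem rmt_step_two {U : Set ℂ} (hUo : IsOpen U)
    (hUc : IsSimplyConnected U) (hU : U ≠ univ) :
    ∃ f : ℂ → ℂ, MapsTo f U (ball 0 1) ∧ InjOn f U ∧ ∀ z ∈ U, deriv f z ≠ 0 := by
  -- Take a continuous branch of the square root on `U`.
  -- It is injective, differentiable function on `U`, and `f '' U` isn't dense in `ℂ`.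
  rcases rmt_step_one hUo hUc hU with ⟨f, hf_inj, hfd, hdf⟩
  -- Choose a closed ball `Metric.closedBall x ε`, `ε > 0`, that is disjoint with `f '' U`.
  obtain ⟨x, ε, hε₀, hε⟩ : ∃ (x : ℂ) (ε : ℝ), 0 < ε ∧ ∀ a ∈ U, ε < dist (f a) x := by
    simpa [Dense, mem_closure_iff_nhds_basis Metric.nhds_basis_closedBall] using hfd
  have hfx : ∀ z ∈ U, f z ≠ x := fun z hz ↦ by simpa using hε₀.trans (hε z hz)
  -- Then `z ↦ ε / (f z - x)` satisfies all the assertions.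
  use fun z ↦ ε / (f z - x)
  refine ⟨?mapsTo, ?injOn, ?deriv⟩
  case mapsTo =>
    intro z hz
    rw [mem_ball_zero_iff, norm_div, norm_real, Real.norm_of_nonneg hε₀.le, div_lt_one₀]
    · simpa [dist_eq_norm] using hε z hz
    · simpa [sub_eq_zero] using hfx z hz
  case injOn =>
    intro z hz w hw heq
    simpa [div_eq_mul_inv, hε₀.ne', hf_inj.eq_iff] using heq
  case deriv =>
    intro z hz
    have hdz : DifferentiableAt ℂ f z := differentiableAt_of_deriv_ne_zero (hdf z hz)
    rw [(hasDerivAt_const _ _).fun_div (hdz.hasDerivAt.sub_const _) _ |>.deriv] <;>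
      simp [*, ne_of_gt, sub_eq_zero]


theorem hurwitz_local {ι : Type*} {l : Filter ι} {O : Set ℂ} (hO : IsOpen O) {F : ι → ℂ → ℂ} {G : ℂ → ℂ}
    (hF : ∀ i, DifferentiableOn ℂ (F i) O) (hG : DifferentiableOn ℂ G O)
    (hFG : TendstoLocallyUniformlyOn F G l O) {c : ℂ} (hc : c ∈ O) (hGc : G c = 0)
    (hne : ¬ ∀ᶠ z in 𝓝 c, G z = 0) : ∀ᶠ i in l, ∃ z ∈ O, F i z = 0 := by
  have hGa : AnalyticAt ℂ G c := hG.analyticAt (hO.mem_nhds hc)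
  have hiso := hGa.eventually_eq_zero_or_eventually_ne_zero.resolve_left hne
  rw [eventually_nhdsWithin_iff] at hiso
  obtain ⟨r, hr, hball⟩ := Metric.nhds_basis_closedBall.eventually_iff.1
    (hiso.and (hO.mem_nhds hc))
  have hsub : closedBall c r ⊆ O := fun z hz => (hball hz).2
  have hsph : ∀ z ∈ sphere c r, G z ≠ 0 := fun z hz =>
    (hball (sphere_subset_closedBall hz)).1 (fun h => by
      rw [mem_singleton_iff] at h
      rw [h, mem_sphere, dist_self] at hz
      linarith)
  obtain ⟨x, hx, hmin⟩ := (isCompact_sphere c r).exists_isMinOn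
    (NormedSpace.sphere_nonempty.2 hr.le) (f := fun z => ‖G z‖)
    ((hG.continuousOn.mono (sphere_subset_closedBall.trans hsub)).norm)
  have hm : 0 < ‖G x‖ := norm_pos_iff.2 (hsph x hx)
  have hu := (tendstoLocallyUniformlyOn_iff_forall_isCompact hO).1 hFG (closedBall c r) hsub
    (isCompact_closedBall c r)
  rw [Metric.tendstoUniformlyOn_iff] at hu
  filter_upwards [hu (‖G x‖ / 2) (half_pos hm)] with i hi
  by_contra hcon
  push Not at hcon
  have hd : DiffContOnCl ℂ (fun z => (F i z)⁻¹) (ball c r) := by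
    apply DifferentiableOn.diffContOnCl
    rw [closure_ball c hr.ne']
    exact ((hF i).mono hsub).inv (fun z hz => hcon z (hsub hz))
  have h1 := Complex.norm_le_of_forall_mem_frontier_norm_le isBounded_ball hd
    (C := (‖G x‖ / 2)⁻¹) (by
      intro z hz
      have hz := frontier_ball_subset_sphere hz
      have h2 := hi z (sphere_subset_closedBall hz)
      have h3 : ‖G x‖ ≤ ‖G z‖ := hmin hz
      rw [dist_eq_norm] at h2
      have h4 := norm_sub_norm_le (G z) (F i z)
      rw [norm_inv]
      apply inv_anti₀ (by positivity)
      linarith) (subset_closure (mem_ball_self hr))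
  have h2 := hi c (mem_closedBall_self hr.le)
  rw [hGc, dist_zero_left] at h2
  rw [norm_inv] at h1
  have h3 : 0 < ‖F i c‖ := norm_pos_iff.2 (hcon c hc)
  have := (inv_le_inv₀ h3 (by positivity)).1 h1
  linarith

/-- disk automorphism -/
def mob (w z : ℂ) : ℂ := (z - w) / (1 - (starRingEnd ℂ) w * z)

theorem mob_den {w z : ℂ} (hw : ‖w‖ < 1) (hz : ‖z‖ < 1) : 1 - (starRingEnd ℂ) w * z ≠ 0 := by
  intro h
  have h1 : (starRingEnd ℂ) w * z = 1 := (sub_eq_zero.1 h).symm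
  have h2 := congrArg norm h1
  rw [norm_mul, RCLike.norm_conj, norm_one] at h2
  nlinarith [norm_nonneg z, norm_nonneg w]

theorem mob_lt {w z : ℂ} (hw : ‖w‖ < 1) (hz : ‖z‖ < 1) : ‖mob w z‖ < 1 := by
  have h0 := norm_pos_iff.2 (mob_den hw hz)
  rw [mob, norm_div, div_lt_one h0]
  have h1 : ‖1 - (starRingEnd ℂ) w * z‖ ^ 2 - ‖z - w‖ ^ 2 = (1 - ‖z‖ ^ 2) * (1 - ‖w‖ ^ 2) := by
    simp only [← Complex.normSq_eq_norm_sq, Complex.normSq_apply]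
    simp
    ring
  have h2 : 0 < (1 - ‖z‖ ^ 2) * (1 - ‖w‖ ^ 2) :=
    mul_pos (by nlinarith [norm_nonneg z]) (by nlinarith [norm_nonneg w])
  exact lt_of_pow_lt_pow_left₀ 2 h0.le (by linarith)

theorem mob_hasDeriv {w z : ℂ} (hw : ‖w‖ < 1) (hz : ‖z‖ < 1) :
    HasDerivAt (mob w) ((1 - (‖w‖ : ℂ) ^ 2) / (1 - (starRingEnd ℂ) w * z) ^ 2) z := by
  have h0 := mob_den hw hz
  have h1 : HasDerivAt (fun z => z - w) 1 z := (hasDerivAt_id z).sub_const w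
  have h2 : HasDerivAt (fun z => 1 - (starRingEnd ℂ) w * z) (-((starRingEnd ℂ) w)) z := by
    simpa using ((hasDerivAt_id z).const_mul ((starRingEnd ℂ) w)).const_sub 1
  refine (h1.div h2 h0).congr_deriv ?_
  congr 1
  rw [← Complex.conj_mul']
  ring

theorem mob_mob {w z : ℂ} (hw : ‖w‖ < 1) (hz : ‖z‖ < 1) : mob (-w) (mob w z) = z := by
  have h0 := mob_den hw hz
  have h1 := mob_den hw hw
  simp only [mob, map_neg]
  generalize (starRingEnd ℂ) w = v at *
  have e1 : (z - w) / (1 - v * z) - -w = z * ((1 - v * w) / (1 - v * z)) := by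
    rw [← mul_div_assoc, eq_div_iff h0, sub_mul, div_mul_cancel₀ _ h0]; ring
  have e2 : 1 - -v * ((z - w) / (1 - v * z)) = (1 - v * w) / (1 - v * z) := by
    rw [eq_div_iff h0, sub_mul, mul_assoc, div_mul_cancel₀ _ h0]; ring
  rw [e1, e2]
  exact mul_div_cancel_right₀ _ (div_ne_zero h1 h0)

theorem mob_inj {w : ℂ} (hw : ‖w‖ < 1) {z z' : ℂ} (hz : ‖z‖ < 1) (hz' : ‖z'‖ < 1)
    (h : mob w z = mob w z') : z = z' := by
  rw [← mob_mob hw hz, h, mob_mob hw hz']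

theorem mob_self (w : ℂ) : mob w w = 0 := by simp [mob]

theorem mob_deriv_ne {w z : ℂ} (hw : ‖w‖ < 1) (hz : ‖z‖ < 1) : deriv (mob w) z ≠ 0 := by
  rw [(mob_hasDeriv hw hz).deriv]
  refine div_ne_zero ?_ (pow_ne_zero _ (mob_den hw hz))
  intro h
  have : (1 - ‖w‖ ^ 2 : ℝ) = 0 := by exact_mod_cast h
  nlinarith [norm_nonneg w]

theorem sqrt_hasDeriv {s h : ℂ → ℂ} {x : ℂ} {h' : ℂ} (hs : ContinuousAt s x) (hsq : ∀ y, s y ^ 2 = h y)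
    (hh : HasDerivAt h h' x) (h0 : s x ≠ 0) : HasDerivAt s (h' / (s x + s x)) x := by
  rw [hasDerivAt_iff_tendsto_slope] at hh ⊢
  have h2 : s x + s x ≠ 0 := by
    rw [← two_mul]; exact mul_ne_zero two_ne_zero h0
  have hsum : Tendsto (fun y => s y + s x) (𝓝[≠] x) (𝓝 (s x + s x)) :=
    (hs.tendsto.mono_left nhdsWithin_le_nhds).add_const _
  refine (hh.div hsum h2).congr' ?_
  filter_upwards [hsum.eventually_ne h2] with y hy
  change slope h x y / (s y + s x) = slope s x y
  simp only [slope, vsub_eq_sub, smul_eq_mul, ← hsq]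
  rw [div_eq_iff hy]; ring

structure RFam (U : Set ℂ) (a : ℂ) (f : ℂ → ℂ) : Prop where
  maps : ∀ z ∈ U, ‖f z‖ < 1
  inj : InjOn f U
  dn : ∀ z ∈ U, deriv f z ≠ 0
  zero : f a = 0

theorem RFam.diff {U : Set ℂ} {a : ℂ} {f : ℂ → ℂ} (h : RFam U a f) : DifferentiableOn ℂ f U :=
  fun z hz => (differentiableAt_of_deriv_ne_zero (h.dn z hz)).differentiableWithinAt

theorem RFam.mob {U : Set ℂ} {a : ℂ} (ha : a ∈ U) {f : ℂ → ℂ} (maps : ∀ z ∈ U, ‖f z‖ < 1)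
    (inj : InjOn f U) (dn : ∀ z ∈ U, deriv f z ≠ 0) : RFam U a (fun z => mob (f a) (f z)) where
  maps := fun z hz => mob_lt (maps a ha) (maps z hz)
  inj := fun z hz w hw h => inj hz hw (mob_inj (maps a ha) (maps z hz) (maps w hw) h)
  dn := fun z hz => by
    have h1 := (differentiableAt_of_deriv_ne_zero (dn z hz)).hasDerivAt
    have h2 := (mob_hasDeriv (maps a ha) (maps z hz)).comp z h1
    have h3 := mob_deriv_ne (maps a ha) (maps z hz)
    rw [(mob_hasDeriv (maps a ha) (maps z hz)).deriv] at h3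
    rw [show (fun z => _root_.mob (f a) (f z)) = _root_.mob (f a) ∘ f from rfl, h2.deriv]
    exact mul_ne_zero h3 (dn z hz)
  zero := mob_self _

theorem koebe_step {U : Set ℂ} (hUo : IsOpen U) (hUc : IsSimplyConnected U) {a : ℂ} (ha : a ∈ U)
    {f : ℂ → ℂ} (hf : RFam U a f) {w : ℂ} (hw : ‖w‖ < 1) (hwf : w ∉ f '' U) :
    ∃ F, RFam U a F ∧ ‖deriv f a‖ < ‖deriv F a‖ := by
  let h : ℂ → ℂ := fun z => mob w (f z)
  have hh1 : ∀ z ∈ U, ‖h z‖ < 1 := fun z hz => mob_lt hw (hf.maps z hz)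
  have hh0 : ∀ z ∈ U, h z ≠ 0 := by
    intro z hz h0
    rcases div_eq_zero_iff.1 h0 with h1 | h1
    · exact hwf ⟨z, hz, sub_eq_zero.1 h1⟩
    · exact mob_den hw (hf.maps z hz) h1
  have hhd : ∀ z ∈ U, HasDerivAt h ((1 - (‖w‖ : ℂ) ^ 2) / (1 - (starRingEnd ℂ) w * f z) ^ 2 * deriv f z) z :=
    fun z hz => (mob_hasDeriv hw (hf.maps z hz)).comp z
      (differentiableAt_of_deriv_ne_zero (hf.dn z hz)).hasDerivAt
  have hhn : ∀ z ∈ U, (1 - (‖w‖ : ℂ) ^ 2) / (1 - (starRingEnd ℂ) w * f z) ^ 2 * deriv f z ≠ 0 := by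
    intro z hz
    have h3 := mob_deriv_ne hw (hf.maps z hz)
    rw [(mob_hasDeriv hw (hf.maps z hz)).deriv] at h3
    exact mul_ne_zero h3 (hf.dn z hz)
  obtain ⟨s, hsc, hsq⟩ := Complex.exists_continuousOn_pow_eq hUc hUo (g := h)
    (fun z hz => (hhd z hz).continuousAt.continuousWithinAt)
    (by rintro ⟨z, hz, h0⟩; exact hh0 z hz h0) two_ne_zero
  have hs0 : ∀ z ∈ U, s z ≠ 0 := fun z hz h0 => hh0 z hz (by rw [← hsq, h0]; simp)
  have hs1 : ∀ z ∈ U, ‖s z‖ < 1 := by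
    intro z hz
    have := hh1 z hz
    rw [← hsq, norm_pow] at this
    by_contra hc
    push Not at hc
    nlinarith
  have hsd : ∀ z ∈ U, HasDerivAt s _ z := fun z hz =>
    sqrt_hasDeriv (hsc.continuousAt (hUo.mem_nhds hz)) hsq (hhd z hz) (hs0 z hz)
  have hsinj : InjOn s U := by
    intro z hz z' hz' he
    have : h z = h z' := by rw [← hsq, ← hsq, he]
    exact hf.inj hz hz' (mob_inj hw (hf.maps z hz) (hf.maps z' hz') this)
  have hsn : ∀ z ∈ U, deriv s z ≠ 0 := by
    intro z hz
    rw [(hsd z hz).deriv]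
    refine div_ne_zero (hhn z hz) ?_
    rw [← two_mul]; exact mul_ne_zero two_ne_zero (hs0 z hz)
  refine ⟨_, RFam.mob ha hs1 hsinj hsn, ?_⟩
  have hD := (mob_hasDeriv (hs1 a ha) (hs1 a ha)).comp a (hsd a ha)
  rw [show (fun z => mob (s a) (s z)) = mob (s a) ∘ s from rfl, hD.deriv]
  rw [hf.zero]
  obtain ⟨b, hb⟩ : ∃ b, b = ‖s a‖ := ⟨_, rfl⟩
  have hb0 : 0 < b := hb ▸ norm_pos_iff.2 (hs0 a ha)
  have hb1 : b < 1 := hb ▸ hs1 a ha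
  have hbw : ‖w‖ = b ^ 2 := by
    rw [hb, ← norm_pow, hsq]
    simp [h, mob, hf.zero]
  have hn1 : ‖(1 - (b : ℂ) ^ 2)‖ = 1 - b ^ 2 := by
    have : (1 - (b : ℂ) ^ 2) = ((1 - b ^ 2 : ℝ) : ℂ) := by push_cast; rfl
    rw [this, Complex.norm_real, Real.norm_of_nonneg (by nlinarith)]
  have hn2 : ‖(1 - ((b ^ 2 : ℝ) : ℂ) ^ 2)‖ = 1 - b ^ 4 := by
    have : (1 - ((b ^ 2 : ℝ) : ℂ) ^ 2) = ((1 - b ^ 4 : ℝ) : ℂ) := by push_cast; ring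
    rw [this, Complex.norm_real, Real.norm_of_nonneg]
    have : b ^ 4 ≤ 1 := pow_le_one₀ hb0.le hb1.le
    linarith
  rw [Complex.conj_mul', ← hb, hbw]
  simp only [norm_mul, norm_div, norm_pow, mul_zero, sub_zero, hn1, hn2, norm_one, ← two_mul, ← hb]
  have hp : 0 < ‖deriv f a‖ := norm_pos_iff.2 (hf.dn a ha)
  have hb2 : 0 < 1 - b ^ 2 := by nlinarith
  have e : (1 - b ^ 2) / (1 - b ^ 2) ^ 2 * ((1 - b ^ 4) / 1 ^ 2 * ‖deriv f a‖ / (‖(2 : ℂ)‖ * b))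
      = (1 + b ^ 2) / (2 * b) * ‖deriv f a‖ := by
    rw [show ‖(2 : ℂ)‖ = 2 by simp]
    field_simp
    ring
  rw [e]
  have : 1 < (1 + b ^ 2) / (2 * b) := by
    rw [one_lt_div (by positivity)]
    nlinarith [sq_nonneg (1 - b), mul_pos (sub_pos.2 hb1) (sub_pos.2 hb1)]
  nlinarith

end PBsec

section PB2sec

theorem RFam.exists_max {U : Set ℂ} (hUo : IsOpen U) (hUc : IsSimplyConnected U) (hUp : IsPreconnected U)
    (hU : U ≠ univ) {a : ℂ} (ha : a ∈ U) :
    ∃ G, RFam U a G ∧ ∀ f, RFam U a f → ‖deriv f a‖ ≤ ‖deriv G a‖ := by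
  obtain ⟨f0, hf1, hf2, hf3⟩ := rmt_step_two hUo hUc hU
  have hR0 := RFam.mob ha (fun z hz => by simpa using hf1 hz) hf2 hf3
  obtain ⟨f₀, hf₀⟩ : ∃ f₀, RFam U a f₀ := ⟨_, hR0⟩
  let S : Set ℝ := {t | ∃ f, RFam U a f ∧ ‖deriv f a‖ = t}
  have hSne : S.Nonempty := ⟨_, f₀, hf₀, rfl⟩
  obtain ⟨r, hr, hball⟩ := Metric.nhds_basis_closedBall.mem_iff.1 (hUo.mem_nhds ha)
  have hSb : BddAbove S := by
    refine ⟨1 / r, ?_⟩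
    rintro t ⟨f, hf, rfl⟩
    refine Complex.norm_deriv_le_of_forall_mem_sphere_norm_le hr ?_ ?_
    · apply DifferentiableOn.diffContOnCl
      exact hf.diff.mono ((closure_ball_subset_closedBall).trans hball)
    · intro z hz
      exact (hf.maps z (hball (sphere_subset_closedBall hz))).le
  obtain ⟨u, -, hu2, hu3⟩ := exists_seq_tendsto_sSup hSne hSb
  choose F hF hFu using hu3
  obtain ⟨G, hG, hFG⟩ := ultra_montel (hyperfilter ℕ) hUo (fun i => (hF i).diff)
    (fun z hz => ⟨1, one_pos, 1, fun i w _ hw => ((hF i).maps w hw).le⟩)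
  have hlim : ∀ z ∈ U, Tendsto (fun n => F n z) (hyperfilter ℕ) (𝓝 (G z)) := fun z hz =>
    hFG.tendsto_at hz
  have hFG' : TendstoLocallyUniformlyOn (deriv ∘ F) (deriv G) (hyperfilter ℕ) U :=
    hFG.deriv (Eventually.of_forall fun i => (hF i).diff) hUo
  have hda : ‖deriv G a‖ = sSup S := by
    have h1 : Tendsto (fun n => ‖deriv (F n) a‖) (hyperfilter ℕ) (𝓝 ‖deriv G a‖) :=
      (hFG'.tendsto_at ha).norm
    refine tendsto_nhds_unique h1 ?_
    simp only [hFu]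
    refine hu2.mono_left ?_
    rw [← Nat.cofinite_eq_atTop]
    exact hyperfilter_le_cofinite
  have hsup : 0 < sSup S := lt_of_lt_of_le (norm_pos_iff.2 (hf₀.dn a ha)) (le_csSup hSb ⟨_, hf₀, rfl⟩)
  have hGan : AnalyticOnNhd ℂ G U := hG.analyticOnNhd hUo
  have hnc : ∀ c ∈ U, ∀ w, ¬ ∀ᶠ z in 𝓝 c, G z = w := by
    intro c hc w hcw
    have h1 := hGan.eqOn_of_preconnected_of_eventuallyEq (analyticOnNhd_const (v := w)) hUp hc hcw
    have h2 : G =ᶠ[𝓝 a] fun _ => w := by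
      filter_upwards [hUo.mem_nhds ha] with z hz using h1 hz
    rw [h2.deriv_eq] at hda
    simp at hda
    linarith
  have hle : ∀ z ∈ U, ‖G z‖ ≤ 1 := fun z hz =>
    le_of_tendsto (hlim z hz).norm (Eventually.of_forall fun i => ((hF i).maps z hz).le)
  refine ⟨G, ⟨?_, ?_, ?_, ?_⟩, ?_⟩
  · have hop : IsOpen (G '' U) := by
      rcases hGan.is_constant_or_isOpen hUp with ⟨w, hw⟩ | h
      · exfalso
        exact hnc a ha w (by filter_upwards [hUo.mem_nhds ha] with z hz using hw z hz)
      · exact h U Subset.rfl hUo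
    have hsub : G '' U ⊆ ball 0 1 := by
      rw [← interior_closedBall (0 : ℂ) one_ne_zero]
      refine interior_maximal ?_ hop
      rintro _ ⟨z, hz, rfl⟩
      simpa using hle z hz
    intro z hz
    simpa using hsub ⟨z, hz, rfl⟩
  · intro z1 h1 z2 h2 he
    by_contra hne
    obtain ⟨ε, hε, hb⟩ := Metric.isOpen_iff.1 (hUo.sdiff (isClosed_singleton (x := z1))) z2
      ⟨h2, fun h => hne h.symm⟩
    have hb' : ball z2 ε ⊆ U := fun z hz => (hb hz).1
    have := hurwitz_local (l := (hyperfilter ℕ : Filter ℕ)) (O := ball z2 ε) isOpen_ball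
      (F := fun n z => F n z - F n z1) (G := fun z => G z - G z1)
      (fun i => ((hF i).diff.mono hb').sub_const _) ((hG.mono hb').sub_const _) ?_
      (mem_ball_self hε) (by simp [he]) ?_
    · obtain ⟨i, z, hz, h0⟩ := this.exists
      exact (hb hz).2 ((hF i).inj (hb' hz) h1 (sub_eq_zero.1 h0))
    · have hc : TendstoLocallyUniformlyOn (fun n (_ : ℂ) => F n z1) (fun _ => G z1)
          (hyperfilter ℕ) (ball z2 ε) := by
        apply TendstoUniformlyOn.tendstoLocallyUniformlyOn
        rw [Metric.tendstoUniformlyOn_iff]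
        intro e he
        filter_upwards [(Metric.tendsto_nhds.1 (hlim z1 h1)) e he] with n hn x _
        rwa [dist_comm]
      exact (hFG.mono hb').sub hc
    · intro h
      refine hnc z2 h2 (G z1) ?_
      filter_upwards [h] with z hz using sub_eq_zero.1 hz
  · intro c hc h0
    have hdF : ∀ i, DifferentiableOn ℂ ((deriv ∘ F) i) U := fun i => (hF i).diff.deriv hUo
    have := hurwitz_local (l := (hyperfilter ℕ : Filter ℕ)) hUo hdF (hG.deriv hUo) hFG' hc h0 ?_
    · obtain ⟨i, z, hz, h0⟩ := this.exists
      exact (hF i).dn z hz h0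
    · intro h
      have h1 := (hG.deriv hUo).analyticOnNhd hUo |>.eqOn_of_preconnected_of_eventuallyEq
        (analyticOnNhd_const (v := (0:ℂ))) hUp hc h
      have := h1 ha
      simp only at this
      rw [this] at hda
      simp at hda
      linarith
  · have h1 := hlim a ha
    simp only [(hF _).zero] at h1
    exact (tendsto_nhds_unique h1 tendsto_const_nhds)
  · intro f hf
    rw [hda]
    exact le_csSup hSb ⟨f, hf, rfl⟩

theorem riemann_map {U : Set ℂ} (hUo : IsOpen U) (hUc : IsSimplyConnected U) (hUp : IsPreconnected U)
    (hU : U ≠ univ) {a : ℂ} (ha : a ∈ U) :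
    ∃ φ χ : ℂ → ℂ, DifferentiableOn ℂ φ U ∧ MapsTo φ U (ball 0 1) ∧
      DifferentiableOn ℂ χ (ball 0 1) ∧ MapsTo χ (ball 0 1) U ∧ (∀ z ∈ U, χ (φ z) = z) ∧
      (∀ w ∈ ball (0:ℂ) 1, φ (χ w) = w) ∧ φ a = 0 := by
  obtain ⟨φ, hφ, hmax⟩ := RFam.exists_max hUo hUc hUp hU ha
  have hsurj : ∀ w ∈ ball (0:ℂ) 1, w ∈ φ '' U := by
    intro w hw
    by_contra hc
    obtain ⟨F, hF, hlt⟩ := koebe_step hUo hUc ha hφ (by simpa using hw) hc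
    exact absurd (hmax F hF) (not_le.2 hlt)
  have hmaps : MapsTo φ U (ball 0 1) := fun z hz => by simpa using hφ.maps z hz
  choose! χ hχ1 hχ2 using hsurj
  have hχ3 : ∀ z ∈ U, χ (φ z) = z := fun z hz =>
    hφ.inj (hχ1 _ (hmaps hz)) hz (hχ2 _ (hmaps hz))
  refine ⟨φ, χ, hφ.diff, hmaps, ?_, fun w hw => hχ1 w hw, hχ3, hχ2, hφ.zero⟩
  intro w hw
  have hz := hχ1 w hw
  have hz0 := hφ.dn _ hz
  have hstr : HasStrictDerivAt φ (deriv φ (χ w)) (χ w) :=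
    (hφ.diff.analyticAt (hUo.mem_nhds hz)).hasStrictDerivAt
  have hmap := hstr.map_nhds_eq hz0
  have hcont : ContinuousAt χ w := by
    rw [ContinuousAt]
    nth_rewrite 1 [← hχ2 w hw]
    rw [← hmap, tendsto_map'_iff]
    refine Tendsto.congr' ?_ tendsto_id
    filter_upwards [hUo.mem_nhds hz] with z hz
    exact (hχ3 z hz).symm
  exact (HasDerivAt.of_local_left_inverse hcont hstr.hasDerivAt hz0
    (by filter_upwards [isOpen_ball.mem_nhds hw] with y hy using hχ2 y hy)).differentiableAt.differentiableWithinAt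

end PB2sec

section PGsec

/-- A biholomorphic pair between `U` and the unit disk. -/
structure RPair (φ χ : ℂ → ℂ) (U : Set ℂ) : Prop where
  op : IsOpen U
  d : DifferentiableOn ℂ φ U
  m : MapsTo φ U (ball 0 1)
  d' : DifferentiableOn ℂ χ (ball 0 1)
  m' : MapsTo χ (ball 0 1) U
  l : ∀ z ∈ U, χ (φ z) = z
  r : ∀ w ∈ ball (0:ℂ) 1, φ (χ w) = w

theorem IsTopDisk.rpair {U : Set ℂ} (h : IsTopDisk U) (hU : U ≠ univ) {a : ℂ} (ha : a ∈ U) :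
    ∃ φ χ, RPair φ χ U ∧ φ a = 0 := by
  obtain ⟨φ, χ, h1, h2, h3, h4, h5, h6, h7⟩ := riemann_map h.1 h.2.2 h.2.1.isPreconnected hU ha
  exact ⟨φ, χ, ⟨h.1, h1, h2, h3, h4, h5, h6⟩, h7⟩

theorem RPair.isOpen_image {φ χ : ℂ → ℂ} {U : Set ℂ} (P : RPair φ χ U) {S : Set ℂ} (hS : IsOpen S)
    (hS1 : S ⊆ ball 0 1) : IsOpen (χ '' S) := by
  have : χ '' S = U ∩ φ ⁻¹' S := by
    ext z; constructor
    · rintro ⟨w, hw, rfl⟩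
      exact ⟨P.m' (hS1 hw), by rw [mem_preimage, P.r w (hS1 hw)]; exact hw⟩
    · rintro ⟨hz, hw⟩
      exact ⟨φ z, hw, P.l z hz⟩
  rw [this]
  exact P.d.continuousOn.isOpen_inter_preimage P.op hS

theorem RPair.topDisk {φ χ : ℂ → ℂ} {U : Set ℂ} (P : RPair φ χ U) {S : Set ℂ} (hS : IsOpen S)
    (hS1 : S ⊆ ball 0 1) (hst : StarConvex ℝ 0 S) (hne : S.Nonempty) : IsTopDisk (χ '' S) := by
  have hcont : ContinuousOn χ S := P.d'.continuousOn.mono hS1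
  have hcs : ContractibleSpace S := hst.contractibleSpace hne
  refine ⟨P.isOpen_image hS hS1, ?_, ?_⟩
  · refine ⟨hne.image _, ?_⟩
    have : PreconnectedSpace S := inferInstance
    exact (isPreconnected_iff_preconnectedSpace.2 this).image _ hcont
  · let e : S ≃ₜ (χ '' S) :=
      { toFun := fun w => ⟨χ w, w, w.2, rfl⟩
        invFun := fun z => ⟨φ z, by
          obtain ⟨w, hw, h⟩ := z.2
          rw [← h, P.r w (hS1 hw)]; exact hw⟩
        left_inv := fun w => Subtype.ext (P.r w (hS1 w.2))
        right_inv := fun z => Subtype.ext (P.l z (by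
          obtain ⟨w, hw, h⟩ := z.2
          rw [← h]; exact P.m' (hS1 hw)))
        continuous_toFun := by
          refine Continuous.subtype_mk ?_ _
          exact hcont.domRestrict
        continuous_invFun := by
          refine Continuous.subtype_mk ?_ _
          refine (P.d.continuousOn.mono ?_).domRestrict
          rintro _ ⟨w, hw, rfl⟩
          exact P.m' (hS1 hw) }
    have : SimplyConnectedSpace S := inferInstance
    exact e.toHomotopyEquiv.simplyConnectedSpace_iff.1 this

/-- no proper holomorphic map from a disk to the plane -/
theorem no_proper_plane {h : ℂ → ℂ} (hd : DifferentiableOn ℂ h (ball 0 1))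
    (hp : ∀ R : ℝ, IsCompact {w ∈ ball (0:ℂ) 1 | ‖h w‖ ≤ R}) : False := by
  obtain ⟨ρ, hρ0, hρ1, hρ⟩ := exists_radius (hp 1) (fun w hw => hw.1)
  have hlog : Real.log ρ < 0 := Real.log_neg hρ0 hρ1
  have hann : ∀ z ∈ annulus ρ, z ∈ ball (0:ℂ) 1 ∧ ρ < ‖z‖ ∧ 1 < ‖h z‖ := by
    intro z hz
    have hz1 : ρ < ‖z‖ ∧ ‖z‖ < 1 := hz
    have hz2 : z ∈ ball (0:ℂ) 1 := by simpa using hz1.2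
    refine ⟨hz2, hz1.1, ?_⟩
    by_contra hc
    have := hρ (show z ∈ {w ∈ ball (0:ℂ) 1 | ‖h w‖ ≤ 1} from ⟨hz2, not_lt.1 hc⟩)
    rw [mem_ball_zero_iff] at this
    linarith [hz1.1]
  have hloc : ∀ M : ℝ, ∀ z ∈ annulus ρ,
      LocRe (fun z => (-1) * Real.log ‖h z‖ + (-(M / Real.log ρ)) * Real.log ‖z‖) z := by
    intro M z hz
    obtain ⟨h1, h2, h3⟩ := hann z hz
    refine LocRe.add (LocRe.const_mul _ (LocRe.log_norm
      (hd.analyticAt (isOpen_ball.mem_nhds h1)) ?_)) (LocRe.const_mul _ (LocRe.log_norm (g := id) analyticAt_id ?_))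
    · intro h0; rw [h0] at h3; simp at h3; linarith
    · intro h0; rw [id] at h0; rw [h0] at h2; simp at h2; linarith
  have key : ∀ M : ℝ, 0 < M → ∀ z ∈ annulus ρ,
      (-1) * Real.log ‖h z‖ + (-(M / Real.log ρ)) * Real.log ‖z‖ ≤ -M := by
    intro M hM
    refine maxPrinciple (isOpen_annulus ρ) (isBounded_annulus ρ) ?_
      (fun z hz => (hloc M z hz).sMax) ?_
    · intro z hz
      obtain ⟨h1, h2, h3⟩ := hann z hz
      refine ContinuousAt.continuousWithinAt ?_
      have c1 : ContinuousAt h z := (hd.differentiableAt (isOpen_ball.mem_nhds h1)).continuousAt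
      refine ContinuousAt.add (continuousAt_const.mul (c1.norm.log (by positivity)))
        (continuousAt_const.mul (continuousAt_id.norm.log ?_))
      simp; intro h0; rw [h0] at h2; simp at h2; linarith
    · intro b hb ε hε
      have hb' := frontier_annulus hb
      have hb0 : ‖b‖ ≠ 0 := by rcases hb' with h | h <;> rw [h] <;> linarith
      have clog : Tendsto (fun z : ℂ => (-(M / Real.log ρ)) * Real.log ‖z‖) (𝓝[annulus ρ] b)
          (𝓝 ((-(M / Real.log ρ)) * Real.log ‖b‖)) :=
        ((continuousAt_const.mul (continuousAt_id.norm.log hb0)).tendsto).mono_left nhdsWithin_le_nhds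
      rcases hb' with hb' | hb'
      · have e : (-(M / Real.log ρ)) * Real.log ‖b‖ = -M := by rw [hb', neg_mul, div_mul_cancel₀ _ hlog.ne]
        rw [e] at clog
        filter_upwards [clog.eventually (gt_mem_nhds (show -M < -M + ε by linarith)),
          self_mem_nhdsWithin] with z hz1 hz2
        have := Real.log_nonneg (hann z hz2).2.2.le
        linarith
      · have e : (-(M / Real.log ρ)) * Real.log ‖b‖ = 0 := by rw [hb']; simp
        rw [e] at clog
        have hT := hp (Real.exp M)
        have hbT : b ∉ {w ∈ ball (0:ℂ) 1 | ‖h w‖ ≤ Real.exp M} := by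
          intro hbT
          have := hbT.1
          rw [mem_ball_zero_iff] at this
          linarith
        have hT' := hT.isClosed.isOpen_compl.mem_nhds hbT
        filter_upwards [clog.eventually (gt_mem_nhds (show 0 < ε by linarith)),
          self_mem_nhdsWithin, mem_nhdsWithin_of_mem_nhds hT'] with z hz1 hz2 hz3
        have h3 : Real.exp M < ‖h z‖ := by
          by_contra hc
          exact hz3 ⟨(hann z hz2).1, not_lt.1 hc⟩
        have := (Real.lt_log_iff_exp_lt ((Real.exp_pos M).trans h3)).2 h3
        linarith
  -- pick a point
  obtain ⟨t, ht1, ht2⟩ := exists_between hρ1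
  have ht0 : 0 < t := by linarith
  have hz : (t : ℂ) ∈ annulus ρ := by
    show ρ < ‖(t:ℂ)‖ ∧ ‖(t:ℂ)‖ < 1
    rw [Complex.norm_real, Real.norm_of_nonneg ht0.le]; exact ⟨ht1, ht2⟩
  have hq : Real.log t / Real.log ρ < 1 := by
    rw [div_lt_one_of_neg hlog]; exact Real.log_lt_log hρ0 ht1
  set q := 1 - Real.log t / Real.log ρ with hqd
  have hq0 : 0 < q := by linarith
  have L0 := Real.log_nonneg (hann _ hz).2.2.le
  have := key ((Real.log ‖h t‖ + 1) / q) (by positivity) _ hz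
  rw [Complex.norm_real, Real.norm_of_nonneg ht0.le] at this
  have e : ((Real.log ‖h t‖ + 1) / q) * q = Real.log ‖h t‖ + 1 := by field_simp
  have e2 : -((Real.log ‖h t‖ + 1) / q / Real.log ρ) * Real.log t
    = - ((Real.log ‖h t‖ + 1) / q) * (Real.log t / Real.log ρ) := by ring
  rw [e2] at this
  rw [hqd] at this e
  nlinarith

theorem PLSetting.U_ne {g : ℂ → ℂ} {U' U : Set ℂ} {d : ℕ} (H : PLSetting g U' U d) : U ≠ univ := by
  intro hU
  obtain ⟨a, ha⟩ := H.disk'.2.1.nonempty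
  obtain ⟨φ, χ, P, -⟩ := H.disk'.rpair (fun h => H.ne (h.trans hU.symm)) ha
  refine no_proper_plane (h := g ∘ χ) (H.holo.comp P.d' P.m') ?_
  intro R
  have hc := H.proper (closedBall 0 R) (by rw [hU]; exact subset_univ _) (isCompact_closedBall 0 R)
  have : {w ∈ ball (0:ℂ) 1 | ‖(g ∘ χ) w‖ ≤ R} = φ '' (U' ∩ g ⁻¹' closedBall 0 R) := by
    ext w; constructor
    · rintro ⟨hw, h⟩
      exact ⟨χ w, ⟨P.m' hw, by simpa using h⟩, P.r w hw⟩
    · rintro ⟨z, ⟨hz, h⟩, rfl⟩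
      refine ⟨P.m hz, ?_⟩
      simpa [P.l z hz] using h
  rw [this]
  exact hc.image_of_continuousOn (P.d.continuousOn.mono inter_subset_left)

theorem PLSetting.U'_ne {g : ℂ → ℂ} {U' U : Set ℂ} {d : ℕ} (H : PLSetting g U' U d) : U' ≠ univ := by
  intro h
  exact H.U_ne (univ_subset_iff.1 (h ▸ H.subset))

end PGsec

section PG2sec

variable {g : ℂ → ℂ} {U' U : Set ℂ} {d : ℕ}

theorem PLSetting.crit_nonempty (H : PLSetting g U' U d) : (critPts g U').Nonempty := by
  by_contra hemp
  rw [not_nonempty_iff_eq_empty] at hemp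
  have hU'o := H.disk'.1
  have hUo := H.disk.1
  let p : U' → U := fun z => ⟨g z, H.mapsTo z.2⟩
  have hpc : Continuous p := by
    refine Continuous.subtype_mk ?_ _
    exact H.holo.continuousOn.domRestrict
  have hlocg : IsLocalHomeomorphOn g U' := by
    refine IsLocalHomeomorphOn.mk _ _ ?_
    intro z hz
    have hne : deriv g z ≠ 0 := by
      intro h0
      have : z ∈ critPts g U' := ⟨hz, h0⟩
      rw [hemp] at this
      exact this
    have hs : HasStrictDerivAt g (deriv g z) z :=
      (H.holo.analyticAt (hU'o.mem_nhds hz)).hasStrictDerivAt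
    have hs' := hs.hasStrictFDerivAt_equiv hne
    exact ⟨hs'.toOpenPartialHomeomorph g, hs'.mem_toOpenPartialHomeomorph_source, fun _ _ => rfl⟩
  have hloc : IsLocalHomeomorph p := by
    refine IsLocalHomeomorph.of_comp (g := ((↑) : U → ℂ)) ?_ hUo.isOpenEmbedding_subtypeVal.isLocalHomeomorph hpc
    have : ((↑) : U → ℂ) ∘ p = g ∘ ((↑) : U' → ℂ) := rfl
    rw [this, isLocalHomeomorph_iff_isLocalHomeomorphOn_univ]
    exact hlocg.comp (hU'o.isOpenEmbedding_subtypeVal.isLocalHomeomorph.isLocalHomeomorphOn)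
      (fun z _ => z.2)
  have : LocallyCompactSpace U := hUo.locallyCompactSpace
  have hprop : IsProperMap p := by
    rw [isProperMap_iff_isCompact_preimage]
    refine ⟨hpc, fun C hC => ?_⟩
    rw [Subtype.isCompact_iff] at hC ⊢
    have h1 := H.proper _ (by rintro _ ⟨z, _, rfl⟩; exact z.2) hC
    convert h1 using 1
    ext z; constructor
    · rintro ⟨w, hw, rfl⟩
      exact ⟨w.2, p w, hw, rfl⟩
    · rintro ⟨hz, ⟨w, hw, he⟩⟩
      refine ⟨⟨z, hz⟩, ?_, rfl⟩
      have : p ⟨z, hz⟩ = w := Subtype.ext he.symm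
      rw [mem_preimage, this]; exact hw
  have hcard : ∀ w ∈ U, (U' ∩ g ⁻¹' {w}).ncard = d := fun w hw =>
    H.deg.2 w hw (by rw [hemp]; simp)
  have hd := H.two_le_d
  have hfin : ∀ x : U, (p ⁻¹' {x}).Finite := by
    intro x
    have h1 : (U' ∩ g ⁻¹' {(x:ℂ)}).Finite := finite_of_ncard_pos (by rw [hcard x x.2]; omega)
    refine Finite.of_finite_image (f := ((↑) : U' → ℂ)) (h1.subset ?_) Subtype.val_injective.injOn
    rintro _ ⟨z, hz, rfl⟩
    exact ⟨z.2, congrArg Subtype.val hz⟩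
  have hcov : IsCoveringMap p := by
    rw [isCoveringMap_iff_isCoveringMapOn_univ]
    exact hprop.isClosedMap.isCoveringMapOn_of_isLocalHomeomorphOn (fun x _ => hfin x)
      (hloc.isLocalHomeomorphOn)
  have := hUo.locallyPathConnectedSpace
  have := hU'o.locallyPathConnectedSpace
  have := H.disk.2.2
  have := H.disk'.2.2
  obtain ⟨e, he⟩ := H.disk'.2.1.nonempty
  obtain ⟨F, ⟨hF1, hF2⟩, -⟩ := hcov.existsUnique_continuousMap_lifts (ContinuousMap.id U) (p ⟨e, he⟩) ⟨e, he⟩ rfl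
  obtain ⟨L, -, hL⟩ := hcov.existsUnique_continuousMap_lifts (⟨p, hpc⟩ : C(U', U)) ⟨e, he⟩ ⟨e, he⟩ rfl
  have e1 := hL (ContinuousMap.id U') ⟨rfl, rfl⟩
  have e2 := hL (F.comp ⟨p, hpc⟩) ⟨hF1, by
    ext z
    exact congrArg Subtype.val (congrFun hF2 (p z))⟩
  have hid : ∀ z, F (p z) = z := fun z => by
    have := e2.trans e1.symm
    exact congrArg (fun f : C(U', U') => f z) this
  have h2 := hcard _ (H.mapsTo he)
  have : (U' ∩ g ⁻¹' {g e}).ncard ≤ 1 := by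
    rw [ncard_le_one (finite_of_ncard_pos (by omega))]
    rintro a ⟨ha, ha'⟩ b ⟨hb, hb'⟩
    have hab : p ⟨a, ha⟩ = p ⟨b, hb⟩ := Subtype.ext (ha'.trans hb'.symm)
    have := hid ⟨a, ha⟩
    rw [hab, hid] at this
    exact (congrArg Subtype.val this).symm
  omega

/-- A proper self map of the disk with a single zero at the origin is `c z ^ n`. -/
theorem proper_disk_pow {B : ℂ → ℂ} (hB : DifferentiableOn ℂ B (ball 0 1))
    (hm : MapsTo B (ball 0 1) (ball 0 1))
    (hp : ∀ r < 1, IsCompact {w ∈ ball (0:ℂ) 1 | ‖B w‖ ≤ r})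
    (h0 : ∀ w ∈ ball (0:ℂ) 1, B w = 0 ↔ w = 0) :
    ∀ w ∈ ball (0:ℂ) 1, w ≠ 0 → deriv B w ≠ 0 := by
  have hz0 : (0:ℂ) ∈ ball (0:ℂ) 1 := by simp
  have hBa : AnalyticAt ℂ B 0 := hB.analyticAt (isOpen_ball.mem_nhds hz0)
  have hnz : ¬ ∀ᶠ z in 𝓝 (0:ℂ), B z = 0 := by
    intro h
    have h1 : ∀ᶠ z in 𝓝 (0:ℂ), z = 0 := by
      filter_upwards [h, isOpen_ball.mem_nhds hz0] with z hz hz1 using (h0 z hz1).1 hz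
    have h2 : ∀ᶠ z in 𝓝[≠] (0:ℂ), False := by
      filter_upwards [nhdsWithin_le_nhds h1, self_mem_nhdsWithin] with z hz hz'
      exact hz' hz
    simp only [eventually_false_iff_eq_bot] at h2
    exact (NeBot.ne inferInstance) h2
  obtain ⟨n, k0, hk0, hk0z, hk⟩ := hBa.exists_eventuallyEq_pow_smul_nonzero_iff.2 hnz
  let k : ℂ → ℂ := fun w => if w = 0 then k0 0 else B w / w ^ n
  have hkB : ∀ w ∈ ball (0:ℂ) 1, B w = w ^ n * k w := by
    intro w hw
    by_cases hw0 : w = 0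
    · subst hw0
      have := hk.self_of_nhds
      simpa [k] using this
    · simp only [k, hw0, if_false]
      field_simp
  have hkz : ∀ w ∈ ball (0:ℂ) 1, k w ≠ 0 := by
    intro w hw
    by_cases hw0 : w = 0
    · simpa [k, hw0] using hk0z
    · intro h
      have := hkB w hw
      rw [h, mul_zero] at this
      exact hw0 ((h0 w hw).1 this)
  have hka : ∀ w ∈ ball (0:ℂ) 1, AnalyticAt ℂ k w := by
    intro w hw
    by_cases hw0 : w = 0
    · subst hw0
      refine hk0.congr ?_
      filter_upwards [hk] with z hz
      by_cases hz0 : z = 0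
      · simp [k, hz0]
      · simp only [k, hz0, if_false]
        rw [hz]; simp; field_simp
    · have : AnalyticAt ℂ (fun w => B w / w ^ n) w :=
        (hB.analyticAt (isOpen_ball.mem_nhds hw)).div (analyticAt_id.pow n) (pow_ne_zero _ hw0)
      refine this.congr ?_
      filter_upwards [isOpen_ne.mem_nhds hw0] with z hz
      have hz' : z ≠ 0 := hz
      simp [k, hz']
  have hbdry : ∀ b ∈ frontier (ball (0:ℂ) 1),
      Tendsto (fun w => Real.log ‖k w‖) (𝓝[ball 0 1] b) (𝓝 0) := by
    intro b hb
    rw [frontier_ball _ one_ne_zero, mem_sphere_zero_iff_norm] at hb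
    have hb0 : b ≠ 0 := by rintro rfl; simp at hb
    have t1 : Tendsto (fun w => ‖B w‖) (𝓝[ball 0 1] b) (𝓝 1) := by
      rw [Metric.tendsto_nhds]
      intro ε hε
      have hT := hp (1 - ε) (by linarith)
      have hbT : b ∉ {w ∈ ball (0:ℂ) 1 | ‖B w‖ ≤ 1 - ε} := by
        intro hbT
        have := hbT.1
        rw [mem_ball_zero_iff] at this
        linarith
      filter_upwards [self_mem_nhdsWithin,
        mem_nhdsWithin_of_mem_nhds (hT.isClosed.isOpen_compl.mem_nhds hbT)] with w hw hwT
      have h1 := hm hw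
      rw [mem_ball_zero_iff] at h1
      have h2 : 1 - ε < ‖B w‖ := by
        by_contra hc
        exact hwT ⟨hw, not_lt.1 hc⟩
      rw [Real.dist_eq, abs_lt]; constructor <;> linarith
    have t2 : Tendsto (fun w : ℂ => ‖w‖ ^ n) (𝓝[ball 0 1] b) (𝓝 1) := by
      have : Tendsto (fun w : ℂ => ‖w‖ ^ n) (𝓝 b) (𝓝 (‖b‖ ^ n)) :=
        (continuous_norm.pow n).continuousAt
      rw [hb, one_pow] at this
      exact this.mono_left nhdsWithin_le_nhds
    have t3 := (t1.div t2 one_ne_zero).log (by norm_num)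
    rw [div_one, Real.log_one] at t3
    refine t3.congr' ?_
    filter_upwards [mem_nhdsWithin_of_mem_nhds (isOpen_ne.mem_nhds hb0)] with w hw
    have hw' : w ≠ 0 := hw
    simp [k, hw']
  have hcont : ContinuousOn (fun w => Real.log ‖k w‖) (ball 0 1) := fun w hw =>
    ((hka w hw).continuousAt.norm.log (by simpa using hkz w hw)).continuousWithinAt
  have hloc : ∀ w ∈ ball (0:ℂ) 1, LocRe (fun w => Real.log ‖k w‖) w := fun w hw =>
    LocRe.log_norm (hka w hw) (hkz w hw)
  have u1 : ∀ w ∈ ball (0:ℂ) 1, Real.log ‖k w‖ ≤ 0 := by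
    refine maxPrinciple isOpen_ball isBounded_ball hcont (fun w hw => (hloc w hw).sMax) ?_
    intro b hb ε hε
    filter_upwards [(hbdry b hb).eventually (gt_mem_nhds hε)] with w hw
    linarith
  have u2 : ∀ w ∈ ball (0:ℂ) 1, (-1) * Real.log ‖k w‖ ≤ 0 := by
    refine maxPrinciple isOpen_ball isBounded_ball (continuousOn_const.mul hcont)
      (fun w hw => ((hloc w hw).const_mul (-1)).sMax) ?_
    intro b hb ε hε
    filter_upwards [(hbdry b hb).eventually (lt_mem_nhds (show -ε < 0 by linarith))] with w hw
    linarith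
  have hnorm : ∀ w ∈ ball (0:ℂ) 1, ‖k w‖ = 1 := by
    intro w hw
    have h1 : Real.log ‖k w‖ = 0 := by linarith [u1 w hw, u2 w hw]
    exact Real.eq_one_of_pos_of_log_eq_zero (norm_pos_iff.2 (hkz w hw)) h1
  have hconst : EqOn k (const ℂ (k 0)) (ball 0 1) := by
    refine Complex.eqOn_of_isPreconnected_of_isMaxOn_norm (convex_ball 0 1).isPreconnected
      isOpen_ball (fun w hw => (hka w hw).differentiableAt.differentiableWithinAt) hz0 ?_
    intro w hw
    simp [hnorm w hw, hnorm 0 hz0]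
  have hn : n ≠ 0 := by
    rintro rfl
    have := hkB 0 hz0
    rw [(h0 0 hz0).2 rfl, pow_zero, one_mul] at this
    exact hkz 0 hz0 this.symm
  intro w hw hw0
  have hev : B =ᶠ[𝓝 w] fun w => w ^ n * k 0 := by
    filter_upwards [isOpen_ball.mem_nhds hw] with z hz
    rw [hkB z hz, hconst hz, const_apply]
  rw [hev.deriv_eq, ((hasDerivAt_pow n w).mul_const (k 0)).deriv]
  exact mul_ne_zero (mul_ne_zero (by exact_mod_cast hn) (pow_ne_zero _ hw0)) (hkz 0 hz0)

/-- A fibre reduced to one point forces that point to be the only critical point. -/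
theorem PLSetting.crit_unique (H : PLSetting g U' U d) {x x1 : ℂ} (hx : x ∈ U)
    (hfib : U' ∩ g ⁻¹' {x} = {x1}) : ∀ c ∈ critPts g U', c = x1 := by
  have hx1 : x1 ∈ U' ∩ g ⁻¹' {x} := by rw [hfib]; rfl
  obtain ⟨φ, χ, P, hφ⟩ := H.disk.rpair H.U_ne hx
  obtain ⟨φ', χ', P', hφ'⟩ := H.disk'.rpair H.U'_ne hx1.1
  have hz0 : (0:ℂ) ∈ ball (0:ℂ) 1 := by simp
  have hB : DifferentiableOn ℂ (φ ∘ g ∘ χ') (ball 0 1) :=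
    P.d.comp (H.holo.comp P'.d' P'.m') (H.mapsTo.comp P'.m')
  have key := proper_disk_pow (B := φ ∘ g ∘ χ') hB (P.m.comp (H.mapsTo.comp P'.m')) ?_ ?_
  · rintro c ⟨hc, hc0⟩
    by_contra hne
    have hw := P'.m hc
    have hlc := P'.l c hc
    refine key (φ' c) hw ?_ ?_
    · intro h
      apply hne
      rw [← hlc, h, ← hφ', P'.l x1 hx1.1]
    · have d1 : HasDerivAt χ' (deriv χ' (φ' c)) (φ' c) :=
        (P'.d'.differentiableAt (isOpen_ball.mem_nhds hw)).hasDerivAt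
      have d2 : HasDerivAt g 0 (χ' (φ' c)) := by
        rw [hlc, ← hc0]
        exact (H.holo.differentiableAt (H.disk'.1.mem_nhds hc)).hasDerivAt
      have d3 : HasDerivAt φ (deriv φ (g (χ' (φ' c)))) (g (χ' (φ' c))) :=
        (P.d.differentiableAt (H.disk.1.mem_nhds (H.mapsTo (P'.m' hw)))).hasDerivAt
      have := d3.comp (φ' c) (d2.comp (φ' c) d1)
      rw [this.deriv]; simp
  · intro r hr
    have hc := H.proper (χ '' closedBall 0 r) (by
      rintro _ ⟨w, hw, rfl⟩
      exact P.m' (closedBall_subset_ball hr hw)) ((isCompact_closedBall 0 r).image_of_continuousOn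
        (P.d'.continuousOn.mono (closedBall_subset_ball hr)))
    have : {w ∈ ball (0:ℂ) 1 | ‖(φ ∘ g ∘ χ') w‖ ≤ r} = φ' '' (U' ∩ g ⁻¹' (χ '' closedBall 0 r)) := by
      ext w; constructor
      · rintro ⟨hw, h⟩
        refine ⟨χ' w, ⟨P'.m' hw, φ (g (χ' w)), by simpa using h, P.l _ (H.mapsTo (P'.m' hw))⟩, P'.r w hw⟩
      · rintro ⟨z, ⟨hz, v, hv, he⟩, rfl⟩
        refine ⟨P'.m hz, ?_⟩
        simp only [comp_apply, P'.l z hz]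
        rw [← he, P.r v (closedBall_subset_ball hr hv)]
        simpa using hv
    rw [this]
    exact hc.image_of_continuousOn (P'.d.continuousOn.mono inter_subset_left)
  · intro w hw
    simp only [comp_apply]
    constructor
    · intro h
      have h1 : g (χ' w) = x := by
        rw [← P.l _ (H.mapsTo (P'.m' hw)), h, ← hφ, P.l x hx]
      have h2 : χ' w ∈ U' ∩ g ⁻¹' {x} := ⟨P'.m' hw, h1⟩
      rw [hfib, mem_singleton_iff] at h2
      rw [← P'.r w hw, h2, hφ']
    · rintro rfl
      have : χ' 0 = x1 := by rw [← hφ', P'.l x1 hx1.1]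
      have h2 : g x1 = x := hx1.2
      rw [this, h2, hφ]

theorem PLSetting.two_preimages (H : PLSetting g U' U d) {K : Set ℂ} (hKU : K ⊆ U)
    (hKinv : U' ∩ g ⁻¹' K = K) {x : ℂ} (hx : x ∈ K) :
    ∃ y ∈ K, ∃ y' ∈ K, y ≠ y' ∧ g (g y) = x ∧ g (g y') = x := by
  have hpre : ∀ x ∈ K, ∃ y ∈ K, g y = x := by
    intro x hx
    obtain ⟨y, hy, hy'⟩ := H.deg.1 x (hKU hx)
    refine ⟨y, ?_, hy'⟩
    rw [← hKinv]
    have : g y = x := hy'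
    exact ⟨hy, by rw [mem_preimage, this]; exact hx⟩
  have hfibK : ∀ x ∈ K, ∀ y ∈ U' ∩ g ⁻¹' {x}, y ∈ K := by
    rintro x hx y ⟨hy, hy'⟩
    rw [← hKinv]
    have : g y = x := hy'
    exact ⟨hy, by rw [mem_preimage, this]; exact hx⟩
  have hKU' : K ⊆ U' := fun z hz => by rw [← hKinv] at hz; exact hz.1
  have hd := H.two_le_d
  have hcrit : ∀ x ∈ K, ∀ y, U' ∩ g ⁻¹' {x} = {y} → y ∈ critPts g U' := by
    intro x hx y hfib
    by_contra hc
    have := H.deg.2 x (hKU hx) (by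
      rintro ⟨c, hc1, hc2⟩
      have : c ∈ U' ∩ g ⁻¹' {x} := ⟨hc1.1, hc2⟩
      rw [hfib, mem_singleton_iff] at this
      exact hc (this ▸ hc1))
    rw [hfib, ncard_singleton] at this
    omega
  by_contra hcon
  push Not at hcon
  obtain ⟨x1, hx1, hg1⟩ := hpre x hx
  obtain ⟨x2, hx2, hg2⟩ := hpre x1 hx1
  have f1 : U' ∩ g ⁻¹' {x} = {x1} := by
    refine Subset.antisymm ?_ (by rintro _ rfl; exact ⟨hKU' hx1, hg1⟩)
    intro y hy
    obtain ⟨y2, hy2, hgy⟩ := hpre y (hfibK x hx y hy)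
    by_contra hne
    refine hcon x2 hx2 y2 hy2 ?_ (by rw [hg2, hg1]) (by rw [hgy]; exact hy.2)
    rintro rfl
    exact hne (hgy.symm.trans hg2)
  have f2 : U' ∩ g ⁻¹' {x1} = {x2} := by
    refine Subset.antisymm ?_ (by rintro _ rfl; exact ⟨hKU' hx2, hg2⟩)
    intro y hy
    by_contra hne
    have hy2 : g y = x1 := hy.2
    exact hcon x2 hx2 y (hfibK x1 hx1 y hy) (fun h => hne h.symm) (by rw [hg2, hg1])
      (by rw [hy2, hg1])
  have hu := H.crit_unique (hKU hx) f1
  have h21 : x2 = x1 := hu x2 (hcrit x1 hx1 x2 f2)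
  have hxx : x1 = x := by rw [← hg1]; nth_rewrite 1 [← hg2]; rw [h21]
  subst hxx
  have hC : critPts g U' = {x1} := by
    refine Subset.antisymm (fun c hc => hu c hc) ?_
    rintro _ rfl
    exact hcrit _ hx _ f1
  refine H.postCrit_singleton x1 ?_ f1
  rw [postCrit, hC]
  have : (⋃ n : ℕ, g^[n] '' {x1}) = {x1} := by
    ext z
    simp only [mem_iUnion, image_singleton, mem_singleton_iff]
    constructor
    · rintro ⟨n, rfl⟩
      exact iterate_fixed hg1 n
    · rintro rfl; exact ⟨0, rfl⟩
  rw [this, closure_singleton]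

end PG2sec

section PG3sec

theorem collar_preconnected (ρ : ℝ) :
    IsPreconnected {z : ℂ | ρ ≤ ‖z‖ ∧ ‖z‖ < 1 ∧ 0 < ρ} := by
  by_cases hρ : 0 < ρ
  · have : {z : ℂ | ρ ≤ ‖z‖ ∧ ‖z‖ < 1 ∧ 0 < ρ} =
        (fun p : ℝ × ℝ => (p.1 : ℂ) * Complex.exp (p.2 * Complex.I)) '' (Ico ρ 1 ×ˢ univ) := by
      ext z; constructor
      · rintro ⟨h1, h2, -⟩
        exact ⟨(‖z‖, z.arg), ⟨⟨h1, h2⟩, mem_univ _⟩, Complex.norm_mul_exp_arg_mul_I z⟩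
      · rintro ⟨⟨r, t⟩, ⟨⟨h1, h2⟩, -⟩, rfl⟩
        have : ‖(r : ℂ) * Complex.exp (t * Complex.I)‖ = r := by
          rw [norm_mul, Complex.norm_exp_ofReal_mul_I, mul_one, Complex.norm_real,
            Real.norm_of_nonneg (by simp only at h1; linarith)]
        show ρ ≤ ‖(r : ℂ) * Complex.exp (t * Complex.I)‖ ∧ ‖(r : ℂ) * Complex.exp (t * Complex.I)‖ < 1 ∧ 0 < ρ
        rw [this]
        exact ⟨h1, h2, hρ⟩
    rw [this]
    refine (isPreconnected_Ico.prod isPreconnected_univ).image _ (Continuous.continuousOn ?_)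
    fun_prop
  · have : {z : ℂ | ρ ≤ ‖z‖ ∧ ‖z‖ < 1 ∧ 0 < ρ} = ∅ := by
      ext z; simp [hρ]
    rw [this]; exact isPreconnected_empty

theorem RPair.conn {φ χ : ℂ → ℂ} {U K Kt : Set ℂ} (P : RPair φ χ U) (hKt : IsCompact Kt)
    (hK1 : Kt ⊆ ball 0 1) (hK : K = χ '' Kt) (hfull : IsConnected Kᶜ) :
    IsPreconnected (ball (0:ℂ) 1 \ Kt) := by
  obtain ⟨ρ, hρ0, hρ1, hρ⟩ := exists_radius hKt hK1
  have hKc : IsCompact K := by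
    rw [hK]; exact hKt.image_of_continuousOn (P.d'.continuousOn.mono hK1)
  have hΩ : IsOpen (ball (0:ℂ) 1 \ Kt) := isOpen_ball.sdiff hKt.isClosed
  set A : Set ℂ := {z : ℂ | ρ ≤ ‖z‖ ∧ ‖z‖ < 1 ∧ 0 < ρ} with hA
  have hAΩ : A ⊆ ball (0:ℂ) 1 \ Kt := by
    rintro z ⟨h1, h2, -⟩
    refine ⟨by simpa using h2, fun h => ?_⟩
    have := hρ h
    rw [mem_ball_zero_iff] at this
    linarith
  have key : ∀ u v : Set ℂ, IsOpen u → IsOpen v → ball (0:ℂ) 1 \ Kt ⊆ u ∪ v →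
      (ball (0:ℂ) 1 \ Kt) ∩ (u ∩ v) = ∅ → A ⊆ u → ball (0:ℂ) 1 \ Kt ⊆ u := by
    intro u v hu hv huv hdis hAu
    by_contra hcon
    obtain ⟨p, hpΩ, hpu⟩ := not_subset.1 hcon
    have hpv : p ∈ v := (huv hpΩ).resolve_left hpu
    set T := (ball (0:ℂ) 1 \ Kt) ∩ v with hT
    have hTo : IsOpen T := hΩ.inter hv
    have hTρ : T ⊆ closedBall 0 ρ := by
      intro z hz
      by_contra hc
      rw [mem_closedBall_zero_iff, not_le] at hc
      have h1 := hz.1.1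
      rw [mem_ball_zero_iff] at h1
      have : z ∈ (ball (0:ℂ) 1 \ Kt) ∩ (u ∩ v) := ⟨hz.1, hAu ⟨hc.le, h1, hρ0⟩, hz.2⟩
      rw [hdis] at this; exact this
    have hTc : closure T ⊆ closedBall 0 ρ := closure_minimal hTρ isClosed_closedBall
    have hTc1 : closure T ⊆ ball 0 1 := hTc.trans (closedBall_subset_ball hρ1)
    have hTcomp : IsCompact (closure T) := (isCompact_closedBall 0 ρ).of_isClosed_subset isClosed_closure hTc
    have hIc : IsCompact (χ '' closure T) := hTcomp.image_of_continuousOn (P.d'.continuousOn.mono hTc1)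
    have hW : IsOpen (χ '' T) := P.isOpen_image hTo (fun z hz => hz.1.1)
    have hnotK : ∀ z ∈ ball (0:ℂ) 1 \ Kt, χ z ∈ Kᶜ := by
      intro z hz h
      rw [hK] at h
      obtain ⟨w, hw, he⟩ := h
      have : w = z := by rw [← P.r w (hK1 hw), he, P.r z hz.1]
      exact hz.2 (this ▸ hw)
    have hcov : Kᶜ ⊆ χ '' T ∪ (χ '' closure T)ᶜ := by
      intro z hz
      by_cases hzc : z ∈ χ '' closure T
      · left
        obtain ⟨w, hw, rfl⟩ := hzc
        have hwΩ : w ∈ ball (0:ℂ) 1 \ Kt := ⟨hTc1 hw, fun h => hz (by rw [hK]; exact ⟨w, h, rfl⟩)⟩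
        refine ⟨w, ⟨hwΩ, ?_⟩, rfl⟩
        rcases huv hwΩ with h | h
        · exfalso
          obtain ⟨q, ⟨hq1, hq2⟩, hq3⟩ := mem_closure_iff.1 hw _ (hΩ.inter hu) ⟨hwΩ, h⟩
          have : q ∈ (ball (0:ℂ) 1 \ Kt) ∩ (u ∩ v) := ⟨hq1, hq2, hq3.2⟩
          rw [hdis] at this; exact this
        · exact h
      · exact Or.inr hzc
    have hsub : Kᶜ ⊆ χ '' T := by
      refine hfull.isPreconnected.subset_left_of_subset_union hW hIc.isClosed.isOpen_compl ?_ hcov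
        ⟨χ p, hnotK p hpΩ, p, ⟨hpΩ, hpv⟩, rfl⟩
      rw [disjoint_left]
      rintro z hz hz'
      exact hz' (image_mono subset_closure hz)
    have huniv : (univ : Set ℂ) ⊆ K ∪ χ '' closure T := by
      intro z _
      by_cases hz : z ∈ K
      · exact Or.inl hz
      · exact Or.inr (image_mono subset_closure (hsub hz))
    have : IsCompact (univ : Set ℂ) := (hKc.union hIc).of_isClosed_subset isClosed_univ huniv
    exact noncompact_univ ℂ this
  rw [isPreconnected_iff_subset_of_disjoint]
  intro u v hu hv huv hdis
  have hAp : IsPreconnected A := collar_preconnected ρ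
  rw [isPreconnected_iff_subset_of_disjoint] at hAp
  rcases hAp u v hu hv (hAΩ.trans huv) (subset_empty_iff.1 (hdis ▸ inter_subset_inter_left _ hAΩ)) with h | h
  · exact Or.inl (key u v hu hv huv hdis h)
  · exact Or.inr (key v u hv hu (by rwa [union_comm]) (by rwa [inter_comm v u]) h)

theorem PLSetting.g_open {g : ℂ → ℂ} {U' U : Set ℂ} {d : ℕ} (H : PLSetting g U' U d) {z : ℂ}
    (hz : z ∈ U') : 𝓝 (g z) ≤ map g (𝓝 z) := by
  refine ((H.holo.analyticAt (H.disk'.1.mem_nhds hz)).eventually_constant_or_nhds_le_map_nhds).resolve_left ?_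
  intro hc
  have han := H.holo.analyticOnNhd H.disk'.1
  have h1 := han.eqOn_of_preconnected_of_eventuallyEq (analyticOnNhd_const (v := g z))
    H.disk'.2.1.isPreconnected hz hc
  have hsub : U ⊆ {g z} := by
    intro w hw
    obtain ⟨y, hy, hy'⟩ := H.deg.1 w hw
    have : g y = w := hy'
    rw [mem_singleton_iff, ← this]
    exact h1 hy
  have hne : (interior ({g z} : Set ℂ)).Nonempty :=
    H.disk.2.1.nonempty.mono (interior_maximal hsub H.disk.1)
  rw [interior_singleton] at hne
  exact not_nonempty_empty hne

theorem polyLike_aux {g : ℂ → ℂ} {U' U : Set ℂ} {d : ℕ}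
    (H : PLSetting g U' U d) {K : Set ℂ}
    (hKU : K ⊆ U) (hKcomp : IsCompact K) (hKfull : IsConnected Kᶜ)
    (hKinv : U' ∩ g ⁻¹' K = K) (hPK : postCrit g U' ⊆ K) :
    ∃ V' V : Set ℂ, V' ⊆ U ∧ V ⊆ U ∧ V' = U' ∩ g ⁻¹' V ∧
      IsPolyLike g V' V d ∧ K = filledJulia g V' := by
  have hKU' : K ⊆ U' := fun z hz => by rw [← hKinv] at hz; exact hz.1
  have hgK : ∀ z ∈ K, g z ∈ K := fun z hz => by rw [← hKinv] at hz; exact hz.2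
  have hKne : K.Nonempty := by
    obtain ⟨c, hc⟩ := H.crit_nonempty
    exact ⟨c, hPK (subset_closure (mem_iUnion.2 ⟨0, c, hc, rfl⟩))⟩
  obtain ⟨a, haK⟩ := hKne
  obtain ⟨φ, χ, P, -⟩ := H.disk.rpair H.U_ne (hKU haK)
  obtain ⟨φ', χ', P', -⟩ := H.disk'.rpair H.U'_ne (hKU' haK)
  -- transferred objects
  let gt : ℂ → ℂ := φ ∘ g ∘ χ
  let Ut : Set ℂ := ball 0 1 ∩ χ ⁻¹' U'
  let Kt : Set ℂ := φ '' K
  have hUto : IsOpen Ut := P.d'.continuousOn.isOpen_inter_preimage isOpen_ball H.disk'.1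
  have hKtU : Kt ⊆ Ut := by
    rintro _ ⟨z, hz, rfl⟩
    exact ⟨P.m (hKU hz), by rw [mem_preimage, P.l z (hKU hz)]; exact hKU' hz⟩
  have hKtc : IsCompact Kt := hKcomp.image_of_continuousOn (P.d.continuousOn.mono hKU)
  have hKt1 : Kt ⊆ ball 0 1 := fun w hw => (hKtU hw).1
  have hKtmem : ∀ w ∈ ball (0:ℂ) 1, (w ∈ Kt ↔ χ w ∈ K) := by
    intro w hw; constructor
    · rintro ⟨z, hz, rfl⟩; rw [P.l z (hKU hz)]; exact hz
    · intro h; exact ⟨χ w, h, P.r w hw⟩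
  have hgtd : DifferentiableOn ℂ gt Ut :=
    P.d.comp (H.holo.comp (P.d'.mono inter_subset_left) (fun w hw => hw.2)) (fun w hw => H.mapsTo hw.2)
  have hgtm : MapsTo gt Ut (ball 0 1) := fun w hw => P.m (H.mapsTo hw.2)
  have hgtinv : Ut ∩ gt ⁻¹' Kt = Kt := by
    ext w; constructor
    · rintro ⟨hw, h⟩
      rw [hKtmem w hw.1, ← hKinv]
      refine ⟨hw.2, ?_⟩
      have := (hKtmem _ (hgtm hw)).1 h
      rwa [show χ (gt w) = g (χ w) from P.l _ (H.mapsTo hw.2)] at this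
    · intro hw
      refine ⟨hKtU hw, ?_⟩
      rw [mem_preimage, hKtmem _ (hgtm (hKtU hw)),
        show χ (gt w) = g (χ w) from P.l _ (H.mapsTo (hKtU hw).2)]
      exact hgK _ ((hKtmem w (hKt1 hw)).1 hw)
  have hgtK : ∀ x ∈ Kt, gt x ∈ Kt := fun x hx => by rw [← hgtinv] at hx; exact hx.2
  have hgta : ∀ x ∈ Ut, AnalyticAt ℂ gt x := fun x hx => hgtd.analyticAt (hUto.mem_nhds hx)
  have hgto : ∀ x ∈ Ut, 𝓝 (gt x) ≤ map gt (𝓝 x) := by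
    intro x hx
    refine (hgta x hx).eventually_constant_or_nhds_le_map_nhds.resolve_left ?_
    intro hc
    -- then `g` is locally constant at `χ x`
    have hx' := hx.2
    have hopen := H.g_open hx'
    have hφc : ContinuousAt φ (χ x) := (P.d.differentiableAt (H.disk.1.mem_nhds (P.m' hx.1))).continuousAt
    have hev : ∀ᶠ z in 𝓝 (χ x), g z = g (χ x) := by
      have h1 : ∀ᶠ z in 𝓝 (χ x), gt (φ z) = gt x := by
        have : Tendsto φ (𝓝 (χ x)) (𝓝 x) := by
          have := hφc.tendsto
          rwa [P.r x hx.1] at this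
        exact this.eventually hc
      filter_upwards [h1, H.disk'.1.mem_nhds hx'] with z hz hz'
      have e1 : gt (φ z) = φ (g z) := by
        show φ (g (χ (φ z))) = _
        rw [P.l z (H.subset hz')]
      rw [e1] at hz
      have := congrArg χ hz
      rwa [P.l _ (H.mapsTo hz'), show χ (gt x) = g (χ x) from P.l _ (H.mapsTo hx')] at this
    have hmem : ({g (χ x)} : Set ℂ) ∈ 𝓝 (g (χ x)) := hopen hev
    have := mem_interior_iff_mem_nhds.2 hmem
    rw [interior_singleton] at this
    exact this
  have hpos : ∀ z ∈ ball (0:ℂ) 1 \ Kt, 0 < perron Kt z := by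
    refine nonpolar_dyn (f := gt ∘ gt) hKtc ⟨_, a, haK, rfl⟩ hKt1 (fun x hx => hgtK _ (hgtK x hx))
      ?_ ?_ ?_ ?_
    · intro x hx
      exact (hgta _ (hKtU (hgtK x hx))).comp (hgta x (hKtU hx))
    · intro x hx
      rw [← map_map]
      exact (hgto _ (hKtU (hgtK x hx))).trans (map_mono (hgto x (hKtU hx)))
    · intro x hx
      have hc := (hgta x (hKtU hx)).continuousAt
      filter_upwards [hUto.mem_nhds (hKtU hx), hc.preimage_mem_nhds (hUto.mem_nhds (hKtU (hgtK x hx)))] with w h1 h2 h3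
      rw [← hgtinv]
      refine ⟨h1, ?_⟩
      rw [mem_preimage, ← hgtinv]
      exact ⟨h2, h3⟩
    · rintro _ ⟨x, hx, rfl⟩
      obtain ⟨y, hy, y', hy', hne, e1, e2⟩ := H.two_preimages hKU hKinv hx
      have hcomp : ∀ y ∈ K, (gt ∘ gt) (φ y) = φ (g (g y)) := by
        intro y hy
        show φ (g (χ (φ (g (χ (φ y)))))) = _
        rw [P.l y (hKU hy), P.l _ (hKU (hgK y hy))]
      refine ⟨φ y, ⟨y, hy, rfl⟩, φ y', ⟨y', hy', rfl⟩, ?_, ?_, ?_⟩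
      · intro h
        apply hne
        rw [← P.l y (hKU hy), h, P.l y' (hKU hy')]
      · rw [hcomp y hy, e1]
      · rw [hcomp y' hy', e2]
  have C : Core gt (φ ∘ χ') (φ' ∘ χ) Ut Kt :=
    { op := hUto
      sub := inter_subset_left
      ne := by
        intro h
        refine H.ne (Subset.antisymm H.subset ?_)
        intro z hz
        have := P.m hz
        rw [← h] at this
        have h2 := this.2
        rwa [mem_preimage, P.l z hz] at h2
      holo := hgtd
      maps := hgtm
      proper := by
        intro Q hQ hQc
        have h1 := H.proper (χ '' Q) (by rintro _ ⟨w, hw, rfl⟩; exact P.m' (hQ hw))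
          (hQc.image_of_continuousOn (P.d'.continuousOn.mono hQ))
        have : Ut ∩ gt ⁻¹' Q = φ '' (U' ∩ g ⁻¹' (χ '' Q)) := by
          ext w; constructor
          · rintro ⟨hw, h⟩
            exact ⟨χ w, ⟨hw.2, gt w, h, P.l _ (H.mapsTo hw.2)⟩, P.r w hw.1⟩
          · rintro ⟨z, ⟨hz, v, hv, he⟩, rfl⟩
            have hl := P.l z (H.subset hz)
            refine ⟨⟨P.m (H.subset hz), by rw [mem_preimage, hl]; exact hz⟩, ?_⟩
            show φ (g (χ (φ z))) ∈ Q
            rw [hl, ← he, P.r v (hQ hv)]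
            exact hv
        rw [this]
        exact h1.image_of_continuousOn (P.d.continuousOn.mono (inter_subset_left.trans H.subset))
      Kc := hKtc
      KU := hKtU
      inv := hgtinv
      conn := by
        refine P.conn hKtc hKt1 ?_ hKfull
        ext z; constructor
        · intro hz; exact ⟨φ z, ⟨z, hz, rfl⟩, P.l z (hKU hz)⟩
        · rintro ⟨_, ⟨w, hw, rfl⟩, rfl⟩
          rw [P.l w (hKU hw)]; exact hw
      pos := hpos
      chi_d := P.d.comp P'.d' (fun w hw => H.subset (P'.m' hw))
      chi_m := by
        intro w hw
        refine ⟨P.m (H.subset (P'.m' hw)), ?_⟩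
        show χ (φ (χ' w)) ∈ U'
        rw [P.l _ (H.subset (P'.m' hw))]
        exact P'.m' hw
      psi_c := P'.d.continuousOn.comp (P.d'.continuousOn.mono inter_subset_left) (fun w hw => hw.2)
      psi_m := fun w hw => P'.m hw.2
      chi_psi := by
        intro z hz
        show φ (χ' (φ' (χ z))) = z
        rw [P'.l _ hz.2, P.r z hz.1]
      psi_chi := by
        intro w hw
        show φ' (χ (φ (χ' w))) = w
        rw [P.l _ (H.subset (P'.m' hw)), P'.r w hw] }
  obtain ⟨V, hVo, hKV, hV1, hVst, hVne, hWst, hWne, hcl, hclc, hclU, hesc⟩ := C.main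
  let V0 : Set ℂ := χ '' V
  have hV0U : V0 ⊆ U := by rintro _ ⟨w, hw, rfl⟩; exact P.m' (hV1 hw)
  have hV0mem : ∀ z ∈ U, (z ∈ V0 ↔ φ z ∈ V) := by
    intro z hz; constructor
    · rintro ⟨w, hw, rfl⟩; rw [P.r w (hV1 hw)]; exact hw
    · intro h; exact ⟨φ z, h, P.l z hz⟩
  let V' : Set ℂ := U' ∩ g ⁻¹' V0
  have hV'mem : ∀ z ∈ U', (z ∈ V' ↔ φ z ∈ Ut ∩ gt ⁻¹' V) := by
    intro z hz
    have hl := P.l z (H.subset hz)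
    have e : gt (φ z) = φ (g z) := by
      show φ (g (χ (φ z))) = _
      rw [hl]
    constructor
    · rintro ⟨-, h⟩
      refine ⟨⟨P.m (H.subset hz), by rw [mem_preimage, hl]; exact hz⟩, ?_⟩
      rw [mem_preimage, e]
      exact (hV0mem _ (H.mapsTo hz)).1 h
    · rintro ⟨-, h⟩
      rw [mem_preimage, e] at h
      exact ⟨hz, (hV0mem _ (H.mapsTo hz)).2 h⟩
  have hV'o : IsOpen V' := by
    have : IsOpen V0 := P.isOpen_image hVo hV1
    exact H.holo.continuousOn.isOpen_inter_preimage H.disk'.1 this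
  have hWeq : χ' '' {w ∈ ball 0 1 | gt ((φ ∘ χ') w) ∈ V} = V' := by
    ext z; constructor
    · rintro ⟨w, ⟨hw, h⟩, rfl⟩
      rw [hV'mem _ (P'.m' hw)]
      exact ⟨C.chi_m hw, h⟩
    · intro hz
      have hz' := (hV'mem z hz.1).1 hz
      refine ⟨φ' z, ⟨P'.m hz.1, ?_⟩, P'.l z hz.1⟩
      show gt (φ (χ' (φ' z))) ∈ V
      rw [P'.l z hz.1]
      exact hz'.2
  have hfibeq : ∀ Q ⊆ V0, V' ∩ g ⁻¹' Q = U' ∩ g ⁻¹' Q := by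
    intro Q hQ
    ext z; constructor
    · rintro ⟨h1, h2⟩; exact ⟨h1.1, h2⟩
    · rintro ⟨h1, h2⟩; exact ⟨⟨h1, hQ h2⟩, h2⟩
  refine ⟨V', V0, inter_subset_left.trans H.subset, hV0U, rfl, ⟨?_, ?_, ?_, ?_, ?_, ?_, ?_, ?_⟩, ?_⟩
  · rw [← hWeq]
    refine P'.topDisk ?_ (fun w hw => hw.1) hWst hWne
    have hc : ContinuousOn (fun w => gt ((φ ∘ χ') w)) (ball 0 1) :=
      hgtd.continuousOn.comp C.chi_d.continuousOn C.chi_m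
    exact hc.isOpen_inter_preimage isOpen_ball hVo
  · exact P.topDisk hVo hV1 hVst hVne
  · have hsub1 : closure (Ut ∩ gt ⁻¹' V) ⊆ ball 0 1 := hcl.trans hV1
    have hcomp : IsCompact (χ '' closure (Ut ∩ gt ⁻¹' V)) :=
      hclc.image_of_continuousOn (P.d'.continuousOn.mono hsub1)
    have h1 : closure V' ⊆ χ '' closure (Ut ∩ gt ⁻¹' V) := by
      refine closure_minimal ?_ hcomp.isClosed
      intro z hz
      exact ⟨φ z, subset_closure ((hV'mem z hz.1).1 hz), P.l z (H.subset hz.1)⟩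
    exact h1.trans (image_mono hcl)
  · exact H.holo.mono inter_subset_left
  · exact fun z hz => hz.2
  · intro Q hQ hQc
    rw [hfibeq Q hQ]
    exact H.proper Q (hQ.trans hV0U) hQc
  · intro w hw
    rw [hfibeq _ (singleton_subset_iff.2 hw)]
    exact H.deg.1 w (hV0U hw)
  · intro w hw hwc
    rw [hfibeq _ (singleton_subset_iff.2 hw)]
    refine H.deg.2 w (hV0U hw) ?_
    rintro ⟨c, hc, rfl⟩
    exact hwc ⟨c, ⟨⟨hc.1, hw⟩, hc.2⟩, rfl⟩
  · ext z; constructor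
    · intro hz n
      have hn : g^[n] z ∈ K := by
        induction n with
        | zero => exact hz
        | succ n ih => rw [iterate_succ_apply']; exact hgK _ ih
      refine ⟨hKU' hn, ?_⟩
      have h2 := hgK _ hn
      exact (hV0mem _ (hKU h2)).2 (hKV ⟨_, h2, rfl⟩)
    · intro hz
      have hit : ∀ n, gt^[n] (φ z) = φ (g^[n] z) := by
        intro n
        induction n with
        | zero => rfl
        | succ n ih =>
          rw [iterate_succ_apply', iterate_succ_apply', ih]
          show φ (g (χ (φ (g^[n] z)))) = _
          rw [P.l _ (H.subset (hz n).1)]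
      have h0 := hz 0
      have hK' := hesc (φ z) (fun n => by
        rw [hit n]
        exact (hV'mem _ (hz n).1).1 (hz n))
      have := (hKtmem _ (P.m (H.subset h0.1))).1 hK'
      rwa [P.l _ (H.subset h0.1)] at this

end PG3sec

/-- **Theorem (polynomial-like restriction).** If `K ⊆ U` is a full compact set which is
completely invariant (`g⁻¹(K) = K`) and contains the postcritical set, then `g : U' → U`
admits a polynomial-like restriction `g : V' → V` of degree `d` with `V' = g⁻¹(V)`,
`closure V' ⊆ V ⊆ U`, and `K` is its filled Julia set. -/
theorem polyLike_restriction {g : ℂ → ℂ} {U' U : Set ℂ} {d : ℕ}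
    (H : PLSetting g U' U d) {K : Set ℂ}
    (hKU : K ⊆ U) (hKcomp : IsCompact K) (hKfull : IsConnected Kᶜ)
    (hKinv : U' ∩ g ⁻¹' K = K) (hPK : postCrit g U' ⊆ K) :
    ∃ V' V : Set ℂ, V' ⊆ U ∧ V ⊆ U ∧ V' = U' ∩ g ⁻¹' V ∧
      IsPolyLike g V' V d ∧ K = filledJulia g V' := by
  exact polyLike_aux H hKU hKcomp hKfull hKinv hPK
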